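/- Let k be a number field and n ∈ ℤ_{≥0}. Then the set k^× − k^{×2^n} of nonzero elements of k that are not 2^n-th powers is diophantine over k. -/

import Mathlib

/-- A subset `A ⊆ k^n` is diophantine over `k` if there exist `m ∈ ℕ` and finitely many
polynomials `f₁, …, f_r ∈ k[x₁, …, x_{n+m}]` such that
`A = {a ∈ k^n : ∃ b ∈ k^m, f_i(a,b) = 0 for all i}`. -/
def IsDiophantine (k : Type*) [Field k] {n : ℕ} (A : Set (Fin n → k)) : Prop :=
  ∃ (m r : ℕ) (f : Fin r → MvPolynomial (Fin (n + m)) k),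
    A = {a : Fin n → k | ∃ b : Fin m → k,
      ∀ i : Fin r, MvPolynomial.eval (Fin.append a b) (f i) = 0}

/-- A subset of `k` is diophantine if the corresponding subset of `k¹` is. -/
def IsDiophantineSet (k : Type*) [Field k] (A : Set k) : Prop :=
  IsDiophantine k {x : Fin 1 → k | x 0 ∈ A}

/-- The sign attached to a prime `p`: it is `-1` exactly when neither `a` nor `b` is a square
modulo `p` (and both are prime to `p`). -/
def inertSign (a b : ℤ) (p : ℕ) : ℤ :=
  if jacobiSym a p = -1 ∧ jacobiSym b p = -1 then -1 else 1

/-- The completely multiplicative function on positive integers extending `inertSign a b`. -/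
def inertChar (a b : ℤ) (n : ℕ) : ℤ :=
  n.factorization.prod fun p e => inertSign a b p ^ e

/-- The extension of `inertChar a b` to nonzero rational numbers. -/
def ratInertChar (a b : ℤ) (r : ℚ) : ℤ :=
  inertChar a b r.num.natAbs * inertChar a b r.den

section InertChar

variable {a b : ℤ}

lemma inertSign_eq_or (a b : ℤ) (p : ℕ) : inertSign a b p = 1 ∨ inertSign a b p = -1 := by
  unfold inertSign; split_ifs <;> simp

lemma inertSign_mul_self (a b : ℤ) (p : ℕ) : inertSign a b p * inertSign a b p = 1 := by
  rcases inertSign_eq_or a b p with h | h <;> simp [h]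

lemma inertSign_pow_of_even (a b : ℤ) (p : ℕ) {e : ℕ} (he : Even e) :
    inertSign a b p ^ e = 1 := by
  obtain ⟨k, rfl⟩ := he
  rw [pow_add, ← mul_pow, inertSign_mul_self, one_pow]

lemma inertChar_mul {m n : ℕ} (hm : m ≠ 0) (hn : n ≠ 0) :
    inertChar a b (m * n) = inertChar a b m * inertChar a b n := by
  unfold inertChar
  rw [Nat.factorization_mul hm hn]
  exact Finsupp.prod_add_index' (fun _ => pow_zero _) (fun _ _ _ => pow_add _ _ _)

@[simp] lemma inertChar_one : inertChar a b 1 = 1 := by simp [inertChar]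

lemma inertChar_prime {p : ℕ} (hp : p.Prime) : inertChar a b p = inertSign a b p := by
  simp [inertChar, hp.factorization]

lemma inertChar_pow {n : ℕ} (hn : n ≠ 0) (e : ℕ) :
    inertChar a b (n ^ e) = inertChar a b n ^ e := by
  induction e with
  | zero => simp
  | succ e ih => rw [pow_succ, inertChar_mul (pow_ne_zero _ hn) hn, ih, pow_succ]

lemma inertChar_eq_or (a b : ℤ) (n : ℕ) : inertChar a b n = 1 ∨ inertChar a b n = -1 := by
  unfold inertChar Finsupp.prod
  refine Finset.prod_induction _ (fun z : ℤ => z = 1 ∨ z = -1) ?_ (Or.inl rfl) ?_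
  · rintro x y (rfl | rfl) (rfl | rfl) <;> simp
  · intro p _
    rcases inertSign_eq_or a b p with h | h <;> simp only [h]
    · simp
    · exact neg_one_pow_eq_or ℤ _

lemma inertChar_mul_self (a b : ℤ) (n : ℕ) : inertChar a b n * inertChar a b n = 1 := by
  rcases inertChar_eq_or a b n with h | h <;> simp [h]

lemma ratInertChar_div {m n : ℤ} (hm : m ≠ 0) (hn : n ≠ 0) :
    ratInertChar a b (m / n : ℚ) = inertChar a b m.natAbs * inertChar a b n.natAbs := by
  set r : ℚ := m / n with hr
  have hr0 : r ≠ 0 := by simp [hr, hm, hn]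
  have h1 : r.num * n = m * r.den := by
    have h2 : (r.num : ℚ) / r.den = m / n := by rw [Rat.num_div_den]
    have hd : (r.den : ℚ) ≠ 0 := by exact_mod_cast r.den_nz
    have hn' : (n : ℚ) ≠ 0 := by exact_mod_cast hn
    rw [div_eq_div_iff hd hn'] at h2
    exact_mod_cast h2
  have h3 : r.num.natAbs * n.natAbs = m.natAbs * r.den := by
    have := congrArg Int.natAbs h1
    simpa [Int.natAbs_mul] using this
  have h4 := congrArg (inertChar a b) h3
  have hnum : r.num.natAbs ≠ 0 := by simpa using hr0
  rw [inertChar_mul hnum (by simpa using hn), inertChar_mul (by simpa using hm) r.den_nz] at h4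
  unfold ratInertChar
  have e1 := inertChar_mul_self a b r.den
  have e2 := inertChar_mul_self a b n.natAbs
  calc _ = (inertChar a b r.num.natAbs * inertChar a b n.natAbs) *
        (inertChar a b r.den * inertChar a b n.natAbs) := by
          linear_combination (-(inertChar a b r.num.natAbs * inertChar a b r.den)) * e2
    _ = _ := by
          rw [h4]
          linear_combination (inertChar a b m.natAbs * inertChar a b n.natAbs) * e1

lemma ratInertChar_mul {r s : ℚ} (hr : r ≠ 0) (hs : s ≠ 0) :
    ratInertChar a b (r * s) = ratInertChar a b r * ratInertChar a b s := by
  have h : r * s = ((r.num * s.num : ℤ) : ℚ) / ((r.den * s.den : ℤ) : ℚ) := by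
    conv_lhs => rw [← Rat.num_div_den r, ← Rat.num_div_den s]
    push_cast
    rw [div_mul_div_comm]
  have hr' : r.num ≠ 0 := by simpa using hr
  have hs' : s.num ≠ 0 := by simpa using hs
  have hrd := r.den_nz
  have hsd := s.den_nz
  rw [h, ratInertChar_div (mul_ne_zero hr' hs') (by exact_mod_cast mul_ne_zero hrd hsd)]
  simp only [Int.natAbs_mul, Int.natAbs_natCast]
  rw [inertChar_mul (by simpa using hr') (by simpa using hs'), inertChar_mul hrd hsd]
  unfold ratInertChar
  ring

lemma ratInertChar_intCast {n : ℤ} (hn : n ≠ 0) : ratInertChar a b n = inertChar a b n.natAbs := by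
  have := ratInertChar_div (a := a) (b := b) hn one_ne_zero
  simpa using this

/-- A prime modulo which `c` is a nonsquare divides `x ^ 2 - c * y ^ 2` to an even power. -/
lemma even_factorization_sq_sub {c : ℤ} {p : ℕ} (hp : p.Prime) (hc : jacobiSym c p = -1) :
    ∀ (m : ℕ) (x y : ℤ), (x ^ 2 - c * y ^ 2).natAbs = m →
      Even (m.factorization p) := by
  have := Fact.mk hp
  rw [← jacobiSym.legendreSym.to_jacobiSym] at hc
  intro m
  induction m using Nat.strong_induction_on with
  | _ m ih =>
    intro x y hm
    rcases eq_or_ne m 0 with rfl | hm0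
    · simp
    by_cases hpm : p ∣ m
    · have hdvd : (p : ℤ) ∣ x ^ 2 - c * y ^ 2 := by
        rw [← Int.natCast_dvd_natCast, ← hm] at hpm
        exact Int.dvd_natAbs.mp hpm
      obtain ⟨⟨x', rfl⟩, ⟨y', rfl⟩⟩ := legendreSym.prime_dvd_of_eq_neg_one hc hdvd
      have e : (p * x') ^ 2 - c * (p * y') ^ 2 = (p : ℤ) ^ 2 * (x' ^ 2 - c * y' ^ 2) := by ring
      rw [e, Int.natAbs_mul, Int.natAbs_pow, Int.natAbs_natCast] at hm
      set m' := (x' ^ 2 - c * y' ^ 2).natAbs with hm'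
      have hm'0 : m' ≠ 0 := by rintro h; apply hm0; rw [← hm, h, mul_zero]
      have hlt : m' < m := by
        rw [← hm]
        have : 1 < p ^ 2 := Nat.one_lt_pow two_ne_zero hp.one_lt
        exact lt_mul_of_one_lt_left (Nat.pos_of_ne_zero hm'0) this
      have := ih m' hlt x' y' hm'.symm
      rw [← hm, Nat.factorization_mul (pow_ne_zero _ hp.ne_zero) hm'0, hp.factorization_pow]
      simpa [Nat.even_add] using this
    · rw [Nat.factorization_eq_zero_of_not_dvd hpm]; simp

lemma inertChar_sq_sub_left (x y : ℤ) : inertChar a b (x ^ 2 - a * y ^ 2).natAbs = 1 := by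
  unfold inertChar Finsupp.prod
  refine Finset.prod_eq_one fun p hp => ?_
  by_cases h : jacobiSym a p = -1
  · exact inertSign_pow_of_even _ _ _
      (even_factorization_sq_sub (Nat.prime_of_mem_primeFactors hp) h _ x y rfl)
  · simp [inertSign, h]

lemma inertChar_sq_sub_right (x y : ℤ) : inertChar a b (x ^ 2 - b * y ^ 2).natAbs = 1 := by
  unfold inertChar Finsupp.prod
  refine Finset.prod_eq_one fun p hp => ?_
  by_cases h : jacobiSym b p = -1
  · exact inertSign_pow_of_even _ _ _
      (even_factorization_sq_sub (Nat.prime_of_mem_primeFactors hp) h _ x y rfl)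
  · simp [inertSign, h]

/-- The conditions on two primes under which the reciprocity obstruction works. -/
structure LinkedPrimes (p q : ℕ) : Prop where
  left_prime : p.Prime
  right_prime : q.Prime
  right_mod : q % 8 = 1
  left_square : jacobiSym p q = 1

/-- The Jacobi symbol of a positive integer modulo `q` is the product of the symbols of its
prime factors. -/
lemma jacobiSym_eq_factorization_prod (q : ℕ) {m : ℕ} (hm : m ≠ 0) :
    jacobiSym m q = m.factorization.prod fun p e => jacobiSym p q ^ e := by
  conv_lhs => rw [← Nat.prod_factorization_pow_eq_self hm]
  unfold Finsupp.prod
  push_cast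
  induction m.factorization.support using Finset.induction_on with
  | empty => simp [jacobiSym.one_left]
  | insert p s hp ih =>
    rw [Finset.prod_insert hp, Finset.prod_insert hp, jacobiSym.mul_left, ih, jacobiSym.pow_left]

namespace LinkedPrimes

variable {p q : ℕ}

lemma inertSign_eq_jacobiSym (h : LinkedPrimes p q) {l : ℕ} (hl : l.Prime) (hlq : l ≠ q)
    (hl1 : jacobiSym (p * q) l ≠ -1) : inertSign p q l = jacobiSym l q := by
  have hlf := Fact.mk hl
  have hqf := Fact.mk h.right_prime
  have hq2 : q ≠ 2 := by have := h.right_mod; rintro rfl; simp at this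
  have hcop : IsCoprime (l : ℤ) q := by
    rw [Nat.isCoprime_iff_coprime]; exact (Nat.coprime_primes hl h.right_prime).2 hlq
  rcases eq_or_ne l p with rfl | hlp
  · rw [h.left_square]
    have : jacobiSym l l ≠ -1 := by
      rw [← jacobiSym.legendreSym.to_jacobiSym, (legendreSym.eq_zero_iff _ _).2 (by simp)]
      simp
    simp [inertSign, this]
  have hrec : jacobiSym l q = jacobiSym q l := by
    rcases eq_or_ne l 2 with rfl | hl2
    · have e1 : jacobiSym (2 : ℕ) q = 1 := by
        rw [← jacobiSym.legendreSym.to_jacobiSym]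
        have := legendreSym.at_two hq2
        push_cast
        rw [this, ZMod.χ₈_nat_eq_if_mod_eight, h.right_mod]
        have := h.right_mod
        have h2 : q % 2 ≠ 0 := by omega
        simp [h2]
      have e2 : jacobiSym q 2 = 1 := by
        have h2 : (q : ℤ) % 2 = (1 : ℤ) % 2 := by have := h.right_mod; omega
        rw [jacobiSym.mod_left' (b := 2) h2, jacobiSym.one_left]
      rw [e1, e2]
    · rw [← jacobiSym.legendreSym.to_jacobiSym, ← jacobiSym.legendreSym.to_jacobiSym]
      have hq4 : q % 4 = 1 := by have := h.right_mod; omega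
      exact (legendreSym.quadratic_reciprocity_one_mod_four hq4 hl2).symm
  rw [hrec]
  rw [jacobiSym.mul_left] at hl1
  have hp1 : jacobiSym p l = 1 ∨ jacobiSym p l = -1 := by
    apply jacobiSym.eq_one_or_neg_one
    simpa using (Nat.coprime_primes h.left_prime hl).2 (Ne.symm hlp)
  have hq1 : jacobiSym q l = 1 ∨ jacobiSym q l = -1 := by
    apply jacobiSym.eq_one_or_neg_one
    simpa using (Nat.coprime_primes h.right_prime hl).2 (Ne.symm hlq)
  rcases hp1 with e1 | e1 <;> rcases hq1 with e2 | e2 <;> simp_all [inertSign]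

lemma inertChar_eq_jacobiSym (h : LinkedPrimes p q) {m : ℕ} (hm : ¬ q ∣ m)
    (hodd : ∀ l : ℕ, l.Prime → l ≠ q → Odd (m.factorization l) → jacobiSym (p * q) l ≠ -1) :
    inertChar p q m = jacobiSym m q := by
  have hm0 : m ≠ 0 := by rintro rfl; simp at hm
  rw [jacobiSym_eq_factorization_prod q hm0]
  unfold inertChar Finsupp.prod
  refine Finset.prod_congr rfl fun l hl => ?_
  beta_reduce
  have hlp : l.Prime := Nat.prime_of_mem_primeFactors hl
  have hlq : l ≠ q := by
    rintro rfl
    exact hm (Nat.dvd_of_mem_primeFactors hl)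
  rcases Nat.even_or_odd (m.factorization l) with he | ho
  · rw [inertSign_pow_of_even _ _ _ he]
    have : jacobiSym l q = 1 ∨ jacobiSym l q = -1 := by
      apply jacobiSym.eq_one_or_neg_one
      simpa using (Nat.coprime_primes hlp h.right_prime).2 hlq
    rcases this with e | e <;> simp [e, he.neg_one_pow]
  · rw [h.inertSign_eq_jacobiSym hlp hlq (hodd l hlp hlq ho)]

/-- The absolute value does not affect the symbol modulo `q`, as `-1` is a square. -/
lemma jacobiSym_natAbs (h : LinkedPrimes p q) (z : ℤ) : jacobiSym z.natAbs q = jacobiSym z q := by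
  rcases Int.natAbs_eq z with e | e
  · rw [← e]
  · have hm : jacobiSym (-1) q = 1 := by
      have := h.right_mod
      rw [jacobiSym.at_neg_one (Nat.odd_iff.2 (by omega)), ZMod.χ₄_nat_one_mod_four (by omega)]
    conv_rhs => rw [e, jacobiSym.neg _ (Nat.odd_iff.2 (by have := h.right_mod; omega))]
    rw [ZMod.χ₄_nat_one_mod_four (by have := h.right_mod; omega), one_mul]

lemma jacobiSym_mul_sq {z w : ℤ} (hp : q.Prime) (hz : jacobiSym z q = 1) (hw : ¬ (q : ℤ) ∣ w) :
    jacobiSym (z * w ^ 2) q = 1 := by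
  rw [jacobiSym.mul_left, hz, one_mul]
  apply jacobiSym.sq_one'
  rw [← Int.isCoprime_iff_gcd_eq_one]
  exact ((Nat.prime_iff_prime_int.1 hp).coprime_iff_not_dvd.2 hw).symm

lemma inertChar_sq_sub_mul (h : LinkedPrimes p q) : ∀ (m : ℕ) (x y : ℤ),
    (x ^ 2 - (p * q : ℤ) * y ^ 2).natAbs = m → m ≠ 0 → inertChar p q m = 1 := by
  have hqi := Nat.prime_iff_prime_int.1 h.right_prime
  have hq0 := h.right_prime.ne_zero
  have hodd : ∀ (m : ℕ) (x y : ℤ), (x ^ 2 - (p * q : ℤ) * y ^ 2).natAbs = m →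
      ∀ l : ℕ, l.Prime → l ≠ q → Odd (m.factorization l) → jacobiSym (p * q) l ≠ -1 := by
    intro m x y hm l hl _ ho hj
    exact Nat.not_even_iff_odd.2 ho (even_factorization_sq_sub hl hj m x y hm)
  have hne : ∀ z : ℤ, jacobiSym z q = 1 → ¬ q ∣ z.natAbs := by
    intro z hz hd
    rw [← Int.natCast_dvd] at hd
    have hqf := Fact.mk h.right_prime
    rw [← jacobiSym.legendreSym.to_jacobiSym, (legendreSym.eq_zero_iff _ _).2
      ((ZMod.intCast_zmod_eq_zero_iff_dvd _ _).2 hd)] at hz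
    simp at hz
  intro m
  induction m using Nat.strong_induction_on with
  | _ m ih =>
    intro x y hm hm0
    by_cases hx : (q : ℤ) ∣ x
    · obtain ⟨x', rfl⟩ := hx
      by_cases hy : (q : ℤ) ∣ y
      · obtain ⟨y', rfl⟩ := hy
        have e : ((q : ℤ) * x') ^ 2 - (p * q : ℤ) * (q * y') ^ 2 =
          (q : ℤ) ^ 2 * (x' ^ 2 - (p * q : ℤ) * y' ^ 2) := by ring
        rw [e, Int.natAbs_mul, Int.natAbs_pow, Int.natAbs_natCast] at hm
        set m' := (x' ^ 2 - (p * q : ℤ) * y' ^ 2).natAbs with hm'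
        have hm'0 : m' ≠ 0 := by rintro h; apply hm0; rw [← hm, h, mul_zero]
        have hlt : m' < m := by
          rw [← hm]
          have : 1 < q ^ 2 := Nat.one_lt_pow two_ne_zero h.right_prime.one_lt
          exact lt_mul_of_one_lt_left (Nat.pos_of_ne_zero hm'0) this
        rw [← hm, inertChar_mul (pow_ne_zero _ hq0) hm'0, inertChar_pow hq0,
          ih m' hlt x' y' hm'.symm hm'0, pow_two, inertChar_mul_self, one_mul]
      · have e : ((q : ℤ) * x') ^ 2 - (p * q : ℤ) * y ^ 2 =
          (q : ℤ) * (q * x' ^ 2 - p * y ^ 2) := by ring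
        have hm2 := hm
        rw [e, Int.natAbs_mul, Int.natAbs_natCast] at hm
        set z : ℤ := q * x' ^ 2 - p * y ^ 2 with hz
        have hz1 : jacobiSym z q = 1 := by
          have e2 : jacobiSym z q = jacobiSym (-p * y ^ 2) q :=
            jacobiSym.mod_left' (by rw [hz, sub_eq_add_neg, add_comm, Int.add_mul_emod_self_left,
              neg_mul])
          rw [e2]
          refine jacobiSym_mul_sq h.right_prime ?_ hy
          rw [← h.jacobiSym_natAbs]
          simpa using h.left_square
        have hz0 := hne z hz1
        have hz00 : z.natAbs ≠ 0 := by rintro h'; rw [h'] at hz0; simp at hz0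
        rw [← hm, inertChar_mul hq0 hz00, h.inertChar_eq_jacobiSym hz0, h.jacobiSym_natAbs, hz1,
          inertChar_prime h.right_prime, mul_one]
        · have hqf := Fact.mk h.right_prime
          have : jacobiSym q q ≠ -1 := by
            rw [← jacobiSym.legendreSym.to_jacobiSym, (legendreSym.eq_zero_iff _ _).2 (by simp)]
            simp
          simp [inertSign, this]
        · intro l hl hlq ho
          refine hodd m _ _ hm2 l hl hlq ?_
          rw [← hm, Nat.factorization_mul hq0 hz00, h.right_prime.factorization]
          simpa [Finsupp.single_apply, Ne.symm hlq] using ho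
    · set z : ℤ := x ^ 2 - (p * q : ℤ) * y ^ 2 with hz
      have hz1 : jacobiSym z q = 1 := by
        have e2 : jacobiSym z q = jacobiSym (1 * x ^ 2) q := by
          refine jacobiSym.mod_left' ?_
          have e : z = 1 * x ^ 2 + q * (-p * y ^ 2) := by rw [hz]; ring
          rw [e, Int.add_mul_emod_self_left]
        rw [e2]
        exact jacobiSym_mul_sq h.right_prime (jacobiSym.one_left _) hx
      rw [← hm, h.inertChar_eq_jacobiSym (hne z hz1) (hodd _ x y rfl), h.jacobiSym_natAbs, hz1]

end LinkedPrimes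

/-- If `inertChar a b` is trivial on the nonzero integers `x ^ 2 - c * y ^ 2`, then its extension
is trivial on the nonzero rational numbers of this form. -/
lemma ratInertChar_sq_sub {c : ℤ}
    (hc : ∀ x y : ℤ, x ^ 2 - c * y ^ 2 ≠ 0 → inertChar a b (x ^ 2 - c * y ^ 2).natAbs = 1)
    (x y : ℚ) (h : x ^ 2 - c * y ^ 2 ≠ 0) : ratInertChar a b (x ^ 2 - c * y ^ 2) = 1 := by
  set X : ℤ := x.num * y.den with hX
  set Y : ℤ := y.num * x.den with hY
  set D : ℤ := x.den * y.den with hD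
  have hx0 : (x.den : ℚ) ≠ 0 := by exact_mod_cast x.den_nz
  have hy0 : (y.den : ℚ) ≠ 0 := by exact_mod_cast y.den_nz
  have hD0 : D ≠ 0 := by
    rw [hD]; exact_mod_cast mul_ne_zero x.den_nz y.den_nz
  have hDq : (D : ℚ) ≠ 0 := by exact_mod_cast hD0
  have e : x ^ 2 - c * y ^ 2 = ((X ^ 2 - c * Y ^ 2 : ℤ) : ℚ) / ((D ^ 2 : ℤ) : ℚ) := by
    have hx := Rat.num_div_den x
    have hy := Rat.num_div_den y
    rw [hX, hY, hD]
    conv_lhs => rw [← hx, ← hy]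
    push_cast
    field_simp
  have hN : X ^ 2 - c * Y ^ 2 ≠ 0 := by
    intro h0
    apply h
    rw [e, h0]; simp
  rw [e, ratInertChar_div hN (pow_ne_zero 2 hD0), hc X Y hN, Int.natAbs_pow,
    inertChar_pow (by simpa using hD0), pow_two, inertChar_mul_self, one_mul]

end InertChar

section FiniteIndex

open scoped nonZeroDivisors NumberField

/-- A subgroup `H` containing all squares has finite index as soon as it does so modulo a finitely
generated kernel and up to finitely many generators of the target. -/
lemma Subgroup.finiteIndex_of_sq_mem {G T U : Type*} [CommGroup G] [CommGroup T] [CommGroup U]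
    [Group.FG U] (i : U →* G) (φ : G →* T) (hφ : φ.ker = i.range) (H : Subgroup G)
    (hsq : ∀ g, g ^ 2 ∈ H) {S : Set T} (hS : S.Finite) (hgen : H.map φ ⊔ closure S = ⊤) :
    H.FiniteIndex := by
  have hQ : Group.FG (T ⧸ H.map φ) := by
    have : Finite S := hS
    refine Group.fg_of_surjective
      (f := (QuotientGroup.mk' (H.map φ)).comp (closure S).subtype) ?_
    intro q
    obtain ⟨t, rfl⟩ := QuotientGroup.mk_surjective q
    have ht : t ∈ H.map φ ⊔ closure S := hgen ▸ mem_top t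
    obtain ⟨y, hy, z, hz, rfl⟩ := mem_sup.1 ht
    refine ⟨⟨z, hz⟩, ?_⟩
    simp only [MonoidHom.coe_comp, Function.comp_apply, subtype_apply, QuotientGroup.mk'_apply]
    rw [QuotientGroup.eq]
    have : z⁻¹ * (y * z) = y := by rw [mul_comm y, inv_mul_cancel_left]
    rwa [this]
  let θ : G ⧸ H →* T ⧸ H.map φ := QuotientGroup.map H (H.map φ) φ (le_comap_map φ H)
  let j : U →* G ⧸ H := (QuotientGroup.mk' H).comp i
  have hex : ∀ x, θ x = 1 → x ∈ j.range := by
    intro x hx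
    obtain ⟨g, rfl⟩ := QuotientGroup.mk_surjective x
    have hg : φ g ∈ H.map φ := (QuotientGroup.eq_one_iff _).1 hx
    obtain ⟨h, hh, hhg⟩ := mem_map.1 hg
    have : h⁻¹ * g ∈ φ.ker := by rw [MonoidHom.mem_ker, map_mul, map_inv, hhg, inv_mul_cancel]
    rw [hφ] at this
    obtain ⟨u, hu⟩ := this
    refine ⟨u, ?_⟩
    change ((i u : G) : G ⧸ H) = g
    rw [hu, QuotientGroup.eq]
    simpa using hh
  have hex' : ∀ u, θ (j u) = 1 := by
    intro u
    change ((φ (i u) : T) : T ⧸ H.map φ) = 1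
    have : i u ∈ φ.ker := by rw [hφ]; exact ⟨u, rfl⟩
    rw [MonoidHom.mem_ker.1 this, QuotientGroup.mk_one]
  have : Module.Finite ℤ (Additive U) := Module.Finite.iff_addGroup_fg.2 inferInstance
  have : Module.Finite ℤ (Additive (T ⧸ H.map φ)) := Module.Finite.iff_addGroup_fg.2 inferInstance
  have : IsNoetherian ℤ (Additive (G ⧸ H)) := by
    refine isNoetherian_of_range_eq_ker (MonoidHom.toAdditive j).toIntLinearMap
      (MonoidHom.toAdditive θ).toIntLinearMap ?_
    ext x
    constructor
    · rintro ⟨u, rfl⟩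
      exact hex' u.toMul
    · intro hx
      obtain ⟨u, hu⟩ := hex x.toMul hx
      exact ⟨Additive.ofMul u, hu⟩
  have hfg : Module.Finite ℤ (Additive (G ⧸ H)) := inferInstance
  have hg : Group.FG (G ⧸ H) := by
    exact GroupFG.iff_add_fg.2 (Module.Finite.iff_addGroup_fg.1 hfg)
  have ht : IsMulTorsion (G ⧸ H) := by
    intro x
    obtain ⟨g, rfl⟩ := QuotientGroup.mk_surjective x
    refine isOfFinOrder_iff_pow_eq_one.2 ⟨2, by simp, ?_⟩
    rw [← QuotientGroup.mk_pow, QuotientGroup.eq_one_iff]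
    exact hsq g
  have := CommGroup.finite_of_fg_isMulTorsion _ ht
  exact finiteIndex_of_finite_quotient

/-- In a finite field, one of `a`, `b`, `a * b` is a square. -/
lemma FiniteField.isSquare_or_isSquare_mul {F : Type*} [Field F] [Finite F] (a b : F) :
    IsSquare a ∨ IsSquare b ∨ IsSquare (a * b) := by
  classical
  have := Fintype.ofFinite F
  by_contra! h
  obtain ⟨h1, h2, h3⟩ := h
  rw [← quadraticChar_neg_one_iff_not_isSquare] at h1 h2 h3
  rw [map_mul, h1, h2] at h3
  simp at h3

variable {k : Type*} [Field k]

/-- The nonzero values of the binary form `x ^ 2 - c * y ^ 2`. -/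
def normFormSubgroup (c : k) : Subgroup kˣ where
  carrier := {u | ∃ x y : k, (u : k) = x ^ 2 - c * y ^ 2}
  one_mem' := ⟨1, 0, by simp⟩
  mul_mem' := by
    rintro u v ⟨x, y, h⟩ ⟨z, w, h'⟩
    exact ⟨x * z + c * y * w, x * w + y * z, by rw [Units.val_mul, h, h']; ring⟩
  inv_mem' := by
    rintro u ⟨x, y, h⟩
    have hu : (u : k) ≠ 0 := u.ne_zero
    refine ⟨x / u, y / u, ?_⟩
    rw [Units.val_inv_eq_inv_val]
    field_simp
    exact h

lemma mem_normFormSubgroup {c : k} {u : kˣ} :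
    u ∈ normFormSubgroup c ↔ ∃ x y : k, (u : k) = x ^ 2 - c * y ^ 2 := Iff.rfl

/-- The subgroup generated by the norm forms of `a`, `b` and `a * b`. -/
def biquadraticNormSubgroup (a b : k) : Subgroup kˣ :=
  normFormSubgroup a ⊔ normFormSubgroup b ⊔ normFormSubgroup (a * b)

lemma sq_sub_mul_sq_ne_zero {c : k} (hc : ¬ IsSquare c) {x y : k} (h : x ≠ 0 ∨ y ≠ 0) :
    x ^ 2 - c * y ^ 2 ≠ 0 := by
  intro h0
  have hy : y ≠ 0 := by
    rintro rfl
    simp at h0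
    simp [h0] at h
  exact hc ⟨x / y, by field_simp; linear_combination -h0⟩

variable [NumberField k]

open NumberField

/-- The norm of a principal ideal is bounded in terms of the house of a generator. -/
lemma absNorm_span_singleton_le_house_pow (z : 𝓞 k) :
    (Ideal.absNorm (Ideal.span {z}) : ℝ) ≤ house (z : k) ^ Module.finrank ℚ k := by
  have h1 : (Ideal.absNorm (Ideal.span {z}) : ℝ) = ‖algebraMap ℚ ℂ (Algebra.norm ℚ (z : k))‖ := by
    rw [Ideal.absNorm_span_singleton, ← Algebra.coe_norm_int]
    simp [Nat.cast_natAbs]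
  rw [h1, Algebra.norm_eq_prod_embeddings ℚ ℂ, norm_prod]
  calc ∏ σ : k →ₐ[ℚ] ℂ, ‖σ z‖ ≤ ∏ _σ : k →ₐ[ℚ] ℂ, house (z : k) := by
        refine Finset.prod_le_prod (fun _ _ => norm_nonneg _) fun σ _ => ?_
        exact norm_le_pi_norm (canonicalEmbedding k z) (σ : k →+* ℂ)
    _ = _ := by rw [Finset.prod_const, Finset.card_univ, AlgHom.card]

/-- Thue's lemma: modulo an ideal `P`, any residue class `r` is a quotient `x / y` with
`x ^ 2 - c * y ^ 2` of norm at most a constant multiple of the norm of `P`. -/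
lemma exists_thue_norm_le (c : 𝓞 k) : ∃ C : ℝ, ∀ (P : Ideal (𝓞 k)) (_ : P ≠ ⊥) (r : 𝓞 k),
    ∃ x y : 𝓞 k, (x ≠ 0 ∨ y ≠ 0) ∧ x - r * y ∈ P ∧
      (Ideal.absNorm (Ideal.span {x ^ 2 - c * y ^ 2}) : ℝ) ≤ C * Ideal.absNorm P := by
  classical
  set n := Module.finrank ℚ k with hn
  have hn0 : 0 < n := Module.finrank_pos
  set β := RingOfIntegers.basis k
  set M : ℝ := ∑ i, house (β i : k) with hM
  refine ⟨((1 + house (c : k)) * M ^ 2) ^ n, fun P hP r => ?_⟩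
  set N := Ideal.absNorm P with hN
  have hN0 : N ≠ 0 := by rwa [hN, Ne, Ideal.absNorm_eq_zero_iff]
  obtain ⟨B, hB1, hB2⟩ : ∃ B : ℕ, B ^ (2 * n) ≤ N ∧ N < (B + 1) ^ (2 * n) := by
    have hex : ∃ B : ℕ, N < (B + 1) ^ (2 * n) :=
      ⟨N, (Nat.lt_succ_self N).trans_le (Nat.le_self_pow (by omega) _)⟩
    refine ⟨Nat.find hex, ?_, Nat.find_spec hex⟩
    rcases h : Nat.find hex with _ | B
    · rw [zero_pow (by omega)]; exact Nat.zero_le _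
    · have := Nat.find_min hex (m := B) (by omega)
      omega
  let el : (Module.Free.ChooseBasisIndex ℤ (𝓞 k) → Fin (B + 1)) → 𝓞 k :=
    fun f => ∑ i, ((f i : ℕ) : ℤ) • β i
  have hel_inj : Function.Injective el := by
    intro f g hfg
    have := Fintype.linearIndependent_iff.1 β.linearIndependent
      (fun i => ((f i : ℕ) : ℤ) - ((g i : ℕ) : ℤ)) (by
        simp only [sub_smul, Finset.sum_sub_distrib]
        exact sub_eq_zero.2 hfg)
    funext i
    have := this i
    exact Fin.ext (by omega)
  have hhouse : ∀ f g, house ((el f - el g : 𝓞 k) : k) ≤ B * M := by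
    intro f g
    have e : ((el f - el g : 𝓞 k) : k) = ∑ i, (((f i : ℕ) - (g i : ℕ) : ℤ) : k) * (β i : k) := by
      simp only [el, ← Finset.sum_sub_distrib, ← sub_smul]
      change algebraMap (𝓞 k) k _ = _
      rw [map_sum]
      refine Finset.sum_congr rfl fun i _ => ?_
      rw [zsmul_eq_mul, map_mul, map_intCast]
    rw [e, hM, Finset.mul_sum]
    refine (house_sum_le_sum_house _ _).trans (Finset.sum_le_sum fun i _ => ?_)
    refine (house_mul_le _ _).trans (mul_le_mul_of_nonneg_right ?_ (house_nonneg _))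
    rw [house_intCast]
    have h1 := (f i).2
    have h2 := (g i).2
    have : |((f i : ℕ) - (g i : ℕ) : ℤ)| ≤ B := by rw [abs_le]; omega
    exact_mod_cast this
  have hfin : Finite (𝓞 k ⧸ P) := (Ideal.absNorm_ne_zero_iff P).1 hN0
  have := Fintype.ofFinite (𝓞 k ⧸ P)
  obtain ⟨⟨f, g⟩, ⟨f', g'⟩, hne, heq⟩ := Fintype.exists_ne_map_eq_of_card_lt
    (fun fg : (Module.Free.ChooseBasisIndex ℤ (𝓞 k) → Fin (B + 1)) ×
      (Module.Free.ChooseBasisIndex ℤ (𝓞 k) → Fin (B + 1)) =>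
        Ideal.Quotient.mk P (el fg.1 - r * el fg.2)) (by
      rw [Fintype.card_prod, Fintype.card_fun, Fintype.card_fin, ← Nat.card_eq_fintype_card,
        ← Submodule.cardQuot_apply, ← Ideal.absNorm_apply, ← hN, ← pow_add, ← two_mul,
        ← Module.finrank_eq_card_basis β, RingOfIntegers.rank]
      exact hB2)
  refine ⟨el f - el f', el g - el g', ?_, ?_, ?_⟩
  · by_contra! h
    exact hne (Prod.ext (hel_inj (sub_eq_zero.1 h.1)) (hel_inj (sub_eq_zero.1 h.2)))
  · rw [Ideal.Quotient.eq] at heq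
    convert heq using 1
    ring
  · refine (absNorm_span_singleton_le_house_pow _).trans ?_
    have hM0 : 0 ≤ M := Finset.sum_nonneg fun i _ => house_nonneg _
    set x := el f - el f'
    set y := el g - el g'
    have hx : house (x : k) ≤ B * M := hhouse _ _
    have hy : house (y : k) ≤ B * M := hhouse _ _
    have hb : house ((x ^ 2 - c * y ^ 2 : 𝓞 k) : k) ≤ (1 + house (c : k)) * M ^ 2 * B ^ 2 := by
      have e : ((x ^ 2 - c * y ^ 2 : 𝓞 k) : k) =
          (x : k) ^ 2 + (-1 : ℤ) * ((c : k) * (y : k) ^ 2) := by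
        push_cast
        ring
      rw [e]
      have hx2 := (house_pow_le (x : k) 2).trans (pow_le_pow_left₀ (house_nonneg _) hx 2)
      have hy2 := (house_pow_le (y : k) 2).trans (pow_le_pow_left₀ (house_nonneg _) hy 2)
      have h1 := house_mul_le (((-1 : ℤ) : k)) ((c : k) * (y : k) ^ 2)
      rw [house_intCast] at h1
      have h2 := house_mul_le (c : k) ((y : k) ^ 2)
      have h3 := mul_le_mul_of_nonneg_left hy2 (house_nonneg (c : k))
      have h4 := house_add_le ((x : k) ^ 2) ((-1 : ℤ) * ((c : k) * (y : k) ^ 2))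
      have h5 : |((-1 : ℤ) : ℝ)| = 1 := by simp
      push_cast at h5
      push_cast at h1 h4 ⊢
      rw [h5, one_mul] at h1
      calc _ ≤ _ := h4
        _ ≤ (B * M) ^ 2 + house (c : k) * (B * M) ^ 2 :=
            add_le_add hx2 (h1.trans (h2.trans h3))
        _ = _ := by ring
    calc _ ≤ ((1 + house (c : k)) * M ^ 2 * B ^ 2) ^ n := pow_le_pow_left₀ (house_nonneg _) hb n
      _ = ((1 + house (c : k)) * M ^ 2) ^ n * (B ^ (2 * n) : ℕ) := by
          push_cast; rw [mul_pow, ← pow_mul]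
      _ ≤ _ := by
          refine mul_le_mul_of_nonneg_left (by exact_mod_cast hB1) ?_
          exact pow_nonneg (mul_nonneg (by linarith [house_nonneg (c : k)]) (sq_nonneg M)) n

set_option maxHeartbeats 400000 in
open FractionalIdeal in
/-- The biquadratic norm subgroup has finite index in the multiplicative group. -/
lemma biquadraticNormSubgroup_finiteIndex {a b : ℤ} (ha : ¬ IsSquare (a : k))
    (hb : ¬ IsSquare (b : k)) (hab : ¬ IsSquare ((a * b : ℤ) : k)) :
    (biquadraticNormSubgroup (a : k) (b : k)).FiniteIndex := by
  set H := biquadraticNormSubgroup (a : k) (b : k) with hH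
  obtain ⟨C, hC⟩ : ∃ C : ℝ, ∀ c : ℤ, (c = a ∨ c = b ∨ c = a * b) → 
      ∀ (P : Ideal (𝓞 k)) (_ : P ≠ ⊥) (r : 𝓞 k),
        ∃ x y : 𝓞 k, (x ≠ 0 ∨ y ≠ 0) ∧ x - r * y ∈ P ∧
        (Ideal.absNorm (Ideal.span {x ^ 2 - c * y ^ 2}) : ℝ) ≤ C * Ideal.absNorm P := by
    obtain ⟨C₁, h₁⟩ := exists_thue_norm_le (k := k) a
    obtain ⟨C₂, h₂⟩ := exists_thue_norm_le (k := k) b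
    obtain ⟨C₃, h₃⟩ := exists_thue_norm_le (k := k) (a * b : ℤ)
    refine ⟨max C₁ (max C₂ C₃), ?_⟩
    rintro c (rfl | rfl | rfl) P hP r
    · obtain ⟨x, y, h, h', h''⟩ := h₁ P hP r
      exact ⟨x, y, h, h', h''.trans (by gcongr; exact le_max_left _ _)⟩
    · obtain ⟨x, y, h, h', h''⟩ := h₂ P hP r
      exact ⟨x, y, h, h', h''.trans (by gcongr; exact (le_max_left _ _).trans (le_max_right _ _))⟩
    · obtain ⟨x, y, h, h', h''⟩ := h₃ P hP r
      exact ⟨x, y, h, h', h''.trans (by gcongr; exact (le_max_right _ _).trans (le_max_right _ _))⟩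
  have hnsq : ∀ c : ℤ, (c = a ∨ c = b ∨ c = a * b) → ¬ IsSquare (c : k) := by
    rintro c (rfl | rfl | rfl) <;> assumption
  have hle : ∀ c : ℤ, (c = a ∨ c = b ∨ c = a * b) → normFormSubgroup (c : k) ≤ H := by
    rintro c (rfl | rfl | rfl)
    · exact le_sup_left.trans le_sup_left
    · exact le_sup_right.trans le_sup_left
    · push_cast; exact le_sup_right
  let S : Set (FractionalIdeal (𝓞 k)⁰ k)ˣ := FractionalIdeal.mk0 k ''
    {I : (Ideal (𝓞 k))⁰ | Ideal.absNorm (I : Ideal (𝓞 k)) ≤ ⌊C⌋₊}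
  have hSfin : S.Finite := by
    refine Set.Finite.image _ ?_
    refine Set.Finite.of_finite_image (f := Subtype.val) ?_ Subtype.val_injective.injOn
    refine (Ideal.finite_setOfPred_absNorm_le (S := 𝓞 k) ⌊C⌋₊).subset ?_
    rintro _ ⟨I, hI, rfl⟩
    exact hI
  have hfg : Group.FG (𝓞 k)ˣ := Group.fg_iff_monoid_fg.2 inferInstance
  refine Subgroup.finiteIndex_of_sq_mem (U := (𝓞 k)ˣ) (Units.map (algebraMap (𝓞 k) k).toMonoidHom)
    (toPrincipalIdeal (𝓞 k) k) ?_ H ?_ hSfin ?_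
  · ext x
    rw [MonoidHom.mem_ker, toPrincipalIdeal_eq_iff, Units.val_one]
    constructor
    · intro h
      have h1 : (x : k) ∈ (1 : FractionalIdeal (𝓞 k)⁰ k) := h ▸ mem_spanSingleton_self _ _
      have h2 : ((x⁻¹ : kˣ) : k) ∈ (1 : FractionalIdeal (𝓞 k)⁰ k) := by
        have : spanSingleton (𝓞 k)⁰ ((x⁻¹ : kˣ) : k) = 1 := by
          rw [← one_mul (spanSingleton _ _), ← h, spanSingleton_mul_spanSingleton, Units.mul_inv,
            spanSingleton_one, h]
        exact this ▸ mem_spanSingleton_self _ _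
      obtain ⟨u, hu⟩ := (mem_one_iff _).1 h1
      obtain ⟨v, hv⟩ := (mem_one_iff _).1 h2
      have huv : u * v = 1 := by
        apply FaithfulSMul.algebraMap_injective (𝓞 k) k
        rw [map_mul, hu, hv, Units.mul_inv, map_one]
      exact ⟨Units.mkOfMulEqOne u v huv, Units.ext hu⟩
    · rintro ⟨u, rfl⟩
      have : ((Units.map (algebraMap (𝓞 k) k).toMonoidHom u : kˣ) : k) =
        algebraMap (𝓞 k) k u := rfl
      rw [this, ← coeIdeal_span_singleton, Ideal.span_singleton_eq_top.2 u.isUnit, coeIdeal_top]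
  · intro g
    exact hle a (Or.inl rfl) ⟨g, 0, by simp⟩
  · obtain ⟨W, hW⟩ : ∃ W, W = H.map (toPrincipalIdeal (𝓞 k) k) ⊔ Subgroup.closure S := ⟨_, rfl⟩
    have hSW : ∀ J : (Ideal (𝓞 k))⁰, Ideal.absNorm (J : Ideal (𝓞 k)) ≤ ⌊C⌋₊ →
        FractionalIdeal.mk0 k J ∈ W := by
      intro J hJ
      rw [hW]
      exact Subgroup.mem_sup_right (Subgroup.subset_closure (Set.mem_image_of_mem _ hJ))
    have hHW : ∀ h ∈ H, toPrincipalIdeal (𝓞 k) k h ∈ W := by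
      intro h hh
      rw [hW]
      exact Subgroup.mem_sup_left (Subgroup.mem_map_of_mem _ hh)
    rw [← hW]
    clear_value S
    clear hW
    have hprime : ∀ (P : Ideal (𝓞 k)) (hP : P ≠ ⊥), P.IsPrime →
        FractionalIdeal.mk0 k ⟨P, mem_nonZeroDivisors_of_ne_zero hP⟩ ∈ W := by
      intro P hP hPp
      have hPm : P.IsMaximal := hPp.isMaximal hP
      have hfin : Finite (𝓞 k ⧸ P) := by
        rwa [← Ideal.absNorm_ne_zero_iff, Ne, Ideal.absNorm_eq_zero_iff]
      let _ := Ideal.Quotient.field P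
      obtain ⟨c, hc, r, hr⟩ : ∃ c : ℤ, (c = a ∨ c = b ∨ c = a * b) ∧
          IsSquare (Ideal.Quotient.mk P (c : 𝓞 k)) := by
        rcases FiniteField.isSquare_or_isSquare_mul (Ideal.Quotient.mk P (a : 𝓞 k))
          (Ideal.Quotient.mk P (b : 𝓞 k)) with h | h | h
        · exact ⟨a, by simp, h⟩
        · exact ⟨b, by simp, h⟩
        · exact ⟨a * b, by simp, by push_cast; rwa [map_mul]⟩
      obtain ⟨r, rfl⟩ := Ideal.Quotient.mk_surjective r
      obtain ⟨x, y, hxy, hxyP, hle'⟩ := hC c hc P hP r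
      set h := x ^ 2 - (c : 𝓞 k) * y ^ 2 with hh
      have hhP : h ∈ P := by
        have h1 : (c : 𝓞 k) - r * r ∈ P := by rw [← Ideal.Quotient.eq, hr, map_mul]
        have e : h = (x - r * y) * (x + r * y) - ((c : 𝓞 k) - r * r) * y ^ 2 := by
          rw [hh]; ring
        rw [e]
        exact P.sub_mem (P.mul_mem_right _ hxyP) (P.mul_mem_right _ h1)
      have hhk : algebraMap (𝓞 k) k h ≠ 0 := by
        have e : algebraMap (𝓞 k) k h =
            (algebraMap (𝓞 k) k x) ^ 2 - (c : k) * (algebraMap (𝓞 k) k y) ^ 2 := by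
          simp [hh]
        rw [e]
        apply sq_sub_mul_sq_ne_zero (hnsq c hc)
        simpa using hxy
      have hh0 : h ≠ 0 := by rintro h0; simp [h0] at hhk
      obtain ⟨J, hJ⟩ := Ideal.dvd_span_singleton.2 hhP
      have hJ0 : J ≠ ⊥ := by
        rintro rfl
        rw [Ideal.mul_bot, Ideal.span_singleton_eq_bot] at hJ
        exact hh0 hJ
      have hJC : Ideal.absNorm J ≤ ⌊C⌋₊ := by
        have hN0 : 0 < (Ideal.absNorm P : ℝ) := by
          exact_mod_cast Nat.pos_of_ne_zero ((Ideal.absNorm_ne_zero_iff P).2 hfin)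
        rw [hJ, map_mul] at hle'
        push_cast at hle'
        rw [mul_comm C] at hle'
        exact Nat.le_floor (le_of_mul_le_mul_left hle' hN0)
      have hJW : FractionalIdeal.mk0 k ⟨J, mem_nonZeroDivisors_of_ne_zero hJ0⟩ ∈ W :=
        hSW _ hJC
      have hhW : toPrincipalIdeal (𝓞 k) k (Units.mk0 _ hhk) ∈ W := by
        refine hHW _ (hle c hc ?_)
        exact ⟨algebraMap (𝓞 k) k x, algebraMap (𝓞 k) k y, by simp [hh]⟩
      have e : FractionalIdeal.mk0 k ⟨P, mem_nonZeroDivisors_of_ne_zero hP⟩ *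
          FractionalIdeal.mk0 k ⟨J, mem_nonZeroDivisors_of_ne_zero hJ0⟩ =
          toPrincipalIdeal (𝓞 k) k (Units.mk0 _ hhk) := by
        ext1
        simp only [Units.val_mul, coe_mk0, coe_toPrincipalIdeal, Units.val_mk0]
        rw [← coeIdeal_mul, ← hJ, coeIdeal_span_singleton]
      rw [← e] at hhW
      exact (Subgroup.mul_mem_cancel_right W hJW).1 hhW
    have hideal : ∀ (I : Ideal (𝓞 k)) (hI : I ≠ ⊥),
        FractionalIdeal.mk0 k ⟨I, mem_nonZeroDivisors_of_ne_zero hI⟩ ∈ W := by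
      intro I
      induction I using UniqueFactorizationMonoid.induction_on_prime with
      | h₁ => intro h; exact absurd rfl h
      | h₂ I hI =>
        intro h
        rw [Ideal.isUnit_iff] at hI
        subst hI
        convert W.one_mem
        ext1
        simp
      | h₃ I P hI hP ih =>
        intro h
        have hP0 : P ≠ ⊥ := hP.ne_zero
        have := W.mul_mem (hprime P hP0 (Ideal.isPrime_of_prime hP)) (ih hI)
        rw [← map_mul] at this
        exact this
    rw [eq_top_iff]
    intro I _
    obtain ⟨d, J, hd, hJ⟩ := exists_eq_spanSingleton_mul (I : FractionalIdeal (𝓞 k)⁰ k)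
    have hdk : algebraMap (𝓞 k) k d ≠ 0 := by simpa using hd
    have hJ0 : J ≠ ⊥ := by
      rintro rfl
      rw [coeIdeal_bot, mul_zero] at hJ
      exact I.ne_zero hJ
    have hd0 : Ideal.span {d} ≠ ⊥ := by simpa using hd
    have e : I = (FractionalIdeal.mk0 k ⟨Ideal.span {d}, mem_nonZeroDivisors_of_ne_zero hd0⟩)⁻¹ *
        FractionalIdeal.mk0 k ⟨J, mem_nonZeroDivisors_of_ne_zero hJ0⟩ := by
      rw [eq_inv_mul_iff_mul_eq]
      ext1
      simp only [Units.val_mul, coe_mk0]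
      rw [hJ, ← mul_assoc, coeIdeal_span_singleton, spanSingleton_mul_spanSingleton,
        mul_inv_cancel₀ hdk, spanSingleton_one, one_mul]
    rw [e]
    exact W.mul_mem (W.inv_mem (hideal _ hd0)) (hideal _ hJ0)

end FiniteIndex

/-- The tent function `y ↦ max (1 - |y|) 0`. -/
noncomputable def tent (y : ℝ) : ℝ := max (1 - |y|) 0

theorem tent_nonneg (y : ℝ) : 0 ≤ tent y := le_max_right _ _

theorem tent_le_one (y : ℝ) : tent y ≤ 1 :=
  max_le (by linarith [abs_nonneg y]) zero_le_one

theorem tent_eq_zero {y : ℝ} (h : 1 ≤ |y|) : tent y = 0 := max_eq_right (by linarith)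

theorem abs_tent_sub_le (x y : ℝ) : |tent x - tent y| ≤ |x - y| := by
  have h := abs_max_sub_max_le_abs (1 - |x|) (1 - |y|) 0
  refine h.trans ?_
  rw [show 1 - |x| - (1 - |y|) = |y| - |x| by ring, abs_sub_comm x y]
  exact abs_abs_sub_abs_le _ _

theorem tent_add_eq_zero_of_notMem (y : ℝ) (n : ℤ) (hn : n ∉ ({-⌊y⌋, -⌊y⌋ - 1} : Finset ℤ)) :
    tent (y + n) = 0 := by
  simp only [Finset.mem_insert, Finset.mem_singleton, not_or] at hn
  have h1 := Int.floor_le y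
  have h2 := Int.lt_floor_add_one y
  apply tent_eq_zero
  rcases lt_or_gt_of_ne hn.1 with h | h
  · have h3 : n ≤ -⌊y⌋ - 2 := by omega
    have h4 : (n : ℝ) ≤ -⌊y⌋ - 2 := by exact_mod_cast h3
    rw [abs_of_neg] <;> linarith
  · have h3 : -⌊y⌋ + 1 ≤ n := by omega
    have h4 : -(⌊y⌋ : ℝ) + 1 ≤ n := by exact_mod_cast h3
    exact le_trans (by linarith) (le_abs_self _)

theorem sum_tent_add (y : ℝ) : ∑ n ∈ ({-⌊y⌋, -⌊y⌋ - 1} : Finset ℤ), tent (y + n) = 1 := by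
  have h1 := Int.floor_le y
  have h2 := Int.lt_floor_add_one y
  rw [Finset.sum_pair (by omega)]
  push_cast
  rw [tent, tent, abs_of_nonneg (by linarith), abs_of_neg (by linarith),
    max_eq_left (by linarith), max_eq_left (by linarith)]
  ring

theorem hasSum_prod_tent_add {ι : Type*} [Fintype ι] (y : ι → ℝ) :
    HasSum (fun n : ι → ℤ ↦ ∏ i, tent (y i + n i)) 1 := by
  classical
  have h := hasSum_sum_of_ne_finset_zero (L := .unconditional _)
    (f := fun n : ι → ℤ ↦ ∏ i, tent (y i + n i))
    (s := Fintype.piFinset fun i ↦ ({-⌊y i⌋, -⌊y i⌋ - 1} : Finset ℤ)) (fun n hn ↦ by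
      simp only [Fintype.mem_piFinset, not_forall] at hn
      obtain ⟨i, hi⟩ := hn
      exact Finset.prod_eq_zero (Finset.mem_univ i) (tent_add_eq_zero_of_notMem _ _ hi))
  rwa [← Finset.prod_univ_sum (fun i ↦ ({-⌊y i⌋, -⌊y i⌋ - 1} : Finset ℤ))
    (fun i n ↦ tent (y i + n)), Finset.prod_congr rfl (fun i _ ↦ sum_tent_add (y i)),
    Finset.prod_const_one] at h

theorem HasSum.mul_prod_of_nonneg {ι κ : Type*} {f : ι → ℝ} {g : κ → ℝ} {a b : ℝ}
    (hf : HasSum f a) (hg : HasSum g b) (hf' : ∀ i, 0 ≤ f i) (hg' : ∀ j, 0 ≤ g j) :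
    HasSum (fun p : ι × κ ↦ f p.1 * g p.2) (a * b) :=
  hf.mul hg (hf.summable.mul_of_nonneg hg.summable hf' hg')

theorem abs_prod_sub_prod_le {ι : Type*} (s : Finset ι) (a b : ι → ℝ) (ha : ∀ i, |a i| ≤ 1)
    (hb : ∀ i, |b i| ≤ 1) : |∏ i ∈ s, a i - ∏ i ∈ s, b i| ≤ ∑ i ∈ s, |a i - b i| := by
  classical
  induction s using Finset.induction_on with
  | empty => simp
  | insert i s hi ih =>
    rw [Finset.prod_insert hi, Finset.prod_insert hi, Finset.sum_insert hi]
    have h1 : |∏ j ∈ s, b j| ≤ 1 := by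
      rw [Finset.abs_prod]
      exact Finset.prod_le_one (fun _ _ ↦ abs_nonneg _) (fun j _ ↦ hb j)
    calc |a i * ∏ j ∈ s, a j - b i * ∏ j ∈ s, b j|
        = |(a i - b i) * ∏ j ∈ s, b j + a i * (∏ j ∈ s, a j - ∏ j ∈ s, b j)| := by ring_nf
      _ ≤ |a i - b i| * |∏ j ∈ s, b j| + |a i| * |∏ j ∈ s, a j - ∏ j ∈ s, b j| := by
          rw [← abs_mul, ← abs_mul]; exact abs_add_le _ _
      _ ≤ |a i - b i| * 1 + 1 * ∑ j ∈ s, |a j - b j| := by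
          gcongr
          exact ha i
      _ = _ := by ring

namespace NumberField

open mixedEmbedding NumberField.Units NumberField.Units.dirichletUnitTheorem Module
open scoped Classical

variable {K : Type*} [Field K] [NumberField K]

/-- The coordinate of `logMap x` along the `i`-th vector of a basis of the unit lattice. -/
noncomputable def unitCoord (i : Fin (rank K)) (x : mixedSpace K) : ℝ :=
  ((basisUnitLattice K).ofZLatticeBasis ℝ (unitLattice K)).repr (logMap x) i

/-- A function on the mixed space whose translates by units form a partition of unity. -/
noncomputable def unitWeight (x : mixedSpace K) : ℝ := ∏ i, tent (unitCoord i x)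

theorem unitCoord_smul (i : Fin (rank K)) (ζ : torsion K) (n : Fin (rank K) → ℤ)
    {x : mixedSpace K} (hx : mixedEmbedding.norm x ≠ 0) :
    unitCoord i (((ζ : (𝓞 K)ˣ) * ∏ j, fundSystem K j ^ n j) • x) = unitCoord i x + n i := by
  have h : logEmbedding K (Additive.ofMul (∏ j, fundSystem K j ^ n j)) =
      ∑ j, n j • ((basisUnitLattice K j : unitLattice K) : logSpace K) := by
    rw [ofMul_prod, map_sum]
    refine Finset.sum_congr rfl fun j _ ↦ ?_
    rw [ofMul_zpow, map_zsmul, logEmbedding_fundSystem]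
  rw [unitCoord, mul_smul, logMap_torsion_smul _ ζ.2, logMap_unit_smul _ hx, h, map_add, map_sum,
    add_comm]
  simp only [Finsupp.add_apply, Finsupp.finsetSum_apply, map_zsmul, Finsupp.smul_apply]
  congr 1
  rw [Finset.sum_eq_single i]
  · rw [Basis.ofZLatticeBasis_repr_apply]; simp
  · intro j _ hj
    rw [Basis.ofZLatticeBasis_repr_apply]; simp [hj]
  · simp

theorem hasSum_unitWeight_smul {x : mixedSpace K} (hx : mixedEmbedding.norm x ≠ 0) :
    HasSum (fun u : (𝓞 K)ˣ ↦ unitWeight (u • x)) (torsionOrder K) := by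
  obtain ⟨e, he⟩ : ∃ e : torsion K × (Fin (rank K) → ℤ) ≃ (𝓞 K)ˣ,
      ∀ p, e p = (p.1 : (𝓞 K)ˣ) * ∏ j, fundSystem K j ^ p.2 j := by
    refine ⟨Equiv.ofBijective _ <| (Function.bijective_iff_existsUnique _).mpr fun u ↦ ?_,
      fun p ↦ rfl⟩
    obtain ⟨p, hp, hu⟩ := exist_unique_eq_mul_prod K u
    exact ⟨p, hp.symm, fun q hq ↦ hu q hq.symm⟩
  rw [← e.hasSum_iff]
  have h1 := hasSum_prod_tent_add (fun i ↦ unitCoord i x)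
  have h2 : (fun u : (𝓞 K)ˣ ↦ unitWeight (u • x)) ∘ e =
      fun p : torsion K × (Fin (rank K) → ℤ) ↦ 1 * ∏ i, tent (unitCoord i x + p.2 i) := by
    ext p
    simp only [Function.comp_apply, one_mul, unitWeight, he,
      unitCoord_smul _ p.1 p.2 hx]
  rw [h2]
  have h3 : HasSum (fun _ : torsion K ↦ (1 : ℝ)) (torsionOrder K : ℝ) := by
    have := Fintype.ofFinite (torsion K)
    have h := hasSum_fintype (fun _ : torsion K ↦ (1 : ℝ))
    rwa [Finset.sum_const, nsmul_one, Finset.card_univ, ← Nat.card_eq_fintype_card] at h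
  have h4 := h3.mul_prod_of_nonneg h1 (fun _ ↦ zero_le_one)
    fun n ↦ Finset.prod_nonneg fun i _ ↦ tent_nonneg _
  generalize (torsionOrder K : ℝ) = c at h4 ⊢
  rwa [mul_one] at h4

theorem unitWeight_nonneg (x : mixedSpace K) : 0 ≤ unitWeight x :=
  Finset.prod_nonneg fun _ _ ↦ tent_nonneg _

theorem unitWeight_le_one (x : mixedSpace K) : unitWeight x ≤ 1 :=
  Finset.prod_le_one (fun _ _ ↦ tent_nonneg _) fun _ _ ↦ tent_le_one _

variable (K) in
theorem exists_norm_logMap_le :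
    ∃ B : ℝ, 0 < B ∧ ∀ x : mixedSpace K, unitWeight x ≠ 0 → ‖logMap x‖ ≤ B := by
  let b := (basisUnitLattice K).ofZLatticeBasis ℝ (unitLattice K)
  let f := LinearMap.toContinuousLinearMap b.equivFun.symm.toLinearMap
  refine ⟨‖f‖ + 1, by positivity, fun x hx ↦ ?_⟩
  have h1 : ‖b.equivFun (logMap x)‖ ≤ 1 := by
    rw [pi_norm_le_iff_of_nonneg zero_le_one]
    intro i
    by_contra! h
    exact hx (Finset.prod_eq_zero (Finset.mem_univ i) (tent_eq_zero h.le))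
  have h2 : logMap x = f (b.equivFun (logMap x)) := by simp [f]
  rw [h2]
  refine (f.le_opNorm _).trans ?_
  nlinarith [norm_nonneg f]

variable (K) in
theorem exists_abs_unitWeight_sub_le :
    ∃ A : ℝ, 0 < A ∧ ∀ x y : mixedSpace K,
      |unitWeight x - unitWeight y| ≤ A * ‖logMap x - logMap y‖ := by
  let b := (basisUnitLattice K).ofZLatticeBasis ℝ (unitLattice K)
  let f := LinearMap.toContinuousLinearMap b.equivFun.toLinearMap
  refine ⟨rank K * ‖f‖ + 1, by positivity, fun x y ↦ ?_⟩
  have h1 : ∀ z : ℝ, |tent z| ≤ 1 := fun z ↦ by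
    rw [abs_of_nonneg (tent_nonneg z)]; exact tent_le_one z
  calc |unitWeight x - unitWeight y|
      ≤ ∑ i, |tent (unitCoord i x) - tent (unitCoord i y)| :=
        abs_prod_sub_prod_le _ _ _ (fun _ ↦ h1 _) (fun _ ↦ h1 _)
    _ ≤ ∑ i : Fin (rank K), ‖f‖ * ‖logMap x - logMap y‖ := by
        refine Finset.sum_le_sum fun i _ ↦ (abs_tent_sub_le _ _).trans ?_
        refine le_trans ?_ (f.le_opNorm _)
        have : unitCoord i x - unitCoord i y = f (logMap x - logMap y) i := by
          simp [f, unitCoord, b]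
        rw [this, ← Real.norm_eq_abs]
        exact norm_le_pi_norm _ i
    _ = rank K * ‖f‖ * ‖logMap x - logMap y‖ := by simp; ring
    _ ≤ _ := by gcongr; linarith

end NumberField

namespace NumberField

open mixedEmbedding NumberField.Units NumberField.Units.dirichletUnitTheorem Module
open scoped Classical

variable {K : Type*} [Field K] [NumberField K]

theorem normAtPlace_le_norm (v : InfinitePlace K) (x : mixedSpace K) : normAtPlace v x ≤ ‖x‖ := by
  rw [norm_eq_sup'_normAtPlace]
  exact Finset.le_sup' (fun w ↦ normAtPlace w x) (Finset.mem_univ v)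

theorem abs_normAtPlace_sub_le (v : InfinitePlace K) (x y : mixedSpace K) :
    |normAtPlace v y - normAtPlace v x| ≤ ‖y - x‖ := by
  have h1 := normAtPlace_add_le v x (y - x)
  have h2 := normAtPlace_add_le v y (-(y - x))
  have h3 := normAtPlace_le_norm v (y - x)
  rw [normAtPlace_neg] at h2
  rw [add_sub_cancel] at h1
  rw [show y + -(y - x) = x by abel] at h2
  rw [abs_le]
  constructor <;> linarith

theorem log_mixedEmbedding_norm {x : mixedSpace K} (hx : mixedEmbedding.norm x ≠ 0) :
    Real.log (mixedEmbedding.norm x) = ∑ v, (v.mult : ℝ) * Real.log (normAtPlace v x) := by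
  rw [mixedEmbedding.norm_apply, Real.log_prod]
  · simp
  · exact fun v _ ↦ pow_ne_zero _ (mixedEmbedding.norm_ne_zero_iff.mp hx v)

theorem sum_mult_eq_finrank_real :
    ∑ v : InfinitePlace K, (v.mult : ℝ) = finrank ℚ K := by
  exact_mod_cast InfinitePlace.sum_mult_eq (K := K)

theorem abs_log_sub_log_le {m a b : ℝ} (hm : 0 < m) (ha : m ≤ a) (hb : m ≤ b) :
    |Real.log a - Real.log b| ≤ |a - b| / m := by
  have key : ∀ a b : ℝ, m ≤ a → m ≤ b → Real.log a - Real.log b ≤ |a - b| / m := by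
    intro a b ha hb
    have ha0 := hm.trans_le ha
    have hb0 := hm.trans_le hb
    rw [← Real.log_div ha0.ne' hb0.ne']
    calc Real.log (a / b) ≤ a / b - 1 := Real.log_le_sub_one_of_pos (by positivity)
      _ = (a - b) / b := by field_simp
      _ ≤ |a - b| / b := by gcongr; exact le_abs_self _
      _ ≤ |a - b| / m := by gcongr
  rw [abs_le]
  have h1 := key a b ha hb
  have h2 := key b a hb ha
  rw [abs_sub_comm b a] at h2
  constructor <;> linarith

theorem one_le_mult_real {K : Type*} [Field K] (v : InfinitePlace K) : (1 : ℝ) ≤ v.mult := by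
  exact_mod_cast InfinitePlace.mult_pos (w := v)

theorem mult_real_le_two {K : Type*} [Field K] (v : InfinitePlace K) : (v.mult : ℝ) ≤ 2 := by
  rw [InfinitePlace.mult]; split_ifs <;> norm_num

variable (K) in
theorem exists_mul_norm_le_normAtPlace :
    ∃ c : ℝ, 0 < c ∧ c ≤ 1 ∧ ∀ x : mixedSpace K, unitWeight x ≠ 0 → mixedEmbedding.norm x ≠ 0 →
      ∀ v, c * ‖x‖ ≤ normAtPlace v x := by
  obtain ⟨B, hB, h⟩ := exists_norm_logMap_le K
  let B' := (Fintype.card (InfinitePlace K) + 1) * B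
  have hB' : 0 < B' := by positivity
  refine ⟨Real.exp (-2 * B'), Real.exp_pos _, Real.exp_le_one_iff.mpr (by linarith),
    fun x hw hx ↦ ?_⟩
  let g : InfinitePlace K → ℝ := fun v ↦
    Real.log (normAtPlace v x) - Real.log (mixedEmbedding.norm x) * (finrank ℚ K : ℝ)⁻¹
  have hn : (finrank ℚ K : ℝ) ≠ 0 := Nat.cast_ne_zero.mpr finrank_pos.ne'
  have hsum : ∑ v, (v.mult : ℝ) * g v = 0 := by
    simp only [g, mul_sub, Finset.sum_sub_distrib, ← Finset.sum_mul, sum_mult_eq_finrank_real,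
      ← log_mixedEmbedding_norm hx]
    field_simp
    ring
  have hg : ∀ v, v ≠ w₀ → |v.mult * g v| ≤ B := fun v hv ↦
    (norm_le_pi_norm (logMap x) ⟨v, hv⟩).trans (h x hw)
  have habs : ∀ v, |g v| ≤ |v.mult * g v| := fun v ↦ by
    rw [abs_mul, abs_of_nonneg (by positivity : (0 : ℝ) ≤ v.mult)]
    exact le_mul_of_one_le_left (abs_nonneg _) (one_le_mult_real v)
  have hall : ∀ v, |g v| ≤ B' := by
    intro v
    refine (habs v).trans ?_
    by_cases hv : v = w₀
    · have h1 : (v.mult : ℝ) * g v = -∑ w ∈ Finset.univ.erase v, (w.mult : ℝ) * g w := by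
        rw [← Finset.add_sum_erase _ _ (Finset.mem_univ v)] at hsum
        linarith
      rw [h1, abs_neg]
      calc |∑ w ∈ Finset.univ.erase v, (w.mult : ℝ) * g w|
          ≤ ∑ w ∈ Finset.univ.erase v, |(w.mult : ℝ) * g w| := Finset.abs_sum_le_sum_abs _ _
        _ ≤ ∑ w ∈ Finset.univ.erase v, B :=
            Finset.sum_le_sum fun w hw ↦ hg w (hv ▸ Finset.ne_of_mem_erase hw)
        _ ≤ ∑ w : InfinitePlace K, B :=
            Finset.sum_le_sum_of_subset_of_nonneg (Finset.subset_univ _) fun _ _ _ ↦ hB.le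
        _ = Fintype.card (InfinitePlace K) * B := by simp
        _ ≤ B' := by simp only [B']; nlinarith
    · refine (hg v hv).trans ?_
      simp only [B']
      exact le_mul_of_one_le_left hB.le (by simp)
  have hpos : ∀ v, 0 < normAtPlace v x := fun v ↦
    lt_of_le_of_ne (normAtPlace_nonneg v x) (mixedEmbedding.norm_ne_zero_iff.mp hx v).symm
  intro v
  obtain ⟨v₁, -, hv₁⟩ := Finset.exists_mem_eq_sup' (f := fun w ↦ normAtPlace w x)
    (Finset.univ_nonempty (α := InfinitePlace K))
  rw [norm_eq_sup'_normAtPlace, hv₁, ← Real.exp_log (hpos v₁), ← Real.exp_add,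
    ← Real.le_log_iff_exp_le (hpos v)]
  have h1 := abs_le.mp (hall v)
  have h2 := abs_le.mp (hall v₁)
  simp only [g] at h1 h2
  linarith

/-- The weighted power of the norm whose sum over the nonzero elements of an ideal is a partial
zeta function. -/
noncomputable def normKernel (s : ℝ) (x : mixedSpace K) : ℝ :=
  unitWeight x * mixedEmbedding.norm x ^ (-s)

theorem pow_le_mixedEmbedding_norm {m : ℝ} (hm : 0 ≤ m) {x : mixedSpace K}
    (h : ∀ v, m ≤ normAtPlace v x) : m ^ finrank ℚ K ≤ mixedEmbedding.norm x := by
  rw [mixedEmbedding.norm_apply, ← InfinitePlace.sum_mult_eq, ← Finset.prod_pow_eq_pow_sum]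
  exact Finset.prod_le_prod (fun _ _ ↦ by positivity) fun v _ ↦ pow_le_pow_left₀ hm (h v) _

theorem abs_log_norm_sub_le {m D : ℝ} (hm : 0 < m) {x y : mixedSpace K} (hD : ‖y - x‖ ≤ D)
    (hx : ∀ v, m ≤ normAtPlace v x) (hy : ∀ v, m ≤ normAtPlace v y) :
    |Real.log (mixedEmbedding.norm y) - Real.log (mixedEmbedding.norm x)| ≤
      finrank ℚ K * (D / m) := by
  rw [log_mixedEmbedding_norm (mixedEmbedding.norm_ne_zero_iff.mpr
      fun v ↦ (hm.trans_le (hx v)).ne'), log_mixedEmbedding_norm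
      (mixedEmbedding.norm_ne_zero_iff.mpr fun v ↦ (hm.trans_le (hy v)).ne'),
      ← Finset.sum_sub_distrib, ← sum_mult_eq_finrank_real, Finset.sum_mul]
  refine (Finset.abs_sum_le_sum_abs _ _).trans (Finset.sum_le_sum fun v _ ↦ ?_)
  rw [← mul_sub, abs_mul, Nat.abs_cast]
  gcongr
  refine (abs_log_sub_log_le hm (hy v) (hx v)).trans ?_
  gcongr
  exact (abs_normAtPlace_sub_le v x y).trans hD

theorem norm_logMap_sub_le {m D : ℝ} (hm : 0 < m) {x y : mixedSpace K} (hD : ‖y - x‖ ≤ D)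
    (hx : ∀ v, m ≤ normAtPlace v x) (hy : ∀ v, m ≤ normAtPlace v y) :
    ‖logMap y - logMap x‖ ≤ 4 * (D / m) := by
  have hD0 : 0 ≤ D := (norm_nonneg _).trans hD
  rw [pi_norm_le_iff_of_nonneg (by positivity)]
  intro v
  have hn : (0 : ℝ) < finrank ℚ K := Nat.cast_pos.mpr finrank_pos
  have h1 := abs_log_norm_sub_le hm hD hx hy
  have h2 : |Real.log (normAtPlace v.1 y) - Real.log (normAtPlace v.1 x)| ≤ D / m := by
    refine (abs_log_sub_log_le hm (hy v) (hx v)).trans ?_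
    gcongr
    exact (abs_normAtPlace_sub_le v.1 x y).trans hD
  have h3 : (logMap y - logMap x) v = v.1.mult *
      ((Real.log (normAtPlace v.1 y) - Real.log (normAtPlace v.1 x)) -
      (Real.log (mixedEmbedding.norm y) - Real.log (mixedEmbedding.norm x)) *
        (finrank ℚ K : ℝ)⁻¹) := by
    simp only [Pi.sub_apply, logMap_apply]; ring
  rw [h3, Real.norm_eq_abs, abs_mul, Nat.abs_cast]
  have h4 : |(Real.log (mixedEmbedding.norm y) - Real.log (mixedEmbedding.norm x)) *
      (finrank ℚ K : ℝ)⁻¹| ≤ D / m := by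
    rw [abs_mul, abs_of_pos (inv_pos.mpr hn), ← div_eq_mul_inv, div_le_iff₀ hn]
    linarith
  calc (v.1.mult : ℝ) * _ ≤ 2 * (D / m + D / m) := by
        gcongr
        · exact mult_real_le_two _
        · exact (abs_sub _ _).trans (add_le_add h2 h4)
    _ = _ := by ring

theorem abs_exp_sub_exp_le {a b M : ℝ} (ha : a ≤ M) (hb : b ≤ M) :
    |Real.exp a - Real.exp b| ≤ Real.exp M * |a - b| := by
  have key : ∀ a b : ℝ, a ≤ M → Real.exp a - Real.exp b ≤ Real.exp M * |a - b| := by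
    intro a b ha
    have h1 : Real.exp b = Real.exp a * Real.exp (b - a) := by rw [← Real.exp_add]; ring_nf
    have h2 := Real.add_one_le_exp (b - a)
    have h3 : Real.exp a - Real.exp b ≤ Real.exp a * (a - b) := by
      rw [h1]; nlinarith [Real.exp_pos a]
    refine h3.trans ?_
    calc Real.exp a * (a - b) ≤ Real.exp a * |a - b| := by gcongr; exact le_abs_self _
      _ ≤ _ := by gcongr
  rw [abs_le]
  have h1 := key a b ha
  have h2 := key b a hb
  rw [abs_sub_comm b a] at h2
  constructor <;> linarith

theorem mixedEmbedding_norm_rpow_le {m s : ℝ} (hm : 1 ≤ m) (hs : 1 ≤ s) {x : mixedSpace K}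
    (h : ∀ v, m ≤ normAtPlace v x) :
    mixedEmbedding.norm x ^ (-s) ≤ (m ^ finrank ℚ K)⁻¹ := by
  have h1 := pow_le_mixedEmbedding_norm (zero_le_one.trans hm) h
  have h2 : 1 ≤ m ^ finrank ℚ K := one_le_pow₀ hm
  rw [Real.rpow_neg (by linarith)]
  gcongr
  exact h1.trans (Real.self_le_rpow_of_one_le (h2.trans h1) hs)

variable (K) in
theorem exists_abs_normKernel_sub_le :
    ∃ A : ℝ, 0 < A ∧ ∀ (m D s : ℝ) (x y : mixedSpace K), 1 ≤ m → 1 ≤ s → s ≤ 2 → ‖y - x‖ ≤ D →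
      (∀ v, m ≤ normAtPlace v x) → (∀ v, m ≤ normAtPlace v y) →
      |normKernel s y - normKernel s x| ≤ A * D * (m ^ (finrank ℚ K + 1))⁻¹ := by
  obtain ⟨A, hA, h⟩ := exists_abs_unitWeight_sub_le K
  refine ⟨4 * A + 2 * finrank ℚ K, by positivity, fun m D s x y hm hs hs' hD hx hy ↦ ?_⟩
  have hm0 : 0 < m := by linarith
  have hD0 : 0 ≤ D := (norm_nonneg _).trans hD
  have hxp : 0 < mixedEmbedding.norm x :=
    (pow_pos hm0 _).trans_le (pow_le_mixedEmbedding_norm hm0.le hx)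
  have hyp : 0 < mixedEmbedding.norm y :=
    (pow_pos hm0 _).trans_le (pow_le_mixedEmbedding_norm hm0.le hy)
  have h1 := mixedEmbedding_norm_rpow_le hm hs hx
  have h2 := mixedEmbedding_norm_rpow_le hm hs hy
  have hP : 0 < (m ^ finrank ℚ K)⁻¹ := by positivity
  have h3 : |mixedEmbedding.norm y ^ (-s) - mixedEmbedding.norm x ^ (-s)| ≤
      (m ^ finrank ℚ K)⁻¹ * (2 * (finrank ℚ K * (D / m))) := by
    have e : ∀ z : ℝ, 0 < z → z ^ (-s) = Real.exp (Real.log z * -s) := fun z hz ↦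
      Real.rpow_def_of_pos hz _
    rw [e _ hxp] at h1 ⊢
    rw [e _ hyp] at h2 ⊢
    have h5 := abs_exp_sub_exp_le ((Real.le_log_iff_exp_le hP).mpr h2)
      ((Real.le_log_iff_exp_le hP).mpr h1)
    rw [Real.exp_log hP] at h5
    refine h5.trans ?_
    rw [← sub_mul, abs_mul, abs_neg, abs_of_nonneg (by linarith : 0 ≤ s), mul_comm _ s]
    gcongr
    exact abs_log_norm_sub_le hm0 hD hx hy
  have h4 : normKernel s y - normKernel s x = (unitWeight y - unitWeight x) *
      mixedEmbedding.norm y ^ (-s) + unitWeight x *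
      (mixedEmbedding.norm y ^ (-s) - mixedEmbedding.norm x ^ (-s)) := by
    simp only [normKernel]; ring
  rw [h4]
  calc _ ≤ |unitWeight y - unitWeight x| * |mixedEmbedding.norm y ^ (-s)| + |unitWeight x| *
        |mixedEmbedding.norm y ^ (-s) - mixedEmbedding.norm x ^ (-s)| := by
        rw [← abs_mul, ← abs_mul]; exact abs_add_le _ _
    _ ≤ (A * (4 * (D / m))) * (m ^ finrank ℚ K)⁻¹ +
        1 * ((m ^ finrank ℚ K)⁻¹ * (2 * (finrank ℚ K * (D / m)))) := by
        gcongr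
        · exact (h y x).trans (by gcongr; exact norm_logMap_sub_le hm0 hD hx hy)
        · rwa [abs_of_nonneg (Real.rpow_nonneg hyp.le _)]
        · rw [abs_of_nonneg (unitWeight_nonneg x)]; exact unitWeight_le_one x
    _ = _ := by
        rw [pow_succ]; field_simp

theorem normKernel_nonneg (s : ℝ) (x : mixedSpace K) : 0 ≤ normKernel s x :=
  mul_nonneg (unitWeight_nonneg x) (Real.rpow_nonneg (mixedEmbedding.norm_nonneg x) _)

theorem normKernel_eq_zero {s : ℝ} (hs : 1 ≤ s) {x : mixedSpace K}
    (h : mixedEmbedding.norm x = 0) : normKernel s x = 0 := by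
  rw [normKernel, h, Real.zero_rpow (by linarith), mul_zero]

theorem normKernel_le_one {s : ℝ} (hs : 0 ≤ s) {x : mixedSpace K}
    (h : 1 ≤ mixedEmbedding.norm x) : normKernel s x ≤ 1 := by
  have h1 : mixedEmbedding.norm x ^ (-s) ≤ 1 := Real.rpow_le_one_of_one_le_of_nonpos h (by linarith)
  exact mul_le_one₀ (unitWeight_le_one x) (Real.rpow_nonneg (by linarith) _) h1

variable (K) in
theorem exists_normKernel_sub_le_norm_pow (D : ℝ) (hD : 0 ≤ D) :
    ∃ C R : ℝ, 0 < C ∧ 0 < R ∧ ∀ (s : ℝ) (x y : mixedSpace K), 1 ≤ s → s ≤ 2 → ‖y - x‖ ≤ D →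
      R ≤ ‖x‖ → |normKernel s y - normKernel s x| ≤ C * (‖x‖ ^ (finrank ℚ K + 1))⁻¹ := by
  obtain ⟨c, hc, hc1, hcone⟩ := exists_mul_norm_le_normAtPlace K
  obtain ⟨A, hA, h⟩ := exists_abs_normKernel_sub_le K
  refine ⟨A * D * ((c / 2) ^ (finrank ℚ K + 1))⁻¹ + 1, (4 * D + 2) / c, by positivity,
    by positivity, fun s x y hs hs' hxy hR ↦ ?_⟩
  rw [div_le_iff₀ hc] at hR
  have hnx : 0 < ‖x‖ := by
    by_contra! h0
    nlinarith
  have main : (∀ v, c / 2 * ‖x‖ ≤ normAtPlace v x) → (∀ v, c / 2 * ‖x‖ ≤ normAtPlace v y) →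
      |normKernel s y - normKernel s x| ≤
        (A * D * ((c / 2) ^ (finrank ℚ K + 1))⁻¹ + 1) * (‖x‖ ^ (finrank ℚ K + 1))⁻¹ := by
    intro hx hy
    refine (h (c / 2 * ‖x‖) D s x y (by linarith) hs hs' hxy hx hy).trans ?_
    rw [mul_pow, mul_inv, ← mul_assoc]
    gcongr
    linarith
  have hnonneg : 0 ≤ (A * D * ((c / 2) ^ (finrank ℚ K + 1))⁻¹ + 1) *
      (‖x‖ ^ (finrank ℚ K + 1))⁻¹ := by positivity
  have hv : ∀ v, |normAtPlace v y - normAtPlace v x| ≤ D := fun v ↦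
    (abs_normAtPlace_sub_le v x y).trans hxy
  by_cases hx : unitWeight x ≠ 0 ∧ mixedEmbedding.norm x ≠ 0
  · have h1 := hcone x hx.1 hx.2
    refine main (fun v ↦ ?_) (fun v ↦ ?_)
    · linarith [h1 v, mul_pos hc hnx]
    · linarith [h1 v, (abs_le.mp (hv v)).1]
  by_cases hy : unitWeight y ≠ 0 ∧ mixedEmbedding.norm y ≠ 0
  · have h1 := hcone y hy.1 hy.2
    have h2 : ‖x‖ - D ≤ ‖y‖ := by
      have := norm_sub_norm_le x y
      rw [norm_sub_rev] at this
      linarith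
    have h3 : c * ‖x‖ - D ≤ c * ‖y‖ := by
      have := mul_le_mul_of_nonneg_left h2 hc.le
      have := mul_le_mul_of_nonneg_right hc1 hD
      linarith
    refine main (fun v ↦ ?_) (fun v ↦ ?_)
    · linarith [h1 v, (abs_le.mp (hv v)).2]
    · linarith [h1 v]
  have key : ∀ z : mixedSpace K, ¬(unitWeight z ≠ 0 ∧ mixedEmbedding.norm z ≠ 0) →
      normKernel s z = 0 := by
    intro z hz
    by_cases hw : unitWeight z = 0
    · rw [normKernel, hw, zero_mul]
    · exact normKernel_eq_zero hs (not_not.mp fun h ↦ hz ⟨hw, h⟩)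
  rw [key x hx, key y hy]
  simpa using hnonneg

variable (K) in
theorem exists_normKernel_le_norm_rpow (s : ℝ) (hs : 1 ≤ s) :
    ∃ C : ℝ, 0 < C ∧ ∀ x : mixedSpace K, normKernel s x ≤ C * ‖x‖ ^ (-(finrank ℚ K * s)) := by
  obtain ⟨c, hc, hc1, hcone⟩ := exists_mul_norm_le_normAtPlace K
  refine ⟨c ^ (-(finrank ℚ K * s)), by positivity, fun x ↦ ?_⟩
  have hnonneg : 0 ≤ c ^ (-(finrank ℚ K * s)) * ‖x‖ ^ (-(finrank ℚ K * s)) := by positivity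
  by_cases hw : unitWeight x = 0
  · rwa [normKernel, hw, zero_mul]
  by_cases hx : mixedEmbedding.norm x = 0
  · rwa [normKernel_eq_zero hs hx]
  have h0 : x ≠ 0 := by rintro rfl; simp at hx
  have h1 := pow_le_mixedEmbedding_norm (by positivity) (hcone x hw hx)
  have h2 : 0 < c * ‖x‖ := mul_pos hc (norm_pos_iff.mpr h0)
  calc normKernel s x ≤ 1 * mixedEmbedding.norm x ^ (-s) := by
        rw [normKernel]
        exact mul_le_mul_of_nonneg_right (unitWeight_le_one x)
          (Real.rpow_nonneg (mixedEmbedding.norm_nonneg x) _)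
    _ ≤ ((c * ‖x‖) ^ finrank ℚ K) ^ (-s) := by
        rw [one_mul]
        exact Real.rpow_le_rpow_of_nonpos (pow_pos h2 _) h1 (by linarith)
    _ = _ := by
        rw [← Real.rpow_natCast, ← Real.rpow_mul h2.le, Real.mul_rpow hc.le (norm_nonneg x)]
        ring_nf

end NumberField

namespace NumberField

open mixedEmbedding NumberField.Units NumberField.Units.dirichletUnitTheorem Module
open scoped Classical nonZeroDivisors

variable {K : Type*} [Field K] [NumberField K]

theorem summable_norm_mixedEmbedding_rpow {r : ℝ} (hr : r < -finrank ℚ K) :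
    Summable fun z : 𝓞 K ↦ ‖mixedEmbedding K (z : K)‖ ^ r := by
  have h1 : finrank ℤ (mixedEmbedding.integerLattice K) = finrank ℚ K := by
    rw [ZLattice.rank ℝ, mixedEmbedding.finrank]
  have h2 := ZLattice.summable_norm_rpow (mixedEmbedding.integerLattice K) r (by rwa [h1])
  let φ : 𝓞 K → mixedEmbedding.integerLattice K := fun z ↦ ⟨mixedEmbedding K (z : K), z, rfl⟩
  have hφ : Function.Injective φ := fun x y hxy ↦
    RingOfIntegers.ext (mixedEmbedding_injective K (congrArg Subtype.val hxy))
  exact (h2.comp_injective hφ).congr fun z ↦ by rw [Function.comp_apply, Submodule.coe_norm]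

theorem one_le_norm_mixedEmbedding {z : 𝓞 K} (hz : z ≠ 0) :
    1 ≤ mixedEmbedding.norm (mixedEmbedding K (z : K)) := by
  rw [mixedEmbedding.norm_eq_norm, ← Algebra.coe_norm_int]
  exact_mod_cast Int.one_le_abs (Algebra.norm_ne_zero_iff.mpr hz)

/-- The restriction of `normKernel` to the ring of integers. -/
noncomputable def intKernel (s : ℝ) (z : 𝓞 K) : ℝ := normKernel s (mixedEmbedding K (z : K))

theorem intKernel_nonneg (s : ℝ) (z : 𝓞 K) : 0 ≤ intKernel s z := normKernel_nonneg _ _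

theorem intKernel_zero {s : ℝ} (hs : 1 ≤ s) : intKernel s (0 : 𝓞 K) = 0 :=
  normKernel_eq_zero hs (by simp)

theorem intKernel_le_one {s : ℝ} (hs : 1 ≤ s) (z : 𝓞 K) : intKernel s z ≤ 1 := by
  by_cases hz : z = 0
  · rw [hz, intKernel_zero hs]; exact zero_le_one
  · exact normKernel_le_one (by linarith) (one_le_norm_mixedEmbedding hz)

theorem summable_intKernel {s : ℝ} (hs : 1 < s) : Summable (intKernel (K := K) s) := by
  obtain ⟨C, -, h⟩ := exists_normKernel_le_norm_rpow K s hs.le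
  refine Summable.of_nonneg_of_le (intKernel_nonneg s) (fun z ↦ h _)
    ((summable_norm_mixedEmbedding_rpow ?_).mul_left C)
  have : (0 : ℝ) < finrank ℚ K := Nat.cast_pos.mpr finrank_pos
  nlinarith

theorem exists_summable_abs_intKernel_sub_le (δ : 𝓞 K) :
    ∃ G : 𝓞 K → ℝ, Summable G ∧ ∀ s : ℝ, 1 ≤ s → s ≤ 2 → ∀ z : 𝓞 K,
      |intKernel s (δ + z) - intKernel s z| ≤ G z := by
  obtain ⟨C, R, hC, hR, h⟩ := exists_normKernel_sub_le_norm_pow K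
    ‖mixedEmbedding K (δ : K)‖ (norm_nonneg _)
  have h1 : Summable fun z : 𝓞 K ↦ (‖mixedEmbedding K (z : K)‖ ^ (finrank ℚ K + 1))⁻¹ := by
    have := summable_norm_mixedEmbedding_rpow (K := K) (r := -((finrank ℚ K + 1 : ℕ) : ℝ))
      (by push_cast; linarith)
    refine this.congr fun z ↦ ?_
    rw [Real.rpow_neg (norm_nonneg _), Real.rpow_natCast]
  refine ⟨fun z ↦ (C + R ^ (finrank ℚ K + 1)) *
    (‖mixedEmbedding K (z : K)‖ ^ (finrank ℚ K + 1))⁻¹ + if z = 0 then 1 else 0,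
    (h1.mul_left _).add (hasSum_ite_eq 0 1).summable, fun s hs hs' z ↦ ?_⟩
  have hle : |intKernel s (δ + z) - intKernel s z| ≤ 1 := by
    rw [abs_le]
    have := intKernel_le_one hs (δ + z)
    have := intKernel_le_one hs z
    have := intKernel_nonneg s (δ + z)
    have := intKernel_nonneg s z
    constructor <;> linarith
  beta_reduce
  by_cases hz : z = 0
  · rw [if_pos hz]
    refine hle.trans ?_
    have : 0 ≤ (C + R ^ (finrank ℚ K + 1)) *
      (‖mixedEmbedding K (z : K)‖ ^ (finrank ℚ K + 1))⁻¹ := by positivity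
    linarith
  rw [if_neg hz, add_zero, add_mul]
  have hz' : 0 < ‖mixedEmbedding K (z : K)‖ := by
    rw [norm_pos_iff]
    exact (map_ne_zero_iff _ (mixedEmbedding_injective K)).mpr (by simpa using hz)
  by_cases hzR : R ≤ ‖mixedEmbedding K (z : K)‖
  · have h2 := h s (mixedEmbedding K (z : K)) (mixedEmbedding K ((δ + z : 𝓞 K) : K)) hs hs'
      (by
        have h3 : ((δ + z : 𝓞 K) : K) = (δ : K) + z := map_add (algebraMap (𝓞 K) K) δ z
        rw [h3, map_add, add_sub_cancel_right]) hzR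
    refine h2.trans ?_
    have : 0 ≤ R ^ (finrank ℚ K + 1) * (‖mixedEmbedding K (z : K)‖ ^ (finrank ℚ K + 1))⁻¹ := by
      positivity
    linarith
  · have h3 : 1 ≤ R ^ (finrank ℚ K + 1) * (‖mixedEmbedding K (z : K)‖ ^ (finrank ℚ K + 1))⁻¹ := by
      rw [← div_eq_mul_inv, one_le_div (by positivity)]
      exact pow_le_pow_left₀ hz'.le (not_le.mp hzR).le _
    have : 0 ≤ C * (‖mixedEmbedding K (z : K)‖ ^ (finrank ℚ K + 1))⁻¹ := by positivity
    linarith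

theorem exists_abs_tsum_sub_absNorm_mul_tsum_le (J : Ideal (𝓞 K)) (hJ : J ≠ ⊥) :
    ∃ C : ℝ, ∀ s : ℝ, 1 < s → s ≤ 2 →
      |∑' z : 𝓞 K, intKernel s z - Ideal.absNorm J * ∑' z : J, intKernel s (z : 𝓞 K)| ≤ C := by
  have := Ideal.finiteQuotientOfFreeOfNeBot J hJ
  have := Fintype.ofFinite (𝓞 K ⧸ J)
  choose G hG hGle using exists_summable_abs_intKernel_sub_le (K := K)
  let e : ((𝓞 K ⧸ J) × J) → 𝓞 K := fun p ↦ Quotient.out p.1 + p.2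
  have hout : ∀ q : 𝓞 K ⧸ J, Ideal.Quotient.mk J (Quotient.out q) = q := fun q ↦
    Quotient.out_eq' q
  have he : Function.Bijective e := by
    constructor
    · rintro ⟨q, x⟩ ⟨q', x'⟩ h
      have h1 := congrArg (Ideal.Quotient.mk J) h
      simp only [e, map_add, hout, Ideal.Quotient.eq_zero_iff_mem.mpr x.2,
        Ideal.Quotient.eq_zero_iff_mem.mpr x'.2, add_zero] at h1
      subst h1
      simpa [e] using h
    · intro z
      refine ⟨⟨Ideal.Quotient.mk J z, z - Quotient.out (Ideal.Quotient.mk J z), ?_⟩, by simp [e]⟩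
      rw [← Ideal.Quotient.eq_zero_iff_mem, map_sub, hout, sub_self]
  refine ⟨∑ q : 𝓞 K ⧸ J, ∑' z : J, G (Quotient.out q) z, fun s hs hs' ↦ ?_⟩
  have hsum := summable_intKernel (K := K) hs
  have hsum2 : ∀ δ : 𝓞 K, Summable fun z : J ↦ intKernel s (δ + (z : 𝓞 K)) := fun δ ↦
    hsum.comp_injective (i := fun z : J ↦ δ + (z : 𝓞 K))
      fun x y h ↦ Subtype.ext (add_left_cancel h)
  have hsum3 : Summable fun z : J ↦ intKernel s (z : 𝓞 K) :=
    hsum.comp_injective Subtype.val_injective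
  have h1 : ∑' z : 𝓞 K, intKernel s z =
      ∑ q : 𝓞 K ⧸ J, ∑' z : J, intKernel s (Quotient.out q + (z : 𝓞 K)) := by
    rw [← (Equiv.ofBijective e he).tsum_eq, Summable.tsum_prod, tsum_fintype]
    · rfl
    · exact hsum.comp_injective he.injective
  have h2 : (Ideal.absNorm J : ℝ) = ∑ q : 𝓞 K ⧸ J, (1 : ℝ) := by
    rw [Ideal.absNorm_apply, Submodule.cardQuot_apply, Nat.card_eq_fintype_card]
    simp
  rw [h1, h2, Finset.sum_mul, ← Finset.sum_sub_distrib]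
  refine (Finset.abs_sum_le_sum_abs _ _).trans (Finset.sum_le_sum fun q _ ↦ ?_)
  rw [one_mul, ← (hsum2 _).tsum_sub hsum3]
  have hG' : Summable fun z : J ↦ G (Quotient.out q) (z : 𝓞 K) :=
    (hG (Quotient.out q)).comp_injective Subtype.val_injective
  rw [← Real.norm_eq_abs]
  exact tsum_of_norm_bounded hG'.hasSum fun z ↦ hGle _ s hs.le hs' z

theorem hasSum_intKernel_units_mul {s : ℝ} (g : 𝓞 K) (hg : g ≠ 0) :
    HasSum (fun u : (𝓞 K)ˣ ↦ intKernel s ((u : 𝓞 K) * g))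
      (torsionOrder K * (Ideal.absNorm (Ideal.span {g}) : ℝ) ^ (-s)) := by
  have h1 : mixedEmbedding.norm (mixedEmbedding K (g : K)) = Ideal.absNorm (Ideal.span {g}) := by
    rw [mixedEmbedding.norm_eq_norm, ← Algebra.coe_norm_int, Ideal.absNorm_span_singleton,
      ← Int.cast_natCast, Int.natCast_natAbs, ← Int.cast_abs, Rat.cast_intCast]
  have h2 : mixedEmbedding.norm (mixedEmbedding K (g : K)) ≠ 0 :=
    (zero_lt_one.trans_le (one_le_norm_mixedEmbedding hg)).ne'
  have h3 := (hasSum_unitWeight_smul h2).mul_right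
    (mixedEmbedding.norm (mixedEmbedding K (g : K)) ^ (-s))
  rw [h1] at h3
  refine h3.congr_fun fun u ↦ ?_
  have h4 : mixedEmbedding K ((u * g : 𝓞 K) : K) = u • mixedEmbedding K (g : K) :=
    (unit_smul_eq_iff_mul_eq.mpr rfl).symm
  rw [intKernel, h4, normKernel, norm_unit_smul, h1]

theorem hasSum_absNorm_rpow_of_class {s : ℝ} (hs : 1 < s) (C : ClassGroup (𝓞 K))
    (J : (Ideal (𝓞 K))⁰) (hJ : ClassGroup.mk0 J = C⁻¹) :
    HasSum (fun I : {I : (Ideal (𝓞 K))⁰ // ClassGroup.mk0 I = C} ↦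
        (torsionOrder K : ℝ) * (Ideal.absNorm (I.1 * J : Ideal (𝓞 K)) : ℝ) ^ (-s))
      (∑' z : (J : Ideal (𝓞 K)), intKernel s (z : 𝓞 K)) := by
  have hgen : ∀ I : {I : (Ideal (𝓞 K))⁰ // ClassGroup.mk0 I = C}, ∃ g : 𝓞 K,
      (I.1 * J : Ideal (𝓞 K)) = Ideal.span {g} := by
    intro I
    have h1 : ClassGroup.mk0 (I.1 * J) = 1 := by rw [map_mul, I.2, hJ, mul_inv_cancel]
    exact ((ClassGroup.mk0_eq_one_iff (I.1 * J).2).mp h1).principal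
  choose g hg using hgen
  have hg0 : ∀ I, g I ≠ 0 := by
    intro I h
    have h1 := nonZeroDivisors.coe_ne_zero (I.1 * J)
    rw [Submonoid.coe_mul, hg, h] at h1
    simp at h1
  let φ : {I : (Ideal (𝓞 K))⁰ // ClassGroup.mk0 I = C} × (𝓞 K)ˣ → (J : Ideal (𝓞 K)) :=
    fun p ↦ ⟨p.2 * g p.1, Ideal.mul_mem_left _ _ (Ideal.mul_le_right
      (I := (p.1.1 : Ideal (𝓞 K))) (by rw [hg]; exact Ideal.mem_span_singleton_self _))⟩
  have hspan : ∀ p, Ideal.span {(φ p : 𝓞 K)} = p.1.1 * J := fun p ↦ by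
    rw [hg, Ideal.span_singleton_eq_span_singleton]
    exact (associated_unit_mul_left _ _ p.2.isUnit)
  have hφ : Function.Injective φ := by
    rintro ⟨I, u⟩ ⟨I', u'⟩ h
    have h1 := (hspan ⟨I, u⟩).symm.trans
      ((congrArg (fun z : (J : Ideal (𝓞 K)) ↦ Ideal.span {(z : 𝓞 K)}) h).trans (hspan ⟨I', u'⟩))
    have h2 : I = I' := Subtype.ext (Subtype.ext
      (mul_right_cancel₀ (nonZeroDivisors.coe_ne_zero J) h1))
    subst h2
    have h3 : (u : 𝓞 K) * g I = u' * g I := congrArg Subtype.val h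
    rw [Units.ext (mul_right_cancel₀ (hg0 I) h3)]
  have hrange : ∀ z ∉ Set.range φ, intKernel s ((z : (J : Ideal (𝓞 K))) : 𝓞 K) = 0 := by
    intro z hz
    by_cases h0 : (z : 𝓞 K) = 0
    · rw [h0, intKernel_zero hs.le]
    exfalso
    have hle : Ideal.span {(z : 𝓞 K)} ≤ J := (Ideal.span_singleton_le_iff_mem _).mpr z.2
    obtain ⟨I, hI⟩ := Ideal.dvd_iff_le.mpr hle
    have hI0 : I ≠ ⊥ := by
      rintro rfl
      rw [Ideal.mul_bot, Ideal.span_singleton_eq_bot] at hI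
      exact h0 hI
    let I' : (Ideal (𝓞 K))⁰ := ⟨I, mem_nonZeroDivisors_of_ne_zero hI0⟩
    have hmem : ((J * I' : (Ideal (𝓞 K))⁰) : Ideal (𝓞 K)) = Ideal.span {(z : 𝓞 K)} := hI.symm
    have hC : ClassGroup.mk0 I' = C := by
      have h1 : ClassGroup.mk0 (J * I') = 1 := by
        refine (ClassGroup.mk0_eq_one_iff (J * I').2).mpr ?_
        rw [hmem]
        exact ⟨_, rfl⟩
      rw [map_mul, hJ, inv_mul_eq_one] at h1
      exact h1.symm
    have h2 : Ideal.span {g ⟨I', hC⟩} = Ideal.span {(z : 𝓞 K)} := by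
      rw [← hg, ← hmem, Submonoid.coe_mul, mul_comm]
    rw [Ideal.span_singleton_eq_span_singleton] at h2
    obtain ⟨u, hu⟩ := h2
    exact hz ⟨⟨⟨I', hC⟩, u⟩, Subtype.ext (by rw [← hu, mul_comm])⟩
  have hsum : Summable fun z : (J : Ideal (𝓞 K)) ↦ intKernel s (z : 𝓞 K) :=
    (summable_intKernel hs).comp_injective Subtype.val_injective
  refine ((hφ.hasSum_iff hrange).mpr hsum.hasSum).prod_fiberwise fun I ↦ ?_
  rw [hg]
  exact hasSum_intKernel_units_mul (g I) (hg0 I)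

end NumberField

namespace NumberField

open mixedEmbedding NumberField.Units NumberField.Units.dirichletUnitTheorem Module Filter Topology
open scoped Classical nonZeroDivisors

variable {K : Type*} [Field K] [NumberField K]

theorem one_le_absNorm (I : (Ideal (𝓞 K))⁰) : 1 ≤ Ideal.absNorm (I : Ideal (𝓞 K)) :=
  Nat.one_le_iff_ne_zero.mpr (Ideal.absNorm_ne_zero_of_nonZeroDivisors I)

theorem hasSum_absNorm_rpow_class {s : ℝ} (hs : 1 < s) (C : ClassGroup (𝓞 K))
    (J : (Ideal (𝓞 K))⁰) (hJ : ClassGroup.mk0 J = C⁻¹) :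
    HasSum (fun I : {I : (Ideal (𝓞 K))⁰ // ClassGroup.mk0 I = C} ↦
        (Ideal.absNorm (I.1 : Ideal (𝓞 K)) : ℝ) ^ (-s))
      ((torsionOrder K : ℝ)⁻¹ * (Ideal.absNorm (J : Ideal (𝓞 K)) : ℝ) ^ s *
        ∑' z : (J : Ideal (𝓞 K)), intKernel s (z : 𝓞 K)) := by
  have hτ : (torsionOrder K : ℝ) ≠ 0 := Nat.cast_ne_zero.mpr (torsionOrder_ne_zero K)
  have hN : 0 < (Ideal.absNorm (J : Ideal (𝓞 K)) : ℝ) := Nat.cast_pos.mpr (one_le_absNorm J)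
  refine ((hasSum_absNorm_rpow_of_class hs C J hJ).mul_left _).congr_fun fun I ↦ ?_
  rw [map_mul, Nat.cast_mul, Real.mul_rpow (Nat.cast_nonneg _) (Nat.cast_nonneg _),
    Real.rpow_neg hN.le]
  field_simp

theorem summable_absNorm_rpow {s : ℝ} (hs : 1 < s) :
    Summable fun I : (Ideal (𝓞 K))⁰ ↦ (Ideal.absNorm (I : Ideal (𝓞 K)) : ℝ) ^ (-s) := by
  rw [← (Equiv.sigmaFiberEquiv (ClassGroup.mk0 (R := 𝓞 K))).summable_iff,
    summable_sigma_of_nonneg fun _ ↦ by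
      simp only [Function.comp_apply]; exact Real.rpow_nonneg (Nat.cast_nonneg _) _]
  refine ⟨fun C ↦ ?_, Summable.of_finite⟩
  obtain ⟨J, hJ⟩ := ClassGroup.mk0_surjective C⁻¹
  exact (hasSum_absNorm_rpow_class hs C J hJ).summable

theorem tsum_absNorm_rpow_eq_dedekindZeta {s : ℝ} (hs : 1 < s) :
    ((∑' I : (Ideal (𝓞 K))⁰, (Ideal.absNorm (I : Ideal (𝓞 K)) : ℝ) ^ (-s) : ℝ) : ℂ) =
      dedekindZeta K s := by
  have h := (summable_absNorm_rpow (K := K) hs).hasSum.tsum_fiberwise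
    (fun I : (Ideal (𝓞 K))⁰ ↦ Ideal.absNorm (I : Ideal (𝓞 K)))
  rw [← h.tsum_eq, dedekindZeta, LSeries, Complex.ofReal_tsum]
  refine tsum_congr fun n ↦ ?_
  have hconst : ∀ b : ((fun I : (Ideal (𝓞 K))⁰ ↦ Ideal.absNorm (I : Ideal (𝓞 K))) ⁻¹' {n}),
      (Ideal.absNorm (b.1 : Ideal (𝓞 K)) : ℝ) ^ (-s) = (n : ℝ) ^ (-s) := fun b ↦ by
    rw [show Ideal.absNorm (b.1 : Ideal (𝓞 K)) = n from b.2]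
  rw [tsum_congr hconst]
  by_cases hn : n = 0
  · subst hn
    rw [LSeries.term_zero, Nat.cast_zero, Real.zero_rpow (by linarith), tsum_zero,
      Complex.ofReal_zero]
  rw [LSeries.term_of_ne_zero hn, tsum_const, nsmul_eq_mul, Complex.ofReal_mul,
    Real.rpow_neg (Nat.cast_nonneg n), Complex.ofReal_inv, Complex.ofReal_cpow (Nat.cast_nonneg n),
    div_eq_mul_inv, Complex.ofReal_natCast, Complex.ofReal_natCast]
  congr 2
  refine Nat.card_congr ⟨fun I ↦ ⟨I.1, I.2⟩, fun I ↦ ⟨⟨I.1, mem_nonZeroDivisors_of_ne_zero ?_⟩,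
    I.2⟩, fun _ ↦ rfl, fun _ ↦ rfl⟩
  intro h0
  exact hn (by rw [← I.2, h0, Ideal.zero_eq_bot, Ideal.absNorm_bot])

variable (K) in
theorem tendsto_sub_one_mul_tsum_absNorm_rpow :
    Tendsto (fun s : ℝ ↦ (s - 1) *
      ∑' I : (Ideal (𝓞 K))⁰, (Ideal.absNorm (I : Ideal (𝓞 K)) : ℝ) ^ (-s))
      (𝓝[>] 1) (𝓝 (dedekindZeta_residue K)) := by
  have h := tendsto_sub_one_mul_dedekindZeta_nhdsGT K
  rw [← Filter.tendsto_ofReal_iff]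
  refine h.congr' ?_
  filter_upwards [self_mem_nhdsWithin] with s hs
  rw [← tsum_absNorm_rpow_eq_dedekindZeta hs]
  push_cast
  rfl

theorem abs_rpow_sub_one_le {N s : ℝ} (hN : 1 ≤ N) (hs : 1 ≤ s) (hs' : s ≤ 2) :
    |N ^ (s - 1) - 1| ≤ N * Real.log N * (s - 1) := by
  have hN0 : 0 < N := by linarith
  have hl := Real.log_nonneg hN
  have hx : 0 ≤ Real.log N * (s - 1) := mul_nonneg hl (by linarith)
  rw [Real.rpow_def_of_pos hN0]
  have h := abs_exp_sub_exp_le (a := Real.log N * (s - 1)) (b := 0) (M := Real.log N)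
    (mul_le_of_le_one_right hl (by linarith)) hl
  rw [Real.exp_log hN0, sub_zero, Real.exp_zero, abs_of_nonneg hx] at h
  linarith

variable (K) in
theorem exists_tsum_intKernel_le :
    ∃ C : ℝ, 0 ≤ C ∧ ∀ᶠ s in 𝓝[>] (1 : ℝ), (s - 1) * ∑' z : 𝓞 K, intKernel s z ≤ C := by
  obtain ⟨c, hc⟩ := exists_abs_tsum_sub_absNorm_mul_tsum_le (K := K) 1 one_ne_zero
  have h1 := (tendsto_sub_one_mul_tsum_absNorm_rpow K).eventually_le_const
    (lt_add_one (dedekindZeta_residue K))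
  have hτ : (0 : ℝ) < torsionOrder K := Nat.cast_pos.mpr (torsionOrder_pos K)
  have h2 : ∀ᶠ s in 𝓝[>] (1 : ℝ), s < 2 :=
    nhdsWithin_le_nhds (Iio_mem_nhds (by norm_num))
  refine ⟨|c| + torsionOrder K * (dedekindZeta_residue K + 1), ?_, ?_⟩
  · have := dedekindZeta_residue_pos K
    positivity
  filter_upwards [h1, h2, self_mem_nhdsWithin] with s hs1 hs2 hs
  have hs : 1 < s := hs
  have h3 := hc s hs hs2.le
  have h4 := hasSum_absNorm_rpow_class hs (1 : ClassGroup (𝓞 K)) 1 (by rw [map_one, inv_one])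
  have h5 : ∑' I : {I : (Ideal (𝓞 K))⁰ // ClassGroup.mk0 I = 1},
      (Ideal.absNorm (I.1 : Ideal (𝓞 K)) : ℝ) ^ (-s) ≤
      ∑' I : (Ideal (𝓞 K))⁰, (Ideal.absNorm (I : Ideal (𝓞 K)) : ℝ) ^ (-s) :=
    tsum_comp_le_tsum_of_inj (summable_absNorm_rpow (K := K) hs)
      (fun I ↦ Real.rpow_nonneg (Nat.cast_nonneg _) _) Subtype.val_injective
  have h6 := h4.tsum_eq
  simp only [OneMemClass.coe_one, map_one, Nat.cast_one,
    Real.one_rpow, mul_one, one_mul] at h3 h6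
  rw [h6] at h5
  rw [inv_mul_le_iff₀ hτ] at h5
  have h7 := (le_abs_self _).trans (h3.trans (le_abs_self c))
  set Z := ∑' z : 𝓞 K, intKernel s z
  set T := ∑' I : (Ideal (𝓞 K))⁰, (Ideal.absNorm (I : Ideal (𝓞 K)) : ℝ) ^ (-s)
  have h8 : Z ≤ |c| + torsionOrder K * T := by linarith
  calc (s - 1) * Z ≤ (s - 1) * (|c| + torsionOrder K * T) :=
        mul_le_mul_of_nonneg_left h8 (by linarith)
    _ = (s - 1) * |c| + torsionOrder K * ((s - 1) * T) := by ring
    _ ≤ 1 * |c| + torsionOrder K * (dedekindZeta_residue K + 1) := by gcongr; linarith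
    _ = _ := by rw [one_mul]

/-- The partial zeta functions of the ideal classes agree up to a bounded function as `s → 1⁺`. -/
theorem exists_abs_tsum_class_sub_le (C : ClassGroup (𝓞 K)) :
    ∃ B : ℝ, ∀ᶠ s in 𝓝[>] (1 : ℝ),
      |∑' I : {I : (Ideal (𝓞 K))⁰ // ClassGroup.mk0 I = C},
        (Ideal.absNorm (I.1 : Ideal (𝓞 K)) : ℝ) ^ (-s) -
          (torsionOrder K : ℝ)⁻¹ * ∑' z : 𝓞 K, intKernel s z| ≤ B := by
  obtain ⟨J, hJ⟩ := ClassGroup.mk0_surjective C⁻¹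
  obtain ⟨c, hc⟩ := exists_abs_tsum_sub_absNorm_mul_tsum_le (K := K) (J : Ideal (𝓞 K))
    (nonZeroDivisors.coe_ne_zero J)
  obtain ⟨D, hD0, hD⟩ := exists_tsum_intKernel_le K
  have hτ : (0 : ℝ) < torsionOrder K := Nat.cast_pos.mpr (torsionOrder_pos K)
  have h2 : ∀ᶠ s in 𝓝[>] (1 : ℝ), s < 2 :=
    nhdsWithin_le_nhds (Iio_mem_nhds (by norm_num))
  set N : ℝ := (Ideal.absNorm (J : Ideal (𝓞 K)) : ℝ) with hN
  have hN1 : 1 ≤ N := Nat.one_le_cast.mpr (one_le_absNorm J)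
  have hN0 : 0 < N := by linarith
  refine ⟨(torsionOrder K : ℝ)⁻¹ * (N * c + N * Real.log N * D), ?_⟩
  filter_upwards [hD, h2, self_mem_nhdsWithin] with s hs1 hs2 hs
  have hs : 1 < s := hs
  have h3 := hc s hs hs2.le
  rw [(hasSum_absNorm_rpow_class hs C J hJ).tsum_eq, ← hN]
  have hZ0 : 0 ≤ ∑' z : 𝓞 K, intKernel s z := tsum_nonneg fun z ↦ intKernel_nonneg s z
  set Z := ∑' z : 𝓞 K, intKernel s z
  set Y := ∑' z : (J : Ideal (𝓞 K)), intKernel s (z : 𝓞 K)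
  have h4 : N ^ s = N ^ (s - 1) * N := by
    rw [Real.rpow_sub_one hN0.ne']; field_simp
  have h5 : N ^ (s - 1) ≤ N := by
    simpa using Real.rpow_le_rpow_of_exponent_le hN1 (show s - 1 ≤ 1 by linarith)
  have h6 := abs_rpow_sub_one_le hN1 hs.le hs2.le
  have h7 : (torsionOrder K : ℝ)⁻¹ * N ^ s * Y - (torsionOrder K : ℝ)⁻¹ * Z =
      (torsionOrder K : ℝ)⁻¹ * (-(N ^ (s - 1) * (Z - N * Y)) + (N ^ (s - 1) - 1) * Z) := by
    rw [h4]; ring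
  rw [h7, abs_mul, abs_of_pos (inv_pos.mpr hτ)]
  refine mul_le_mul_of_nonneg_left ((abs_add_le _ _).trans (add_le_add ?_ ?_)) (inv_pos.mpr hτ).le
  · rw [abs_neg, abs_mul, abs_of_nonneg (Real.rpow_nonneg hN0.le _)]
    exact mul_le_mul h5 h3 (abs_nonneg _) hN0.le
  · rw [abs_mul, abs_of_nonneg hZ0]
    calc _ ≤ N * Real.log N * (s - 1) * Z := mul_le_mul_of_nonneg_right h6 hZ0
      _ = N * Real.log N * ((s - 1) * Z) := by ring
      _ ≤ _ := mul_le_mul_of_nonneg_left hs1 (mul_nonneg hN0.le (Real.log_nonneg hN1))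

/-- The Dirichlet series of a class function with vanishing sum stays bounded as `s → 1⁺`. -/
theorem exists_abs_tsum_class_mul_le (ψ : ClassGroup (𝓞 K) → ℝ) (hψ : ∑ C, ψ C = 0) :
    ∃ B : ℝ, ∀ᶠ s in 𝓝[>] (1 : ℝ),
      |∑' I : (Ideal (𝓞 K))⁰,
        ψ (ClassGroup.mk0 I) * (Ideal.absNorm (I : Ideal (𝓞 K)) : ℝ) ^ (-s)| ≤ B := by
  choose B hB using exists_abs_tsum_class_sub_le (K := K)
  refine ⟨∑ C, |ψ C| * B C, ?_⟩
  filter_upwards [eventually_all.mpr hB, self_mem_nhdsWithin] with s hs1 hs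
  have hs : 1 < s := hs
  have hsum : Summable fun I : (Ideal (𝓞 K))⁰ ↦
      ψ (ClassGroup.mk0 I) * (Ideal.absNorm (I : Ideal (𝓞 K)) : ℝ) ^ (-s) := by
    refine .of_norm_bounded ((summable_absNorm_rpow hs).mul_left (∑ C, |ψ C|)) fun I ↦ ?_
    rw [norm_mul, Real.norm_eq_abs, Real.norm_of_nonneg (Real.rpow_nonneg (Nat.cast_nonneg _) _)]
    exact mul_le_mul_of_nonneg_right (Finset.single_le_sum (fun C _ ↦ abs_nonneg (ψ C))
      (Finset.mem_univ _)) (Real.rpow_nonneg (Nat.cast_nonneg _) _)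
  have hsum' := (Equiv.sigmaFiberEquiv (ClassGroup.mk0 (R := 𝓞 K))).summable_iff
    (f := fun I ↦ ψ (ClassGroup.mk0 I) * (Ideal.absNorm (I : Ideal (𝓞 K)) : ℝ) ^ (-s)) |>.mpr hsum
  simp only [Function.comp_def] at hsum'
  rw [← (Equiv.sigmaFiberEquiv (ClassGroup.mk0 (R := 𝓞 K))).tsum_eq, hsum'.tsum_sigma, tsum_fintype]
  have h : ∀ C, ∑' I : {I : (Ideal (𝓞 K))⁰ // ClassGroup.mk0 I = C},
      ψ (ClassGroup.mk0 (Equiv.sigmaFiberEquiv (ClassGroup.mk0 (R := 𝓞 K)) ⟨C, I⟩)) *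
        (Ideal.absNorm (Equiv.sigmaFiberEquiv (ClassGroup.mk0 (R := 𝓞 K)) ⟨C, I⟩ : Ideal (𝓞 K)) : ℝ)
          ^ (-s) =
      ψ C * ∑' I : {I : (Ideal (𝓞 K))⁰ // ClassGroup.mk0 I = C},
        (Ideal.absNorm (I.1 : Ideal (𝓞 K)) : ℝ) ^ (-s) := fun C ↦ by
    rw [← tsum_mul_left]
    refine tsum_congr fun I ↦ ?_
    change ψ (ClassGroup.mk0 I.1) * _ = _
    rw [I.2]
    rfl
  rw [Finset.sum_congr rfl fun C _ ↦ h C]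
  have h0 : ∑ C, ψ C * ((torsionOrder K : ℝ)⁻¹ * ∑' z : 𝓞 K, intKernel s z) = 0 := by
    rw [← Finset.sum_mul, hψ, zero_mul]
  rw [← sub_zero (∑ C, _), ← h0, ← Finset.sum_sub_distrib]
  refine (Finset.abs_sum_le_sum_abs _ _).trans (Finset.sum_le_sum fun C _ ↦ ?_)
  rw [← mul_sub, abs_mul]
  exact mul_le_mul_of_nonneg_left (hs1 C) (abs_nonneg _)

end NumberField

namespace NumberField

open IsDedekindDomain NumberField.Units Filter Topology
open scoped nonZeroDivisors

variable {K : Type*} [Field K] [NumberField K]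

/-- A maximal ideal of the ring of integers, as an element of the monoid of nonzero ideals. -/
def primeIdeal {K : Type*} [Field K] (P : HeightOneSpectrum (𝓞 K)) : (Ideal (𝓞 K))⁰ :=
  ⟨P.asIdeal, mem_nonZeroDivisors_of_ne_zero P.ne_bot⟩

theorem primeIdeal_injective {K : Type*} [Field K] :
    Function.Injective (primeIdeal (K := K)) := fun _ _ h ↦
  HeightOneSpectrum.ext (congrArg Subtype.val h)

theorem two_le_absNorm (P : HeightOneSpectrum (𝓞 K)) : 2 ≤ Ideal.absNorm P.asIdeal := by
  have h0 : Ideal.absNorm P.asIdeal ≠ 0 := fun h ↦ P.ne_bot (Ideal.absNorm_eq_zero_iff.mp h)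
  have h1 : Ideal.absNorm P.asIdeal ≠ 1 := fun h ↦
    P.isPrime.ne_top (Ideal.absNorm_eq_one_iff.mp h)
  lia

theorem summable_absNorm_prime_rpow {s : ℝ} (hs : 1 < s) :
    Summable fun P : HeightOneSpectrum (𝓞 K) ↦ (Ideal.absNorm P.asIdeal : ℝ) ^ (-s) := by
  have h := (summable_absNorm_rpow (K := K) hs).comp_injective primeIdeal_injective
  simp only [Function.comp_def] at h
  exact h

/-- The nonzero ideals divisible by no prime in `S`. -/
def coprimeIdeals (S : Finset (HeightOneSpectrum (𝓞 K))) : Set (Ideal (𝓞 K))⁰ :=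
  {I | ∀ P ∈ S, ¬ P.asIdeal ∣ (I : Ideal (𝓞 K))}

section Multiplicative

variable {g : (Ideal (𝓞 K))⁰ →* ℝ}

theorem tsum_coprimeIdeals_insert (hg : Summable g) {S : Finset (HeightOneSpectrum (𝓞 K))}
    {P : HeightOneSpectrum (𝓞 K)} [DecidableEq (HeightOneSpectrum (𝓞 K))] (hP : P ∉ S) :
    ∑' I, (coprimeIdeals (insert P S)).indicator g I =
      (1 - g (primeIdeal P)) * ∑' I, (coprimeIdeals S).indicator g I := by
  have hinj : Function.Injective fun J ↦ primeIdeal P * J := mul_right_injective _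
  have h1 : ∀ J, ((coprimeIdeals S) \ coprimeIdeals (insert P S)).indicator g (primeIdeal P * J) =
      g (primeIdeal P) * (coprimeIdeals S).indicator g J := fun J ↦ by
    by_cases hJ : J ∈ coprimeIdeals S
    · rw [Set.indicator_of_mem, Set.indicator_of_mem hJ, map_mul]
      refine ⟨fun Q hQ h ↦ ?_, fun h ↦ h P (Finset.mem_insert_self _ _) (dvd_mul_right _ _)⟩
      rcases Q.prime.dvd_or_dvd h with h | h
      · refine hP ?_
        rwa [← show Q = P from HeightOneSpectrum.ext
          (associated_iff_eq.mp (Q.prime.associated_of_dvd P.prime h))]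
      · exact hJ Q hQ h
    · rw [Set.indicator_of_notMem, Set.indicator_of_notMem hJ, mul_zero]
      exact fun h ↦ hJ fun Q hQ hQJ ↦ h.1 Q hQ (hQJ.mul_left _)
  have h2 : ∑' I, ((coprimeIdeals S) \ coprimeIdeals (insert P S)).indicator g I =
      g (primeIdeal P) * ∑' I, (coprimeIdeals S).indicator g I := by
    rw [← tsum_mul_left, ← hinj.tsum_eq]
    · exact tsum_congr h1
    · intro I hI
      obtain ⟨hI1, hI2⟩ := Set.mem_of_indicator_ne_zero hI
      have hPI : P.asIdeal ∣ (I : Ideal (𝓞 K)) := by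
        by_contra h
        refine hI2 fun Q hQ ↦ ?_
        rcases Finset.mem_insert.mp hQ with rfl | hQ
        exacts [h, hI1 Q hQ]
      obtain ⟨J, hJ⟩ := hPI
      refine ⟨⟨J, mem_nonZeroDivisors_of_ne_zero ?_⟩, Subtype.ext hJ.symm⟩
      rintro rfl
      exact nonZeroDivisors.coe_ne_zero I (by rw [hJ, mul_zero])
  have h3 : ∀ I, (coprimeIdeals (insert P S)).indicator g I = (coprimeIdeals S).indicator g I -
      ((coprimeIdeals S) \ coprimeIdeals (insert P S)).indicator g I := fun I ↦ by
    have hsub : coprimeIdeals (insert P S) ⊆ coprimeIdeals S := fun I hI Q hQ ↦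
      hI Q (Finset.mem_insert_of_mem hQ)
    rw [Set.indicator_sdiff hsub]
    simp
  rw [tsum_congr h3, (hg.indicator _).tsum_sub (hg.indicator _), h2]
  ring

theorem tsum_coprimeIdeals_eq_prod (hg : Summable g) (S : Finset (HeightOneSpectrum (𝓞 K))) :
    ∑' I, (coprimeIdeals S).indicator g I =
      (∏ P ∈ S, (1 - g (primeIdeal P))) * ∑' I, g I := by
  classical
  induction S using Finset.induction_on with
  | empty => simp [coprimeIdeals]
  | insert P S hP ih => rw [tsum_coprimeIdeals_insert hg hP, ih, Finset.prod_insert hP, mul_assoc]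

theorem tendsto_prod_one_sub_mul_tsum (hg : Summable g) :
    Tendsto (fun S : Finset (HeightOneSpectrum (𝓞 K)) ↦
      (∏ P ∈ S, (1 - g (primeIdeal P))) * ∑' I, g I) atTop (𝓝 1) := by
  classical
  have h : Tendsto (fun S : Finset (HeightOneSpectrum (𝓞 K)) ↦
      ∑' I, (coprimeIdeals S).indicator g I) atTop
      (𝓝 (∑' I, if I = 1 then g I else 0)) := by
    refine tendsto_tsum_of_dominated_convergence hg.norm (fun I ↦ ?_)
      (.of_forall fun S I ↦ norm_indicator_le_norm_self _ _)
    split_ifs with hI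
    · refine tendsto_const_nhds.congr fun S ↦ (Set.indicator_of_mem ?_ _).symm
      intro P _ h
      rw [hI] at h
      exact P.prime.not_isUnit (isUnit_of_dvd_one h)
    · have hI' : (I : Ideal (𝓞 K)) ≠ ⊤ := fun h ↦ hI (Subtype.ext (h.trans Ideal.one_eq_top.symm))
      obtain ⟨M, hM, hIM⟩ := Ideal.exists_le_maximal _ hI'
      let P : HeightOneSpectrum (𝓞 K) := ⟨M, hM.isPrime, fun h ↦
        nonZeroDivisors.coe_ne_zero I (le_bot_iff.mp (hIM.trans h.le))⟩
      refine tendsto_const_nhds.congr' ?_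
      filter_upwards [eventually_ge_atTop {P}] with S hS
      refine (Set.indicator_of_notMem (fun h ↦ ?_) _).symm
      exact h P (hS (Finset.mem_singleton_self P)) (Ideal.dvd_iff_le.mpr hIM)
  simp only [tsum_coprimeIdeals_eq_prod hg, tsum_ite_eq, map_one] at h
  exact h

theorem exp_neg_add_sq_le_one_sub {y : ℝ} (hy : |y| ≤ 1 / 2) :
    Real.exp (-(y + 2 * y ^ 2)) ≤ 1 - y := by
  obtain ⟨h1, h2⟩ := abs_le.mp hy
  have h3 : 0 < 1 - y := by linarith
  rw [← Real.le_log_iff_exp_le h3]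
  refine le_trans ?_ (Real.one_sub_inv_le_log_of_pos h3)
  rw [le_sub_iff_add_le, ← le_sub_iff_add_le', inv_le_iff_one_le_mul₀ h3]
  nlinarith [sq_nonneg y]

/-- The Euler product of a multiplicative function, in logarithmic form. -/
theorem tsum_prime_le_log_tsum (hg : Summable g) (hg2 : ∀ P, |g (primeIdeal P)| ≤ 1 / 2)
    (hsum : Summable fun P ↦ g (primeIdeal P)) (hsum2 : Summable fun P ↦ g (primeIdeal P) ^ 2) :
    0 < ∑' I, g I ∧ ∑' P, g (primeIdeal P) ≤ Real.log (∑' I, g I) ∧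
      Real.log (∑' I, g I) ≤ ∑' P, g (primeIdeal P) + 2 * ∑' P, g (primeIdeal P) ^ 2 := by
  set L := ∑' I, g I
  have hlim := tendsto_prod_one_sub_mul_tsum hg
  have hpos : ∀ P, 0 < 1 - g (primeIdeal P) := fun P ↦ by linarith [(abs_le.mp (hg2 P)).2]
  have hL : 0 < L := by
    obtain ⟨S, hS⟩ := (hlim.eventually (lt_mem_nhds one_pos)).exists
    exact pos_of_mul_pos_right hS (Finset.prod_nonneg fun P _ ↦ (hpos P).le)
  have h1 : 1 ≤ Real.exp (-∑' P, g (primeIdeal P)) * L := by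
    refine le_of_tendsto_of_tendsto' hlim
      (((Real.continuous_exp.tendsto _).comp hsum.hasSum.neg).mul_const L) fun S ↦ ?_
    refine mul_le_mul_of_nonneg_right ?_ hL.le
    rw [Function.comp_apply, Real.exp_sum]
    exact Finset.prod_le_prod (fun P _ ↦ (hpos P).le) fun P _ ↦ Real.one_sub_le_exp_neg _
  have h2 : Real.exp (-(∑' P, g (primeIdeal P) + 2 * ∑' P, g (primeIdeal P) ^ 2)) * L ≤ 1 := by
    refine le_of_tendsto_of_tendsto' (((Real.continuous_exp.tendsto _).comp
      (hsum.hasSum.add (hsum2.hasSum.mul_left 2)).neg).mul_const L) hlim fun S ↦ ?_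
    refine mul_le_mul_of_nonneg_right ?_ hL.le
    rw [Function.comp_apply, Real.exp_sum]
    exact Finset.prod_le_prod (fun P _ ↦ (Real.exp_pos _).le)
      fun P _ ↦ exp_neg_add_sq_le_one_sub (hg2 P)
  refine ⟨hL, ?_, ?_⟩
  · rw [Real.le_log_iff_exp_le hL]
    rwa [Real.exp_neg, inv_mul_eq_div, one_le_div (Real.exp_pos _)] at h1
  · rw [Real.log_le_iff_le_exp hL]
    rwa [Real.exp_neg, inv_mul_eq_div, div_le_one (Real.exp_pos _)] at h2

end Multiplicative

/-- The function `I ↦ χ(I) N(I)⁻ˢ`. -/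
noncomputable def twistedNorm (χ : (Ideal (𝓞 K))⁰ →* ℝ) (s : ℝ) : (Ideal (𝓞 K))⁰ →* ℝ where
  toFun I := χ I * (Ideal.absNorm (I : Ideal (𝓞 K)) : ℝ) ^ (-s)
  map_one' := by simp
  map_mul' I J := by
    rw [map_mul, Submonoid.coe_mul, map_mul, Nat.cast_mul,
      Real.mul_rpow (Nat.cast_nonneg _) (Nat.cast_nonneg _)]
    ring

theorem abs_twistedNorm {χ : (Ideal (𝓞 K))⁰ →* ℝ} (hχ : ∀ I, |χ I| = 1) (s : ℝ)
    (I : (Ideal (𝓞 K))⁰) :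
    |twistedNorm χ s I| = (Ideal.absNorm (I : Ideal (𝓞 K)) : ℝ) ^ (-s) := by
  change |χ I * _| = _
  rw [abs_mul, hχ, one_mul, abs_of_nonneg (Real.rpow_nonneg (Nat.cast_nonneg _) _)]

theorem summable_twistedNorm {χ : (Ideal (𝓞 K))⁰ →* ℝ} (hχ : ∀ I, |χ I| = 1) {s : ℝ}
    (hs : 1 < s) : Summable (twistedNorm χ s) :=
  .of_norm_bounded (summable_absNorm_rpow hs) fun I ↦ (abs_twistedNorm hχ s I).le

theorem tsum_prime_twist_le_log {χ : (Ideal (𝓞 K))⁰ →* ℝ} (hχ : ∀ I, |χ I| = 1) {s : ℝ}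
    (hs : 1 < s) :
    0 < ∑' I : (Ideal (𝓞 K))⁰, χ I * (Ideal.absNorm (I : Ideal (𝓞 K)) : ℝ) ^ (-s) ∧
    ∑' P, χ (primeIdeal P) * (Ideal.absNorm P.asIdeal : ℝ) ^ (-s) ≤
      Real.log (∑' I : (Ideal (𝓞 K))⁰, χ I * (Ideal.absNorm (I : Ideal (𝓞 K)) : ℝ) ^ (-s)) ∧
    Real.log (∑' I : (Ideal (𝓞 K))⁰, χ I * (Ideal.absNorm (I : Ideal (𝓞 K)) : ℝ) ^ (-s)) ≤
      ∑' P, χ (primeIdeal P) * (Ideal.absNorm P.asIdeal : ℝ) ^ (-s) +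
        2 * ∑' P : HeightOneSpectrum (𝓞 K), (Ideal.absNorm P.asIdeal : ℝ) ^ (-2 : ℝ) := by
  have hg := summable_twistedNorm hχ hs
  have hN : ∀ P : HeightOneSpectrum (𝓞 K), (2 : ℝ) ≤ Ideal.absNorm P.asIdeal := fun P ↦
    Nat.ofNat_le_cast.mpr (two_le_absNorm P)
  have habs : ∀ P : HeightOneSpectrum (𝓞 K), |twistedNorm χ s (primeIdeal P)| ≤
      (Ideal.absNorm P.asIdeal : ℝ) ^ (-1 : ℝ) := fun P ↦ by
    rw [abs_twistedNorm hχ]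
    exact Real.rpow_le_rpow_of_exponent_le (one_le_two.trans (hN P)) (by linarith)
  have hsq : ∀ P : HeightOneSpectrum (𝓞 K), twistedNorm χ s (primeIdeal P) ^ 2 ≤
      (Ideal.absNorm P.asIdeal : ℝ) ^ (-2 : ℝ) := fun P ↦ by
    rw [← sq_abs]
    refine (pow_le_pow_left₀ (abs_nonneg _) (habs P) 2).trans_eq ?_
    rw [← Real.rpow_natCast, ← Real.rpow_mul (Nat.cast_nonneg _)]
    norm_num
  have hs2 := summable_absNorm_prime_rpow (K := K) one_lt_two
  have hsum2 : Summable fun P ↦ twistedNorm χ s (primeIdeal P) ^ 2 :=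
    .of_nonneg_of_le (fun _ ↦ sq_nonneg _) hsq hs2
  have hhalf : ∀ P, |twistedNorm χ s (primeIdeal P)| ≤ 1 / 2 := fun P ↦ by
    refine (habs P).trans ?_
    rw [Real.rpow_neg_one, one_div]
    exact inv_anti₀ two_pos (hN P)
  obtain ⟨h1, h2, h3⟩ := tsum_prime_le_log_tsum hg hhalf
    (hg.comp_injective primeIdeal_injective) hsum2
  exact ⟨h1, h2, h3.trans (add_le_add le_rfl
    (mul_le_mul_of_nonneg_left (hsum2.tsum_le_tsum hsq hs2) zero_le_two))⟩

variable (K) in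
/-- The prime zeta function of a number field is `log (1 / (s - 1)) + O(1)` as `s → 1⁺`. -/
theorem exists_abs_tsum_prime_add_log_le :
    ∃ C : ℝ, ∀ᶠ s in 𝓝[>] (1 : ℝ),
      |∑' P : HeightOneSpectrum (𝓞 K), (Ideal.absNorm P.asIdeal : ℝ) ^ (-s) +
        Real.log (s - 1)| ≤ C := by
  have hρ := dedekindZeta_residue_pos K
  have hlim := ((Real.continuousAt_log hρ.ne').tendsto.comp
    (tendsto_sub_one_mul_tsum_absNorm_rpow K)).abs.eventually_le_const (lt_add_one _)
  refine ⟨|Real.log (dedekindZeta_residue K)| + 1 +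
    2 * ∑' P : HeightOneSpectrum (𝓞 K), (Ideal.absNorm P.asIdeal : ℝ) ^ (-2 : ℝ), ?_⟩
  filter_upwards [hlim, self_mem_nhdsWithin] with s hs1 hs
  have hs : 1 < s := hs
  obtain ⟨h1, h2, h3⟩ := tsum_prime_twist_le_log (K := K) (χ := 1) (fun _ ↦ by simp) hs
  simp only [MonoidHom.one_apply, one_mul] at h1 h2 h3
  rw [Function.comp_apply, Real.log_mul (by linarith) h1.ne'] at hs1
  obtain ⟨h4, h5⟩ := abs_le.mp hs1
  have h6 : 0 ≤ ∑' P : HeightOneSpectrum (𝓞 K), (Ideal.absNorm P.asIdeal : ℝ) ^ (-2 : ℝ) :=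
    tsum_nonneg fun _ ↦ Real.rpow_nonneg (Nat.cast_nonneg _) _
  rw [abs_le]
  constructor <;> linarith

/-- A nontrivial quadratic class group character has prime sum bounded above as `s → 1⁺`. -/
theorem exists_tsum_prime_class_le {ψ : ClassGroup (𝓞 K) →* ℝ} (hψ : ∀ C, |ψ C| = 1)
    (hψ1 : ∃ C, ψ C ≠ 1) :
    ∃ B : ℝ, ∀ᶠ s in 𝓝[>] (1 : ℝ),
      ∑' P, ψ (ClassGroup.mk0 (primeIdeal P)) * (Ideal.absNorm P.asIdeal : ℝ) ^ (-s) ≤ B := by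
  have hsum : ∑ C, ψ C = 0 := by
    obtain ⟨D, hD⟩ := hψ1
    have h : ψ D * ∑ C, ψ C = ∑ C, ψ C := by
      rw [Finset.mul_sum, ← Equiv.sum_comp (Equiv.mulLeft D) fun C ↦ ψ C]
      exact Finset.sum_congr rfl fun C _ ↦ (map_mul ψ D C).symm
    by_contra h0
    exact hD (mul_right_cancel₀ h0 (h.trans (one_mul _).symm))
  obtain ⟨B, hB⟩ := exists_abs_tsum_class_mul_le ψ hsum
  refine ⟨Real.log B, ?_⟩
  filter_upwards [hB, self_mem_nhdsWithin] with s hs1 hs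
  obtain ⟨h1, h2, -⟩ := tsum_prime_twist_le_log (χ := ψ.comp ClassGroup.mk0)
    (fun _ ↦ hψ _) (show 1 < s from hs)
  exact h2.trans (Real.log_le_log h1 ((le_abs_self _).trans hs1))

end NumberField

theorem summable_and_tsum_le_of_card_fiber_le {ι κ : Type*} (φ : ι → κ) (d : ℕ)
    (hφ : ∀ (t : Finset ι) (y : κ), (∀ x ∈ t, φ x = y) → t.card ≤ d) {f : ι → ℝ} {h : κ → ℝ}
    (hf : ∀ x, 0 ≤ f x) (hh : ∀ y, 0 ≤ h y) (hfh : ∀ x, f x ≤ h (φ x)) (hs : Summable h) :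
    Summable f ∧ ∑' x, f x ≤ d * ∑' y, h y := by
  classical
  have key : ∀ t : Finset ι, ∑ x ∈ t, f x ≤ d * ∑' y, h y := fun t ↦ by
    calc ∑ x ∈ t, f x ≤ ∑ x ∈ t, h (φ x) := Finset.sum_le_sum fun x _ ↦ hfh x
      _ = ∑ y ∈ t.image φ, (t.filter fun x ↦ φ x = y).card • h y := Finset.sum_comp h φ
      _ ≤ ∑ y ∈ t.image φ, d * h y := by
        refine Finset.sum_le_sum fun y _ ↦ ?_
        rw [nsmul_eq_mul]
        exact mul_le_mul_of_nonneg_right (Nat.cast_le.mpr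
          (hφ _ y fun x hx ↦ (Finset.mem_filter.mp hx).2)) (hh y)
      _ = d * ∑ y ∈ t.image φ, h y := (Finset.mul_sum ..).symm
      _ ≤ d * ∑' y, h y :=
        mul_le_mul_of_nonneg_left (hs.sum_le_tsum _ fun y _ ↦ hh y) (Nat.cast_nonneg _)
  exact ⟨summable_of_sum_le hf key, Real.tsum_le_of_sum_le hf key⟩

open IsDedekindDomain in
theorem card_le_finrank_of_under_eq {R S : Type*} [CommRing R] [IsDomain R] [CommRing S]
    [IsDedekindDomain S] [Algebra R S] [Module.Finite R S] [Module.Flat R S] (p : Ideal R)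
    (t : Finset (HeightOneSpectrum S)) (ht : ∀ P ∈ t, P.asIdeal.under R = p)
    [p.IsPrime] [Fintype (p.primesOver S)] : t.card ≤ Module.finrank R S := by
  have hS : (Finset.univ : Finset (p.primesOver S)).card ≤ Module.finrank R S := by
    rw [← Ideal.sum_ramification_inertia_eq_finrank p (S := S), Finset.card_eq_sum_ones]
    refine Finset.sum_le_sum fun q _ ↦ ?_
    have := q.2.1
    exact Nat.mul_pos (Ideal.ramificationIdx_pos _ _) (Ideal.inertiaDeg_pos _ _)
  refine le_trans ?_ hS
  rw [← Fintype.card_coe, Finset.card_univ]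
  refine Fintype.card_le_of_injective
    (fun P : t ↦ (⟨P.1.asIdeal, P.1.isPrime, ⟨(ht P.1 P.2).symm⟩⟩ : p.primesOver S)) fun P Q h ↦ ?_
  exact Subtype.ext (HeightOneSpectrum.ext (congrArg Subtype.val h))

namespace NumberField

open IsDedekindDomain NumberField.Units Filter Topology
open scoped nonZeroDivisors

variable {K : Type*} [Field K] [NumberField K]

/-- The sum of `N(P)⁻ˢ` over a set of primes. -/
noncomputable def primeSum (A : Set (HeightOneSpectrum (𝓞 K))) (s : ℝ) : ℝ :=
  ∑' P, A.indicator (fun P ↦ (Ideal.absNorm P.asIdeal : ℝ) ^ (-s)) P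

theorem indicator_rpow_nonneg (A : Set (HeightOneSpectrum (𝓞 K))) (s : ℝ)
    (P : HeightOneSpectrum (𝓞 K)) :
    0 ≤ A.indicator (fun P ↦ (Ideal.absNorm P.asIdeal : ℝ) ^ (-s)) P :=
  Set.indicator_nonneg (fun _ _ ↦ Real.rpow_nonneg (Nat.cast_nonneg _) _) P

theorem primeSum_mono {A B : Set (HeightOneSpectrum (𝓞 K))} (h : A ⊆ B) {s : ℝ} (hs : 1 < s) :
    primeSum A s ≤ primeSum B s :=
  ((summable_absNorm_prime_rpow hs).indicator _).tsum_le_tsum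
    (fun _ ↦ Set.indicator_le_indicator_of_subset h
      (fun _ ↦ Real.rpow_nonneg (Nat.cast_nonneg _) _) _)
    ((summable_absNorm_prime_rpow hs).indicator _)

theorem primeSum_union {A B : Set (HeightOneSpectrum (𝓞 K))} (h : Disjoint A B) {s : ℝ}
    (hs : 1 < s) : primeSum (A ∪ B) s = primeSum A s + primeSum B s := by
  unfold primeSum
  rw [← ((summable_absNorm_prime_rpow hs).indicator _).tsum_add
    ((summable_absNorm_prime_rpow hs).indicator _), Set.indicator_union_of_disjoint h]

theorem primeSum_univ (s : ℝ) : primeSum (Set.univ : Set (HeightOneSpectrum (𝓞 K))) s =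
    ∑' P : HeightOneSpectrum (𝓞 K), (Ideal.absNorm P.asIdeal : ℝ) ^ (-s) := by
  simp [primeSum]

/-- The primes whose norm is a rational prime not dividing `m`. -/
def goodPrimes (K : Type*) [Field K] [NumberField K] (m : ℤ) : Set (HeightOneSpectrum (𝓞 K)) :=
  {P | (Ideal.absNorm P.asIdeal).Prime ∧ ¬ (Ideal.absNorm P.asIdeal : ℤ) ∣ m}

theorem exists_primeSum_compl_goodPrimes_le (K : Type*) [Field K] [NumberField K] {m : ℤ}
    (hm : m ≠ 0) :
    ∃ C : ℝ, ∀ s : ℝ, 1 < s → primeSum (goodPrimes K m)ᶜ s ≤ C := by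
  classical
  let D : Set ℕ := {y | (y : ℤ) ∣ m}
  have hD : D.Finite := by
    refine (Finset.finite_toSet (m.natAbs.divisors)).subset fun y hy ↦ ?_
    rw [Finset.mem_coe, Nat.mem_divisors]
    exact ⟨Int.natCast_dvd.mp hy, Int.natAbs_ne_zero.mpr hm⟩
  let h : ℕ → ℝ := fun y ↦ (y : ℝ) ^ (-2 : ℝ) + D.indicator 1 y
  have hh : ∀ y, 0 ≤ h y := fun y ↦ add_nonneg (Real.rpow_nonneg (Nat.cast_nonneg _) _)
    (Set.indicator_nonneg (fun _ _ ↦ zero_le_one) _)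
  have hsum : Summable h := (Real.summable_nat_rpow.mpr (by norm_num)).add
    (summable_of_hasFiniteSupport (hD.subset Set.support_indicator_subset))
  refine ⟨Module.finrank ℤ (𝓞 K) * ∑' y, h y, fun s hs ↦
    (summable_and_tsum_le_of_card_fiber_le
      (fun P : HeightOneSpectrum (𝓞 K) ↦ Ideal.absNorm (P.asIdeal.under ℤ))
      (Module.finrank ℤ (𝓞 K)) ?_ (indicator_rpow_nonneg _ s) hh ?_ hsum).2⟩
  · intro t y ht
    rcases t.eq_empty_or_nonempty with rfl | ⟨P, hP⟩
    · simp
    refine card_le_finrank_of_under_eq (P.asIdeal.under ℤ) t fun Q hQ ↦ ?_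
    rw [← Int.ideal_span_absNorm_eq_self (Q.asIdeal.under ℤ),
      ← Int.ideal_span_absNorm_eq_self (P.asIdeal.under ℤ), ht P hP, ht Q hQ]
  · intro P
    have : NeZero P.asIdeal := ⟨P.ne_bot⟩
    have hp := Nat.absNorm_under_prime P.asIdeal
    have hpow := Ideal.absNorm_pow_inertiaDeg (P.asIdeal.under ℤ) P.asIdeal
    set y := Ideal.absNorm (P.asIdeal.under ℤ)
    have hN : (1 : ℝ) ≤ Ideal.absNorm P.asIdeal := one_le_two.trans
      (Nat.ofNat_le_cast.mpr (two_le_absNorm P))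
    by_cases hP : P ∈ (goodPrimes K m)ᶜ
    · rw [Set.indicator_of_mem hP]
      by_cases h1 : P.asIdeal.inertiaDeg ℤ = 1
      · rw [h1, pow_one] at hpow
        have hy : y ∈ D := by
          by_contra hy
          exact hP ⟨hpow ▸ hp, hpow ▸ hy⟩
        refine (Real.rpow_le_one_of_one_le_of_nonpos hN (by linarith)).trans ?_
        change 1 ≤ _ + D.indicator 1 y
        rw [Set.indicator_of_mem hy]
        exact le_add_of_nonneg_left (Real.rpow_nonneg (Nat.cast_nonneg _) _)
      · have h2 : 2 ≤ P.asIdeal.inertiaDeg ℤ := by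
          have := Ideal.inertiaDeg_pos P.asIdeal ℤ
          lia
        have h3 : (y : ℝ) ^ 2 ≤ Ideal.absNorm P.asIdeal := by
          rw [← hpow, Nat.cast_pow]
          exact pow_le_pow_right₀ (Nat.one_le_cast.mpr hp.one_le) h2
        have hy0 : (0 : ℝ) < y := Nat.cast_pos.mpr hp.pos
        calc (Ideal.absNorm P.asIdeal : ℝ) ^ (-s) ≤ (Ideal.absNorm P.asIdeal : ℝ) ^ (-1 : ℝ) :=
              Real.rpow_le_rpow_of_exponent_le hN (by linarith)
          _ ≤ ((y : ℝ) ^ 2) ^ (-1 : ℝ) :=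
              Real.rpow_le_rpow_of_nonpos (by positivity) h3 (by norm_num)
          _ = (y : ℝ) ^ (-2 : ℝ) := by
              rw [← Real.rpow_natCast, ← Real.rpow_mul hy0.le]; norm_num
          _ ≤ _ := le_add_of_nonneg_right (Set.indicator_nonneg (fun _ _ ↦ zero_le_one) _)
    · rw [Set.indicator_of_notMem hP]
      exact hh _

section Extension

variable {L : Type*} [Field L] [NumberField L] [Algebra K L]

/-- The prime of `K` below a prime of `L`. -/
noncomputable def primeBelow (K : Type*) [Field K] [NumberField K] {L : Type*} [Field L]
    [NumberField L] [Algebra K L] (P : HeightOneSpectrum (𝓞 L)) : HeightOneSpectrum (𝓞 K) :=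
  ⟨P.asIdeal.under (𝓞 K), inferInstance, Ideal.IsIntegral.comap_ne_bot (𝓞 K) P.ne_bot⟩

theorem absNorm_primeBelow_pow (P : HeightOneSpectrum (𝓞 L)) :
    Ideal.absNorm (primeBelow K P).asIdeal ^ P.asIdeal.inertiaDeg (𝓞 K) =
      Ideal.absNorm P.asIdeal :=
  Ideal.absNorm_pow_inertiaDeg (P.asIdeal.under (𝓞 K)) P.asIdeal

theorem absNorm_primeBelow_of_prime {P : HeightOneSpectrum (𝓞 L)}
    (hP : (Ideal.absNorm P.asIdeal).Prime) :
    Ideal.absNorm (primeBelow K P).asIdeal = Ideal.absNorm P.asIdeal := by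
  have h := absNorm_primeBelow_pow (K := K) P
  rw [← h] at hP
  rw [← h, (Nat.Prime.eq_one_of_pow hP), pow_one]

theorem primeSum_preimage_le (A : Set (HeightOneSpectrum (𝓞 K))) {s : ℝ} (hs : 1 < s) :
    primeSum {P : HeightOneSpectrum (𝓞 L) | (Ideal.absNorm P.asIdeal).Prime ∧
      primeBelow K P ∈ A} s ≤ Module.finrank (𝓞 K) (𝓞 L) * primeSum A s := by
  refine (summable_and_tsum_le_of_card_fiber_le (primeBelow K) _ (fun t y ht ↦ ?_)
    (indicator_rpow_nonneg _ s) (indicator_rpow_nonneg A s) (fun P ↦ ?_)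
    ((summable_absNorm_prime_rpow hs).indicator _)).2
  · exact card_le_finrank_of_under_eq y.asIdeal t fun P hP ↦
      congrArg HeightOneSpectrum.asIdeal (ht P hP)
  · by_cases hP : P ∈ {P : HeightOneSpectrum (𝓞 L) | (Ideal.absNorm P.asIdeal).Prime ∧
      primeBelow K P ∈ A}
    · rw [Set.indicator_of_mem hP, Set.indicator_of_mem hP.2, absNorm_primeBelow_of_prime hP.1]
    · rw [Set.indicator_of_notMem hP]
      exact indicator_rpow_nonneg _ _ _

theorem two_mul_primeSum_le (A : Set (HeightOneSpectrum (𝓞 K)))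
    (hA : ∀ P ∈ A, ∃ P₁ P₂ : HeightOneSpectrum (𝓞 L), P₁ ≠ P₂ ∧ primeBelow K P₁ = P ∧
      primeBelow K P₂ = P ∧ Ideal.absNorm P₁.asIdeal = Ideal.absNorm P.asIdeal ∧
      Ideal.absNorm P₂.asIdeal = Ideal.absNorm P.asIdeal) {s : ℝ} (hs : 1 < s) :
    2 * primeSum A s ≤ primeSum (Set.univ : Set (HeightOneSpectrum (𝓞 L))) s := by
  rcases A.eq_empty_or_nonempty with rfl | ⟨P, hP⟩
  · simpa [primeSum] using tsum_nonneg fun P : HeightOneSpectrum (𝓞 L) ↦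
      Real.rpow_nonneg (Nat.cast_nonneg (Ideal.absNorm P.asIdeal)) (-s)
  have : Nonempty (HeightOneSpectrum (𝓞 L)) := ⟨(hA P hP).choose⟩
  choose! P₁ P₂ h using hA
  have hinj : ∀ f : HeightOneSpectrum (𝓞 K) → HeightOneSpectrum (𝓞 L),
      (∀ P ∈ A, primeBelow K (f P) = P ∧
        Ideal.absNorm (f P).asIdeal = Ideal.absNorm P.asIdeal) →
      primeSum A s = primeSum (f '' A) s := fun f hf ↦ by
    unfold primeSum
    rw [← tsum_subtype, ← tsum_subtype]
    have hf' : Set.InjOn f A := fun P hP Q hQ h ↦ by rw [← (hf P hP).1, h, (hf Q hQ).1]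
    rw [← (Equiv.Set.imageOfInjOn f A hf').tsum_eq]
    exact tsum_congr fun P ↦ by
      change _ = (Ideal.absNorm (f P).asIdeal : ℝ) ^ (-s)
      rw [(hf P P.2).2]
  have h1 := hinj P₁ fun P hP ↦ ⟨(h P hP).2.1, (h P hP).2.2.2.1⟩
  have h2 := hinj P₂ fun P hP ↦ ⟨(h P hP).2.2.1, (h P hP).2.2.2.2⟩
  have hdisj : Disjoint (P₁ '' A) (P₂ '' A) := by
    rw [Set.disjoint_left]
    rintro _ ⟨P, hP, rfl⟩ ⟨Q, hQ, hPQ⟩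
    have h3 : P = Q := by rw [← (h P hP).2.1, ← hPQ, (h Q hQ).2.2.1]
    exact (h P hP).1 (by rw [← hPQ, h3])
  rw [two_mul]
  nth_rewrite 1 [h1]
  rw [h2, ← primeSum_union hdisj hs]
  exact primeSum_mono (Set.subset_univ _) hs

end Extension

end NumberField

namespace NumberField

open IsDedekindDomain Filter Topology

/-- The primes whose norm is a rational prime `p` not dividing `2 * c` modulo which `c` is a
square. -/
def squarePrimes (K : Type*) [Field K] [NumberField K] (c : ℤ) : Set (HeightOneSpectrum (𝓞 K)) :=
  goodPrimes K (2 * c) ∩ {P | jacobiSym c (Ideal.absNorm P.asIdeal) = 1}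

theorem exists_sq_eq_of_mem_squarePrimes {K : Type*} [Field K] [NumberField K] {c : ℤ}
    {P : HeightOneSpectrum (𝓞 K)} (hP : P ∈ squarePrimes K c) :
    ∃ r : ℤ, IsCoprime (2 * r) (Ideal.absNorm P.asIdeal : ℤ) ∧
      (Ideal.absNorm P.asIdeal : ℤ) ∣ c - r ^ 2 := by
  obtain ⟨⟨hp, hc⟩, hj⟩ := hP
  set p := Ideal.absNorm P.asIdeal
  have := Fact.mk hp
  have hc0 : (c : ZMod p) ≠ 0 := fun h ↦
    hc (Dvd.dvd.mul_left ((ZMod.intCast_zmod_eq_zero_iff_dvd c p).mp h) 2)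
  rw [Set.mem_ofPred_eq, ← jacobiSym.legendreSym.to_jacobiSym, legendreSym.eq_one_iff p hc0] at hj
  obtain ⟨y, hy⟩ := hj
  obtain ⟨r, rfl⟩ := ZMod.intCast_surjective y
  have hdvd : (p : ℤ) ∣ c - r ^ 2 := by
    rw [← ZMod.intCast_zmod_eq_zero_iff_dvd]
    push_cast
    rw [hy]; ring
  refine ⟨r, ?_, hdvd⟩
  rw [isCoprime_comm, (Nat.prime_iff_prime_int.mp hp).coprime_iff_not_dvd]
  intro h
  refine hc ?_
  have h1 : (2 * c : ℤ) = 2 * (c - r ^ 2) + 2 * r * r := by ring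
  rw [h1]
  exact dvd_add (hdvd.mul_left 2) (h.mul_right r)

variable {K L : Type*} [Field K] [NumberField K] [Field L] [NumberField L] [Algebra K L]

theorem absNorm_eq_of_two_primes_above (h2 : Module.finrank K L = 2)
    {P : HeightOneSpectrum (𝓞 K)} {P₁ P₂ : HeightOneSpectrum (𝓞 L)} (hne : P₁ ≠ P₂)
    (h₁ : primeBelow K P₁ = P) (h₂ : primeBelow K P₂ = P) :
    Ideal.absNorm P₁.asIdeal = Ideal.absNorm P.asIdeal ∧
      Ideal.absNorm P₂.asIdeal = Ideal.absNorm P.asIdeal := by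
  classical
  let q : ∀ Q : HeightOneSpectrum (𝓞 L), primeBelow K Q = P → P.asIdeal.primesOver (𝓞 L) :=
    fun Q hQ ↦ ⟨Q.asIdeal, Q.isPrime, ⟨(congrArg HeightOneSpectrum.asIdeal hQ).symm⟩⟩
  have hq : q P₁ h₁ ≠ q P₂ h₂ := fun h ↦ hne (HeightOneSpectrum.ext (congrArg Subtype.val h))
  have hsum := Ideal.sum_ramification_inertia_eq_finrank P.asIdeal (S := 𝓞 L)
  rw [(IsFractionRing.finrank_eq (𝓞 K) K (𝓞 L) L).symm, h2] at hsum
  have hle := Finset.sum_le_sum_of_subset (s := {q P₁ h₁, q P₂ h₂}) (t := Finset.univ)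
    (f := fun q ↦ q.1.ramificationIdx (𝓞 K) * q.1.inertiaDeg (𝓞 K)) (Finset.subset_univ _)
  rw [hsum, Finset.sum_pair hq] at hle
  change P₁.asIdeal.ramificationIdx (𝓞 K) * P₁.asIdeal.inertiaDeg (𝓞 K) +
    P₂.asIdeal.ramificationIdx (𝓞 K) * P₂.asIdeal.inertiaDeg (𝓞 K) ≤ 2 at hle
  have := P₁.isPrime
  have := P₂.isPrime
  have r₁ := Ideal.ramificationIdx_pos P₁.asIdeal (𝓞 K)
  have r₂ := Ideal.ramificationIdx_pos P₂.asIdeal (𝓞 K)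
  have i₁ := Ideal.inertiaDeg_pos P₁.asIdeal (𝓞 K)
  have i₂ := Ideal.inertiaDeg_pos P₂.asIdeal (𝓞 K)
  have f₁ : P₁.asIdeal.inertiaDeg (𝓞 K) = 1 := by nlinarith
  have f₂ : P₂.asIdeal.inertiaDeg (𝓞 K) = 1 := by nlinarith
  have n₁ := absNorm_primeBelow_pow (K := K) P₁
  have n₂ := absNorm_primeBelow_pow (K := K) P₂
  rw [f₁, h₁, pow_one] at n₁
  rw [f₂, h₂, pow_one] at n₂
  exact ⟨n₁.symm, n₂.symm⟩

theorem two_mul_primeSum_squarePrimes_le (h2 : Module.finrank K L = 2) {c : ℤ} {α : 𝓞 L}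
    (hα : α ^ 2 = c) (σ : 𝓞 L ≃ₐ[𝓞 K] 𝓞 L) (hσ : σ α = -α) {s : ℝ} (hs : 1 < s) :
    2 * primeSum (squarePrimes K c) s ≤
      primeSum (Set.univ : Set (HeightOneSpectrum (𝓞 L))) s := by
  refine two_mul_primeSum_le _ (fun P hP ↦ ?_) hs
  obtain ⟨r, hr, hdvd⟩ := exists_sq_eq_of_mem_squarePrimes hP
  obtain ⟨⟨Q, hQ, hQP⟩⟩ := P.asIdeal.nonempty_primesOver (S := 𝓞 L)
  have hQ0 : Q ≠ ⊥ := Ideal.ne_bot_of_liesOver_of_ne_bot P.ne_bot Q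
  let P₁ : HeightOneSpectrum (𝓞 L) := ⟨Q, hQ, hQ0⟩
  let P₂ : HeightOneSpectrum (𝓞 L) := ⟨Q.comap σ, Ideal.comap_isPrime σ Q, fun h ↦ hQ0 <| by
    rw [eq_bot_iff]
    intro x hx
    have h3 : σ.symm x ∈ Q.comap σ := by simpa using hx
    rw [h, Ideal.mem_bot] at h3
    simpa using h3⟩
  have h₁ : primeBelow K P₁ = P := HeightOneSpectrum.ext hQP.over.symm
  have h₂ : primeBelow K P₂ = P := by
    refine HeightOneSpectrum.ext ?_
    rw [hQP.over]
    ext x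
    simp [primeBelow, P₂, Ideal.mem_comap]
  have hmem : ∀ m : ℤ, (Ideal.absNorm P.asIdeal : ℤ) ∣ m → (m : 𝓞 L) ∈ Q := by
    rintro _ ⟨m, rfl⟩
    push_cast
    refine Q.mul_mem_right _ ?_
    simpa using (SetLike.ext_iff.mp hQP.over _).mp P.asIdeal.absNorm_mem
  have hne : P₁ ≠ P₂ := by
    intro h
    have hQσ : Q = Q.comap σ := congrArg HeightOneSpectrum.asIdeal h
    have hprod : (α - r) * (α + r) ∈ Q := by
      have := hmem _ hdvd
      push_cast at this
      rw [← hα] at this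
      convert this using 1
      ring
    have h2r : ((2 * r : ℤ) : 𝓞 L) ∈ Q := by
      rcases hQ.mem_or_mem hprod with h3 | h3
      · have h4 := h3
        rw [hQσ, Ideal.mem_comap, map_sub, hσ, map_intCast] at h4
        have h5 := Q.neg_mem (Q.add_mem h3 h4)
        convert h5 using 1
        push_cast; ring
      · have h4 := h3
        rw [hQσ, Ideal.mem_comap, map_add, hσ, map_intCast] at h4
        have h5 := Q.add_mem h3 h4
        convert h5 using 1
        push_cast; ring
    obtain ⟨u, v, huv⟩ := hr
    refine hQ.ne_top ((Ideal.eq_top_iff_one _).mpr ?_)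
    have h6 := Q.add_mem (Q.mul_mem_left u h2r) (Q.mul_mem_left v (hmem _ dvd_rfl))
    have h7 : ((u * (2 * r) + v * (Ideal.absNorm P.asIdeal : ℤ) : ℤ) : 𝓞 L) = 1 := by
      rw [huv]; simp
    rw [← h7]
    push_cast at h6 ⊢
    exact h6
  exact ⟨P₁, P₂, hne, h₁, h₂, absNorm_eq_of_two_primes_above h2 hne h₁ h₂⟩

theorem fact_sq_ne {K : Type*} [Field K] {c : K} (hc : ¬ IsSquare c) :
    Fact (∀ r : K, r ^ 2 ≠ c + 0 * r) :=
  ⟨fun r hr ↦ hc ⟨r, by rw [← sq, hr]; ring⟩⟩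

theorem exists_ringOfIntegers_sq_eq {L : Type*} [Field L] {x : L} {c : ℤ}
    (hx : x ^ 2 = c) : ∃ α : 𝓞 L, algebraMap (𝓞 L) L α = x ∧ α ^ 2 = c := by
  have hx_int : IsIntegral ℤ x := by
    refine IsIntegral.of_pow two_pos ?_
    rw [hx]
    exact isIntegral_algebraMap (x := c)
  obtain ⟨α, hα⟩ : ∃ α : 𝓞 L, algebraMap (𝓞 L) L α = x := ⟨⟨x, hx_int⟩, rfl⟩
  refine ⟨α, hα, ?_⟩
  ext1
  change algebraMap (𝓞 L) L (α ^ 2) = algebraMap (𝓞 L) L c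
  rw [map_pow, hα, hx, map_intCast]

theorem omega_sq {K : Type*} [Field K] (c : K) :
    (QuadraticAlgebra.omega : QuadraticAlgebra K c 0) ^ 2 = algebraMap K _ c := by
  rw [sq, QuadraticAlgebra.omega_mul_omega_eq_mk]
  rfl

theorem exists_two_mul_primeSum_squarePrimes_le (K : Type*) [Field K] [NumberField K] {c : ℤ}
    (hc : ¬ IsSquare (c : K)) :
    ∃ C, ∀ᶠ s in 𝓝[>] (1 : ℝ), 2 * primeSum (squarePrimes K c) s ≤ -Real.log (s - 1) + C := by
  have := fact_sq_ne hc
  let L := QuadraticAlgebra K (c : K) 0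
  have : NumberField L := of_module_finite K L
  have hω : (QuadraticAlgebra.omega : L) ^ 2 = algebraMap K L c := omega_sq (c : K)
  rw [map_intCast] at hω
  obtain ⟨α, hαω, hα⟩ := exists_ringOfIntegers_sq_eq hω
  let τ : L ≃ₐ[K] L := AlgEquiv.ofRingEquiv (f := starRingAut) fun r ↦ by
    change star (algebraMap K (QuadraticAlgebra K (c : K) 0) r) = algebraMap K _ r
    ext <;> simp
  obtain ⟨C, hC⟩ := exists_abs_tsum_prime_add_log_le L
  refine ⟨C, ?_⟩
  filter_upwards [hC, self_mem_nhdsWithin] with s hs hs1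
  have := two_mul_primeSum_squarePrimes_le (QuadraticAlgebra.finrank_eq_two (c : K) 0) hα
    (RingOfIntegers.mapAlgEquiv τ) ?_ hs1
  · rw [primeSum_univ] at this
    linarith [(abs_le.mp hs).2]
  · ext1
    change τ (algebraMap (𝓞 L) L α) = -algebraMap (𝓞 L) L α
    rw [hαω]
    change star (QuadraticAlgebra.omega : L) = -QuadraticAlgebra.omega
    ext <;> simp

end NumberField

namespace NumberField

open IsDedekindDomain Filter Topology
open scoped nonZeroDivisors

/-- The primes whose norm is a rational prime `p` not dividing `2ab` with `(a/p) = ε` and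
`(b/p) = δ`. -/
def symbolPrimes (K : Type*) [Field K] [NumberField K] (a b ε δ : ℤ) :
    Set (HeightOneSpectrum (𝓞 K)) :=
  goodPrimes K (2 * (a * b)) ∩ {P | jacobiSym a (Ideal.absNorm P.asIdeal) = ε ∧
    jacobiSym b (Ideal.absNorm P.asIdeal) = δ}

theorem goodPrimes_mono {K : Type*} [Field K] [NumberField K] {m n : ℤ} (h : m ∣ n) :
    goodPrimes K n ⊆ goodPrimes K m :=
  fun _ hP ↦ ⟨hP.1, fun h1 ↦ hP.2 (h1.trans h)⟩

theorem jacobiSym_absNorm_eq_one {L : Type*} [Field L] [NumberField L] {α : 𝓞 L} {c : ℤ}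
    (hα : α ^ 2 = c) {P : HeightOneSpectrum (𝓞 L)} (hP : P ∈ goodPrimes L c) :
    jacobiSym c (Ideal.absNorm P.asIdeal) = 1 := by
  obtain ⟨hp, hc⟩ := hP
  have hcard : Nat.card (𝓞 L ⧸ P.asIdeal) = Ideal.absNorm P.asIdeal := by
    rw [Ideal.absNorm_apply, Submodule.cardQuot_apply]
  have : Finite (𝓞 L ⧸ P.asIdeal) := Nat.finite_of_card_ne_zero (hcard ▸ hp.ne_zero)
  have := Fintype.ofFinite (𝓞 L ⧸ P.asIdeal)
  rw [Nat.card_eq_fintype_card] at hcard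
  set p := Ideal.absNorm P.asIdeal
  have := Fact.mk hp
  let e := ZMod.ringEquivOfPrime (𝓞 L ⧸ P.asIdeal) hp hcard
  rw [← jacobiSym.legendreSym.to_jacobiSym, legendreSym.eq_one_iff p fun h ↦
    hc ((ZMod.intCast_zmod_eq_zero_iff_dvd c p).mp h)]
  refine ⟨e.symm (Ideal.Quotient.mk _ α), ?_⟩
  rw [← map_mul, ← map_mul, ← sq, hα]
  simp

theorem exists_le_mul_primeSum_symbolPrimes {K L : Type*} [Field K] [NumberField K] [Field L]
    [NumberField L] [Algebra K L] {a b : ℤ} (ha : a ≠ 0) (hb : b ≠ 0) {α β : 𝓞 L}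
    (hα : α ^ 2 = a) (hβ : β ^ 2 = b) :
    ∃ C : ℝ, ∀ᶠ s in 𝓝[>] (1 : ℝ), -Real.log (s - 1) - C ≤
      Module.finrank (𝓞 K) (𝓞 L) * primeSum (symbolPrimes K a b 1 1) s := by
  obtain ⟨C₁, h₁⟩ := exists_abs_tsum_prime_add_log_le L
  obtain ⟨C₂, h₂⟩ := exists_primeSum_compl_goodPrimes_le L (m := 2 * (a * b)) (by positivity)
  refine ⟨C₁ + C₂, ?_⟩
  filter_upwards [h₁, self_mem_nhdsWithin] with s hs (hs1 : 1 < s)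
  have h3 := h₂ s hs1
  have h4 := primeSum_union (disjoint_compl_right (a := goodPrimes L (2 * (a * b)))) hs1
  rw [Set.union_compl_self, primeSum_univ] at h4
  refine le_trans ?_ (primeSum_preimage_le (L := L) (symbolPrimes K a b 1 1) hs1)
  refine le_trans ?_ (primeSum_mono (A := goodPrimes L (2 * (a * b))) (fun P hP ↦ ?_) hs1)
  · linarith [(abs_le.mp hs).1]
  · have h5 := jacobiSym_absNorm_eq_one hα
      (goodPrimes_mono ⟨2 * b, by ring⟩ hP)
    have h6 := jacobiSym_absNorm_eq_one hβ
      (goodPrimes_mono ⟨2 * a, by ring⟩ hP)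
    have h7 := absNorm_primeBelow_of_prime (K := K) hP.1
    refine ⟨hP.1, ⟨?_, ?_⟩, ?_, ?_⟩
    · rw [h7]; exact hP.1
    · rw [h7]; exact hP.2
    · rw [h7]; exact h5
    · rw [h7]; exact h6

theorem not_isSquare_algebraMap_quadraticAlgebra {K : Type*} [Field K] [CharZero K] {a b : K}
    (hb : ¬ IsSquare b) (hab : ¬ IsSquare (a * b)) :
    ¬ IsSquare (algebraMap K (QuadraticAlgebra K a 0) b) := by
  rintro ⟨x, hx⟩
  have hre : b = x.re * x.re + a * x.im * x.im := by
    simpa using congrArg QuadraticAlgebra.re hx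
  have him : 0 = x.re * x.im + x.im * x.re := by
    simpa using congrArg QuadraticAlgebra.im hx
  have h0 : x.re * x.im = 0 := by linear_combination -him / 2
  rcases mul_eq_zero.mp h0 with h | h
  · exact hab ⟨a * x.im, by rw [hre, h]; ring⟩
  · exact hb ⟨x.re, by rw [hre, h]; ring⟩

theorem exists_biquadratic_le_mul_primeSum (K : Type*) [Field K] [NumberField K] {a b : ℤ}
    (ha : ¬ IsSquare (a : K)) (hb : ¬ IsSquare (b : K)) (hab : ¬ IsSquare ((a * b : ℤ) : K)) :
    ∃ (d : ℕ) (C : ℝ), ∀ᶠ s in 𝓝[>] (1 : ℝ), -Real.log (s - 1) - C ≤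
      d * primeSum (symbolPrimes K a b 1 1) s := by
  have := fact_sq_ne ha
  let L := QuadraticAlgebra K (a : K) 0
  have : NumberField L := of_module_finite K L
  have hω : (QuadraticAlgebra.omega : L) ^ 2 = algebraMap K L a := omega_sq (a : K)
  have hbL : ¬ IsSquare (algebraMap K L b) :=
    not_isSquare_algebraMap_quadraticAlgebra hb (by exact_mod_cast hab)
  rw [map_intCast] at hω hbL
  have := fact_sq_ne hbL
  let L' := QuadraticAlgebra L (b : L) 0
  have : NumberField L' := of_module_finite L L'
  have hω' : (QuadraticAlgebra.omega : L') ^ 2 = algebraMap L L' b := omega_sq (b : L)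
  rw [map_intCast] at hω'
  obtain ⟨β, -, hβ⟩ := exists_ringOfIntegers_sq_eq hω'
  obtain ⟨α, -, hα⟩ := exists_ringOfIntegers_sq_eq (L := L')
    (x := algebraMap L L' QuadraticAlgebra.omega) (c := a) (by rw [← map_pow, hω, map_intCast])
  exact ⟨_, exists_le_mul_primeSum_symbolPrimes (K := K) (by rintro rfl; simp at ha)
    (by rintro rfl; simp at hb) hα hβ⟩

end NumberField

namespace NumberField

open IsDedekindDomain Filter Topology
open scoped nonZeroDivisors

variable {K : Type*} [Field K] [NumberField K]

/-- A multiplicative function on the nonzero ideals that is trivial on principal ideals factors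
through the class group. -/
theorem exists_classGroup_hom (χ : (Ideal (𝓞 K))⁰ →* ℝ)
    (hχ : ∀ (z : 𝓞 K) (hz : z ≠ 0), χ ⟨Ideal.span {z}, mem_nonZeroDivisors_of_ne_zero
      (by simpa using hz)⟩ = 1) :
    ∃ ψ : ClassGroup (𝓞 K) →* ℝ, ∀ I, ψ (ClassGroup.mk0 I) = χ I := by
  have key : ∀ I J : (Ideal (𝓞 K))⁰, ClassGroup.mk0 I = ClassGroup.mk0 J → χ I = χ J := by
    intro I J h
    obtain ⟨x, y, hx, hy, hxy⟩ := ClassGroup.mk0_eq_mk0_iff.mp h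
    have h1 : (⟨Ideal.span {x}, mem_nonZeroDivisors_of_ne_zero (by simpa using hx)⟩ :
        (Ideal (𝓞 K))⁰) * I =
      ⟨Ideal.span {y}, mem_nonZeroDivisors_of_ne_zero (by simpa using hy)⟩ * J := Subtype.ext hxy
    have h2 := congrArg χ h1
    rwa [map_mul, map_mul, hχ x hx, hχ y hy, one_mul, one_mul] at h2
  choose r hr using ClassGroup.mk0_surjective (R := 𝓞 K)
  refine ⟨⟨⟨fun C ↦ χ (r C), ?_⟩, fun C D ↦ ?_⟩, fun I ↦ key _ _ (hr _)⟩
  · rw [← map_one χ]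
    exact key _ _ (by rw [hr, map_one])
  · change χ (r (C * D)) = χ (r C) * χ (r D)
    rw [← map_mul]
    exact key _ _ (by rw [map_mul, hr, hr, hr])

theorem tsum_sign_mul_eq {ε : HeightOneSpectrum (𝓞 K) → ℝ} (hε : ∀ P, ε P = 1 ∨ ε P = -1) {s : ℝ}
    (hs : 1 < s) : ∑' P, ε P * (Ideal.absNorm P.asIdeal : ℝ) ^ (-s) =
      ∑' P : HeightOneSpectrum (𝓞 K), (Ideal.absNorm P.asIdeal : ℝ) ^ (-s) -
        2 * primeSum {P | ε P = -1} s := by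
  have h := summable_absNorm_prime_rpow (K := K) hs
  rw [primeSum, ← tsum_mul_left, ← h.tsum_sub ((h.indicator _).mul_left 2)]
  refine tsum_congr fun P ↦ ?_
  rcases hε P with h1 | h1
  · rw [Set.indicator_of_notMem, h1]
    · ring
    · rw [Set.mem_ofPred_eq, h1]; norm_num
  · rw [Set.indicator_of_mem (Set.mem_ofPred_eq ▸ h1), h1]
    ring

theorem primeSum_union_le (A B : Set (HeightOneSpectrum (𝓞 K))) {s : ℝ} (hs : 1 < s) :
    primeSum (A ∪ B) s ≤ primeSum A s + primeSum B s := by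
  rw [← Set.union_sdiff_self, primeSum_union Set.disjoint_sdiff_right hs]
  grw [primeSum_mono (Set.sdiff_subset : B \ A ⊆ B) hs]

section

variable (K) (a b : ℤ)

theorem disjoint_symbolPrimes {ε δ ε' δ' : ℤ} (h : ε ≠ ε' ∨ δ ≠ δ') :
    Disjoint (symbolPrimes K a b ε δ) (symbolPrimes K a b ε' δ') := by
  rw [Set.disjoint_left]
  rintro P ⟨-, h1, h2⟩ ⟨-, h3, h4⟩
  rcases h with h | h
  · exact h (h1.symm.trans h3)
  · exact h (h2.symm.trans h4)

theorem symbolPrimes_union_subset_left :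
    symbolPrimes K a b 1 1 ∪ symbolPrimes K a b 1 (-1) ⊆ squarePrimes K a := by
  rintro P (⟨h, h1, -⟩ | ⟨h, h1, -⟩) <;> exact ⟨goodPrimes_mono ⟨b, by ring⟩ h, h1⟩

theorem symbolPrimes_union_subset_right :
    symbolPrimes K a b 1 1 ∪ symbolPrimes K a b (-1) 1 ⊆ squarePrimes K b := by
  rintro P (⟨h, -, h1⟩ | ⟨h, -, h1⟩) <;> exact ⟨goodPrimes_mono ⟨a, by ring⟩ h, h1⟩

theorem symbolPrimes_union_subset_mul :
    symbolPrimes K a b 1 1 ∪ symbolPrimes K a b (-1) (-1) ⊆ squarePrimes K (a * b) := by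
  rintro P (⟨h, h1, h2⟩ | ⟨h, h1, h2⟩) <;>
  · refine ⟨h, ?_⟩
    rw [Set.mem_ofPred_eq, jacobiSym.mul_left, h1, h2]
    rfl

theorem goodPrimes_subset_symbolPrimes : goodPrimes K (2 * (a * b)) ⊆
    (symbolPrimes K a b 1 1 ∪ symbolPrimes K a b 1 (-1)) ∪
      (symbolPrimes K a b (-1) 1 ∪ symbolPrimes K a b (-1) (-1)) := by
  intro P hP
  have hcop : ∀ c : ℤ, c ∣ 2 * (a * b) → c.gcd (Ideal.absNorm P.asIdeal) = 1 := fun c hc ↦ by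
    rw [← Int.isCoprime_iff_gcd_eq_one, isCoprime_comm,
      (Nat.prime_iff_prime_int.mp hP.1).coprime_iff_not_dvd]
    exact fun h ↦ hP.2 (h.trans hc)
  rcases jacobiSym.eq_one_or_neg_one (hcop a ⟨2 * b, by ring⟩) with h1 | h1 <;>
  rcases jacobiSym.eq_one_or_neg_one (hcop b ⟨2 * a, by ring⟩) with h2 | h2
  · exact .inl (.inl ⟨hP, h1, h2⟩)
  · exact .inl (.inr ⟨hP, h1, h2⟩)
  · exact .inr (.inl ⟨hP, h1, h2⟩)
  · exact .inr (.inr ⟨hP, h1, h2⟩)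

end

theorem tendsto_log_sub_one_nhdsGT_one :
    Tendsto (fun s : ℝ ↦ Real.log (s - 1)) (𝓝[>] 1) atBot := by
  refine Real.tendsto_log_nhdsGT_zero.comp (tendsto_nhdsWithin_iff.mpr ⟨?_, ?_⟩)
  · refine tendsto_nhdsWithin_of_tendsto_nhds ?_
    exact Continuous.tendsto' (by fun_prop) _ _ (by simp)
  · filter_upwards [self_mem_nhdsWithin] with s (hs : 1 < s)
    exact sub_pos.mpr hs

theorem exists_inertChar_absNorm_eq_neg_one (K : Type*) [Field K] [NumberField K] {a b : ℤ}
    (ha : ¬ IsSquare (a : K)) (hb : ¬ IsSquare (b : K)) (hab : ¬ IsSquare ((a * b : ℤ) : K)) :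
    ∃ z : 𝓞 K, z ≠ 0 ∧ inertChar a b (Ideal.absNorm (Ideal.span {z})) = -1 := by
  by_contra! hcon
  have ha0 : a ≠ 0 := by rintro rfl; simp at ha
  have hb0 : b ≠ 0 := by rintro rfl; simp at hb
  let χ : (Ideal (𝓞 K))⁰ →* ℝ :=
    { toFun := fun I ↦ inertChar a b (Ideal.absNorm (I : Ideal (𝓞 K)))
      map_one' := by simp [inertChar_one]
      map_mul' := fun I J ↦ by
        have hI := Ideal.absNorm_ne_zero_of_nonZeroDivisors I
        have hJ := Ideal.absNorm_ne_zero_of_nonZeroDivisors J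
        rw [Submonoid.coe_mul, map_mul, inertChar_mul hI hJ, Int.cast_mul] }
  have hχ : ∀ I, χ I = 1 ∨ χ I = -1 := fun I ↦ by
    change (inertChar a b _ : ℝ) = 1 ∨ (inertChar a b _ : ℝ) = -1
    exact_mod_cast inertChar_eq_or ..
  obtain ⟨ψ, hψ⟩ := exists_classGroup_hom χ fun z hz ↦ by
    change (inertChar a b (Ideal.absNorm (Ideal.span {z})) : ℝ) = 1
    exact_mod_cast (inertChar_eq_or ..).resolve_right (hcon z hz)
  have hprime : ∀ P : HeightOneSpectrum (𝓞 K), P ∈ goodPrimes K (2 * (a * b)) →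
      (χ (primeIdeal P) = -1 ↔ P ∈ symbolPrimes K a b (-1) (-1)) := fun P hP ↦ by
    change (inertChar a b (Ideal.absNorm P.asIdeal) : ℝ) = -1 ↔ _
    rw [inertChar_prime hP.1, inertSign]
    constructor
    · intro h
      split_ifs at h with h1
      · exact ⟨hP, h1⟩
      · norm_num at h
    · rintro ⟨-, h⟩
      rw [if_pos (by exact h)]
      simp
  set PP := symbolPrimes K a b 1 1
  set PM := symbolPrimes K a b 1 (-1)
  set MP := symbolPrimes K a b (-1) 1
  set MM := symbolPrimes K a b (-1) (-1)
  obtain ⟨C₀, h₀⟩ := exists_abs_tsum_prime_add_log_le K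
  obtain ⟨C₁, h₁⟩ := exists_primeSum_compl_goodPrimes_le K (m := 2 * (a * b)) (by positivity)
  obtain ⟨C₂, h₂⟩ := exists_two_mul_primeSum_squarePrimes_le K ha
  obtain ⟨C₃, h₃⟩ := exists_two_mul_primeSum_squarePrimes_le K hb
  obtain ⟨C₄, h₄⟩ := exists_two_mul_primeSum_squarePrimes_le K hab
  obtain ⟨d, C₅, h₅⟩ := exists_biquadratic_le_mul_primeSum K ha hb hab
  suffices h : ∃ B, ∀ᶠ s in 𝓝[>] (1 : ℝ), primeSum PP s ≤ B by
    obtain ⟨B, hB⟩ := h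
    have hlog := tendsto_log_sub_one_nhdsGT_one.eventually_lt_atBot (-(C₅ + d * B))
    obtain ⟨s, hs1, hs2, hs3⟩ := (hB.and (hlog.and h₅)).exists
    have := mul_le_mul_of_nonneg_left hs1 (Nat.cast_nonneg (α := ℝ) d)
    linarith
  have htotal : ∀ s : ℝ, 1 < s → ∑' P : HeightOneSpectrum (𝓞 K),
      (Ideal.absNorm P.asIdeal : ℝ) ^ (-s) ≤
      primeSum PP s + primeSum PM s + (primeSum MP s + primeSum MM s) + C₁ := fun s hs ↦ by
    have h6 := primeSum_union (disjoint_compl_right (a := goodPrimes K (2 * (a * b)))) hs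
    have h7 := primeSum_mono (goodPrimes_subset_symbolPrimes K a b) hs
    rw [Set.union_compl_self, primeSum_univ] at h6
    linarith [h₁ s hs, primeSum_union_le (PP ∪ PM) (MP ∪ MM) hs, primeSum_union_le PP PM hs,
      primeSum_union_le MP MM hs]
  by_cases hψ1 : ∃ C, ψ C ≠ 1
  · obtain ⟨B, hB⟩ := exists_tsum_prime_class_le (ψ := ψ) (fun C ↦ by
      obtain ⟨I, rfl⟩ := ClassGroup.mk0_surjective C
      rw [hψ]
      rcases hχ I with h | h <;> rw [h] <;> simp) hψ1
    refine ⟨(B + C₀ + 2 * C₁ + C₄) / 2, ?_⟩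
    filter_upwards [hB, h₀, h₄, self_mem_nhdsWithin] with s hs hs0 hs4 (hs1 : 1 < s)
    simp_rw [hψ] at hs
    rw [tsum_sign_mul_eq (fun P ↦ hχ (primeIdeal P)) hs1] at hs
    have h6 : primeSum {P | χ (primeIdeal P) = -1} s ≤
        primeSum MM s + primeSum (goodPrimes K (2 * (a * b)))ᶜ s := by
      refine le_trans (primeSum_mono (fun P hP ↦ ?_) hs1) (primeSum_union_le _ _ hs1)
      by_cases hPg : P ∈ goodPrimes K (2 * (a * b))
      · exact .inl ((hprime P hPg).mp hP)
      · exact .inr hPg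
    have h7 := primeSum_mono (symbolPrimes_union_subset_mul K a b) hs1
    rw [primeSum_union (disjoint_symbolPrimes K a b (.inl (by decide))) hs1] at h7
    linarith [h₁ s hs1, (abs_le.mp hs0).1]
  · push Not at hψ1
    have hMM : MM = ∅ := by
      refine Set.eq_empty_of_forall_notMem fun P hP ↦ ?_
      have h6 := (hprime P hP.1).mpr hP
      rw [← hψ, hψ1] at h6
      norm_num at h6
    have hMM0 : ∀ s, primeSum MM s = 0 := fun s ↦ by rw [hMM]; simp [primeSum]
    refine ⟨C₀ + C₁ + C₂ / 2 + C₃ / 2, ?_⟩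
    filter_upwards [h₀, h₂, h₃, self_mem_nhdsWithin] with s hs0 hs2 hs3 (hs1 : 1 < s)
    have h7 := primeSum_mono (symbolPrimes_union_subset_left K a b) hs1
    rw [primeSum_union (disjoint_symbolPrimes K a b (.inr (by decide))) hs1] at h7
    have h8 := primeSum_mono (symbolPrimes_union_subset_right K a b) hs1
    rw [primeSum_union (disjoint_symbolPrimes K a b (.inl (by decide))) hs1] at h8
    linarith [htotal s hs1, hMM0 s, (abs_le.mp hs0).1]

end NumberField

namespace NumberField

theorem algebra_norm_quadraticAlgebra {K : Type*} [Field K] {c : K}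
    [Fact (∀ r : K, r ^ 2 ≠ c + 0 * r)] (z : QuadraticAlgebra K c 0) :
    Algebra.norm K z = z.re ^ 2 - c * z.im ^ 2 := by
  have h := QuadraticAlgebra.det_toLinearMap_eq_norm z
  rw [QuadraticAlgebra.norm_def] at h
  rw [Algebra.norm_apply]
  refine (congrArg LinearMap.det ?_).trans (h.trans (by ring))
  ext w <;> simp

theorem exists_norm_sq_sub_eq {k : Type*} [Field k] [NumberField k] {c : ℤ}
    (hc : ¬ IsSquare (c : k)) (x y : k) :
    ∃ X Y : ℚ, Algebra.norm ℚ (x ^ 2 - c * y ^ 2) = X ^ 2 - c * Y ^ 2 := by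
  have hcQ : ¬ IsSquare (c : ℚ) := fun h ↦ hc (by simpa using h.map (algebraMap ℚ k))
  have := fact_sq_ne hc
  have := fact_sq_ne hcQ
  let L := QuadraticAlgebra k (c : k) 0
  let F := QuadraticAlgebra ℚ (c : ℚ) 0
  have : NumberField L := of_module_finite k L
  have : NumberField F := of_module_finite ℚ F
  have hω : (QuadraticAlgebra.omega : L) ^ 2 = algebraMap k L c := omega_sq (c : k)
  let φ : F →ₐ[ℚ] L := QuadraticAlgebra.lift ⟨QuadraticAlgebra.omega, by
    rw [← sq, hω, zero_smul, add_zero, Algebra.smul_def, mul_one, map_intCast, map_intCast]⟩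
  let : Algebra F L := φ.toRingHom.toAlgebra
  have : IsScalarTower ℚ F L := .of_algebraMap_eq fun r ↦ (φ.commutes r).symm
  let z : L := ⟨x, y⟩
  refine ⟨(Algebra.norm F z).re, (Algebra.norm F z).im, ?_⟩
  rw [← algebra_norm_quadraticAlgebra (c := (c : ℚ))]
  have h1 : Algebra.norm k z = x ^ 2 - c * y ^ 2 := algebra_norm_quadraticAlgebra z
  rw [← h1, Algebra.norm_norm]
  exact (Algebra.norm_norm (S := F)).symm

theorem ratInertChar_norm_eq_one {k : Type*} [Field k] [NumberField k] {p q : ℕ}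
    (hpq : LinkedPrimes p q) (hp : ¬ IsSquare ((p : ℤ) : k)) (hq : ¬ IsSquare ((q : ℤ) : k))
    (hmul : ¬ IsSquare ((p * q : ℤ) : k)) {u : kˣ}
    (hu : u ∈ biquadraticNormSubgroup ((p : ℤ) : k) ((q : ℤ) : k)) :
    ratInertChar p q (Algebra.norm ℚ (u : k)) = 1 := by
  have key : ∀ c : ℤ, ¬ IsSquare (c : k) →
      (∀ x y : ℤ, x ^ 2 - c * y ^ 2 ≠ 0 → inertChar p q (x ^ 2 - c * y ^ 2).natAbs = 1) →
      ∀ v ∈ normFormSubgroup (c : k), ratInertChar p q (Algebra.norm ℚ (v : k)) = 1 := by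
    intro c hc h v hv
    obtain ⟨x, y, hxy⟩ := mem_normFormSubgroup.mp hv
    obtain ⟨X, Y, hXY⟩ := exists_norm_sq_sub_eq hc x y
    have h0 : Algebra.norm ℚ (v : k) ≠ 0 := Algebra.norm_ne_zero_iff.mpr v.ne_zero
    rw [hxy, hXY] at h0 ⊢
    exact ratInertChar_sq_sub h X Y h0
  obtain ⟨w, hw, v₃, hv₃, rfl⟩ := Subgroup.mem_sup.mp hu
  obtain ⟨v₁, hv₁, v₂, hv₂, rfl⟩ := Subgroup.mem_sup.mp hw
  have h1 := key p hp (fun x y _ ↦ inertChar_sq_sub_left x y) v₁ hv₁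
  have h2 := key q hq (fun x y _ ↦ inertChar_sq_sub_right x y) v₂ hv₂
  have h3 := key (p * q) hmul
    (fun x y h ↦ hpq.inertChar_sq_sub_mul _ x y rfl (Int.natAbs_ne_zero.mpr h)) v₃
    (by push_cast at hv₃ ⊢; exact hv₃)
  have h0 : ∀ v : kˣ, Algebra.norm ℚ (v : k) ≠ 0 := fun v ↦
    Algebra.norm_ne_zero_iff.mpr v.ne_zero
  rw [Units.val_mul, Units.val_mul, map_mul, map_mul,
    ratInertChar_mul (mul_ne_zero (h0 _) (h0 _)) (h0 _), ratInertChar_mul (h0 _) (h0 _), h1, h2, h3]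
  rfl

theorem exists_sq_sub_notMem {k : Type*} [Field k] [NumberField k] {p q : ℕ}
    (hpq : LinkedPrimes p q) (hp : ¬ IsSquare ((p : ℤ) : k)) (hq : ¬ IsSquare ((q : ℤ) : k))
    (hmul : ¬ IsSquare ((p * q : ℤ) : k)) {t : k} (h1 : ¬ IsSquare t) (h2 : ¬ IsSquare (p * t))
    (h3 : ¬ IsSquare (q * t)) (h4 : ¬ IsSquare (p * q * t)) :
    ∃ x y : k, ∃ u : kˣ, (u : k) = x ^ 2 - q * t * y ^ 2 ∧
      u ∉ biquadraticNormSubgroup ((p : ℤ) : k) ((q : ℤ) : k) := by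
  have hp0 : (p : k) ≠ 0 := by rintro h; simp [h] at hp
  have hq0 : (q : k) ≠ 0 := by rintro h; simp [h] at hq
  have cancel : ∀ {x y : k}, y ≠ 0 → IsSquare (y ^ 2 * x) → IsSquare x := fun {x y} hy ⟨w, hw⟩ ↦
    ⟨w / y, by field_simp; linear_combination hw⟩
  have := fact_sq_ne h3
  let M := QuadraticAlgebra k (q * t) 0
  have : NumberField M := of_module_finite k M
  have hpM : ¬ IsSquare (algebraMap k M (p : ℤ)) :=
    not_isSquare_algebraMap_quadraticAlgebra hp fun h ↦ h4 (by
      convert h using 1; push_cast; ring)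
  have hqM : ¬ IsSquare (algebraMap k M (q : ℤ)) :=
    not_isSquare_algebraMap_quadraticAlgebra hq fun h ↦ h1 (cancel hq0 (by
      convert h using 1; push_cast; ring))
  have hmulM : ¬ IsSquare (algebraMap k M (p * q : ℤ)) :=
    not_isSquare_algebraMap_quadraticAlgebra hmul fun h ↦ h2 (cancel hq0 (by
      convert h using 1; push_cast; ring))
  rw [map_intCast] at hpM hqM hmulM
  obtain ⟨z, hz, hz1⟩ := exists_inertChar_absNorm_eq_neg_one M hpM hqM hmulM
  let w : M := z
  have hw : Algebra.norm k w = w.re ^ 2 - q * t * w.im ^ 2 := algebra_norm_quadraticAlgebra w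
  have hw0 : Algebra.norm k w ≠ 0 :=
    Algebra.norm_ne_zero_iff.mpr (RingOfIntegers.coe_ne_zero_iff.mpr hz)
  refine ⟨w.re, w.im, Units.mk0 _ hw0, hw, fun hmem ↦ ?_⟩
  have h5 := ratInertChar_norm_eq_one hpq hp hq hmul hmem
  rw [Units.val_mk0, Algebra.norm_norm] at h5
  have h6 : Algebra.norm ℚ w = (Algebra.norm ℤ z : ℤ) := (Algebra.coe_norm_int z).symm
  rw [h6, ratInertChar_intCast, ← Ideal.absNorm_span_singleton, hz1] at h5
  · norm_num at h5
  · exact Algebra.norm_ne_zero_iff.mpr hz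

end NumberField

theorem Nat.exists_prime_gt_and_modEq_and_modEq {m n a b : ℕ} (hm : m ≠ 0) (hn : n ≠ 0)
    (hmn : m.Coprime n) (ha : a.Coprime m) (hb : b.Coprime n) (N : ℕ) :
    ∃ p > N, p.Prime ∧ p ≡ a [MOD m] ∧ p ≡ b [MOD n] := by
  obtain ⟨x, hx1, hx2⟩ := Nat.chineseRemainder hmn a b
  have : NeZero (m * n) := ⟨mul_ne_zero hm hn⟩
  have hx : IsUnit (x : ZMod (m * n)) := by
    rw [ZMod.isUnit_iff_coprime]
    exact Nat.Coprime.mul_right (hx1.gcd_eq.trans ha) (hx2.gcd_eq.trans hb)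
  obtain ⟨p, hpN, hp, hpx⟩ := Nat.forall_exists_prime_gt_and_eq_mod hx N
  rw [ZMod.natCast_eq_natCast_iff] at hpx
  exact ⟨p, hpN, hp, (hpx.of_mul_right n).trans hx1, (hpx.of_mul_left m).trans hx2⟩

theorem Nat.Prime.exists_coprime_and_jacobiSym_eq_neg_one {l : ℕ} (hl : l.Prime) (h2 : l ≠ 2) :
    ∃ g : ℕ, g.Coprime l ∧ jacobiSym g l = -1 := by
  have := Fact.mk hl
  obtain ⟨g, hg⟩ := FiniteField.exists_nonsquare (F := ZMod l) (by rwa [ZMod.ringChar_zmod_n])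
  refine ⟨g.val, ?_, ?_⟩
  · rw [← ZMod.isUnit_iff_coprime, ZMod.natCast_zmod_val, isUnit_iff_ne_zero]
    rintro rfl
    exact hg (.zero)
  · rw [← jacobiSym.legendreSym.to_jacobiSym, legendreSym.eq_neg_one_iff]
    simpa using hg

theorem jacobiSym_eq_of_modEq {a b l : ℕ} (h : a ≡ b [MOD l]) : jacobiSym a l = jacobiSym b l := by
  rw [jacobiSym.mod_left a, jacobiSym.mod_left b]
  norm_cast
  rw [h]

namespace NumberField

open Filter Topology

theorem goodPrimes_nonempty (K : Type*) [Field K] [NumberField K] {m : ℤ} (hm : m ≠ 0) :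
    (goodPrimes K m).Nonempty := by
  by_contra h
  rw [Set.not_nonempty_iff_eq_empty] at h
  obtain ⟨C, hC⟩ := exists_primeSum_compl_goodPrimes_le K hm
  obtain ⟨C', hC'⟩ := exists_abs_tsum_prime_add_log_le K
  rw [h, Set.compl_empty] at hC
  obtain ⟨s, hs1, hs2, (hs3 : 1 < s)⟩ :=
    (hC'.and ((tendsto_log_sub_one_nhdsGT_one.eventually_lt_atBot (-(C + C'))).and
      self_mem_nhdsWithin)).exists
  have := hC s hs3
  rw [primeSum_univ] at this
  linarith [(abs_le.mp hs1).1]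

theorem not_isSquare_intCast_of_jacobiSym_eq_neg_one {K : Type*} [Field K] [NumberField K]
    {P : IsDedekindDomain.HeightOneSpectrum (𝓞 K)} (hP : (Ideal.absNorm P.asIdeal).Prime) {c : ℤ}
    (hc : jacobiSym c (Ideal.absNorm P.asIdeal) = -1) : ¬ IsSquare (c : K) := by
  rintro ⟨x, hx⟩
  obtain ⟨α, -, hα⟩ := exists_ringOfIntegers_sq_eq ((sq x).trans hx.symm)
  have h := jacobiSym_absNorm_eq_one hα (P := P) ⟨hP, fun h ↦ ?_⟩
  · rw [h] at hc
    norm_num at hc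
  · have := Fact.mk hP
    rw [← jacobiSym.legendreSym.to_jacobiSym,
      (legendreSym.eq_zero_iff _ _).mpr ((ZMod.intCast_zmod_eq_zero_iff_dvd _ _).mpr h)] at hc
    norm_num at hc

theorem exists_linkedPrimes (K : Type*) [Field K] [NumberField K] :
    ∃ p q : ℕ, LinkedPrimes p q ∧ ¬ IsSquare ((p : ℤ) : K) ∧ ¬ IsSquare ((q : ℤ) : K) ∧
      ¬ IsSquare ((p * q : ℤ) : K) := by
  obtain ⟨P₁, hP₁, h₁⟩ := goodPrimes_nonempty K (m := 2) two_ne_zero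
  have hl₁ := hP₁.ne_zero
  obtain ⟨P₂, hP₂, h₂⟩ := goodPrimes_nonempty K (m := 2 * Ideal.absNorm P₁.asIdeal) (by positivity)
  set l₁ := Ideal.absNorm P₁.asIdeal with hl₁_def
  set l₂ := Ideal.absNorm P₂.asIdeal with hl₂_def
  have h₁2 : l₁ ≠ 2 := fun h ↦ h₁ (by rw [h]; rfl)
  have h₂2 : l₂ ≠ 2 := fun h ↦ h₂ (by rw [h]; exact dvd_mul_right _ _)
  have h12 : l₁ ≠ l₂ := fun h ↦ h₂ (by rw [h]; exact dvd_mul_left _ _)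
  obtain ⟨g₁, hg₁, hg₁'⟩ := hP₁.exists_coprime_and_jacobiSym_eq_neg_one h₁2
  obtain ⟨g₂, hg₂, hg₂'⟩ := hP₂.exists_coprime_and_jacobiSym_eq_neg_one h₂2
  have cop8 : ∀ {l : ℕ}, l.Prime → l ≠ 2 → Nat.Coprime 8 l := fun {l} hl h ↦
    Nat.Coprime.pow_left 3 ((Nat.coprime_primes Nat.prime_two hl).mpr h.symm)
  obtain ⟨p, hpl, hp, hp1, hpg⟩ := Nat.exists_prime_gt_and_modEq_and_modEq (m := 8 * l₂) (n := l₁)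
    (a := 1) (mul_ne_zero (by norm_num) hP₂.ne_zero) hP₁.ne_zero
    (Nat.Coprime.mul_left (cop8 hP₁ h₁2) ((Nat.coprime_primes hP₂ hP₁).mpr h12.symm))
    (Nat.coprime_one_left _) hg₁ (l₁ + l₂)
  obtain ⟨q, hqp, hq, hq1, hqg⟩ := Nat.exists_prime_gt_and_modEq_and_modEq (m := 8 * p * l₁)
    (n := l₂) (a := 1) (mul_ne_zero (mul_ne_zero (by norm_num) hp.ne_zero) hP₁.ne_zero) hP₂.ne_zero
    (Nat.Coprime.mul_left (Nat.Coprime.mul_left (cop8 hP₂ h₂2)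
      ((Nat.coprime_primes hp hP₂).mpr (by lia))) ((Nat.coprime_primes hP₁ hP₂).mpr h12))
    (Nat.coprime_one_left _) hg₂ p
  have hp8 : p % 8 = 1 := hp1.of_mul_right _
  have hq8 : q % 8 = 1 := (hq1.of_mul_right _).of_mul_right _
  have hpl₁ : jacobiSym p l₁ = -1 := (jacobiSym_eq_of_modEq hpg).trans hg₁'
  have hql₂ : jacobiSym q l₂ = -1 := (jacobiSym_eq_of_modEq hqg).trans hg₂'
  have hql₁ : jacobiSym q l₁ = 1 := by
    rw [jacobiSym_eq_of_modEq (hq1.of_mul_left _), Nat.cast_one, jacobiSym.one_left]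
  refine ⟨p, q, ⟨hp, hq, hq8, ?_⟩,
    not_isSquare_intCast_of_jacobiSym_eq_neg_one hP₁ hpl₁,
    not_isSquare_intCast_of_jacobiSym_eq_neg_one hP₂ hql₂,
    not_isSquare_intCast_of_jacobiSym_eq_neg_one hP₁ ?_⟩
  · rw [jacobiSym.quadratic_reciprocity_one_mod_four (by lia) (Nat.odd_iff.mpr (by lia)),
      jacobiSym_eq_of_modEq ((hq1.of_mul_right _).of_mul_left _), Nat.cast_one, jacobiSym.one_left]
  · rw [jacobiSym.mul_left, hpl₁, hql₁]
    rfl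

end NumberField

/-- A subset of `k^n` is diophantine if it is the projection of a zero locus, where arbitrary
coordinate types, and arbitrary finite types of witnesses and equations, are allowed. -/
def IsDiophantineIn {k σ : Type*} [Field k] (A : Set (σ → k)) : Prop :=
  ∃ (τ ι : Type) (_ : Finite τ) (_ : Finite ι) (f : ι → MvPolynomial (σ ⊕ τ) k),
    A = {a | ∃ b : τ → k, ∀ i, MvPolynomial.eval (Sum.elim a b) (f i) = 0}

namespace IsDiophantineIn

open MvPolynomial

variable {k σ : Type*} [Field k] {A B : Set (σ → k)}

lemma isDiophantine {n : ℕ} {A : Set (Fin n → k)} (hA : IsDiophantineIn A) :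
    IsDiophantine k A := by
  obtain ⟨τ, ι, _, _, f, rfl⟩ := hA
  obtain ⟨m, ⟨e⟩⟩ := Finite.exists_equiv_fin τ
  obtain ⟨r, ⟨e'⟩⟩ := Finite.exists_equiv_fin ι
  refine ⟨m, r, fun i ↦ rename (Sum.elim (Fin.castAdd m) (Fin.natAdd n ∘ e)) (f (e'.symm i)), ?_⟩
  have key (a : Fin n → k) (b : Fin m → k) :
      Fin.append a b ∘ Sum.elim (Fin.castAdd m) (Fin.natAdd n ∘ e) = Sum.elim a (b ∘ e) := by
    ext (i | i) <;> simp
  ext a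
  simp only [Set.mem_ofPred_eq, eval_rename, key]
  rw [← (e.arrowCongr (Equiv.refl k)).symm.exists_congr_right]
  refine exists_congr fun b ↦ ?_
  rw [← e'.symm.forall_congr_right]
  rfl

lemma zeroLocus {ι : Type} [Finite ι] (f : ι → MvPolynomial σ k) :
    IsDiophantineIn {a | ∀ i, eval a (f i) = 0} := by
  refine ⟨Empty, ι, inferInstance, inferInstance, fun i ↦ rename Sum.inl (f i), ?_⟩
  ext a
  simp [eval_rename, Sum.elim_comp_inl]

lemma union (hA : IsDiophantineIn A) (hB : IsDiophantineIn B) : IsDiophantineIn (A ∪ B) := by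
  obtain ⟨τ, ι, _, _, f, rfl⟩ := hA
  obtain ⟨τ', ι', _, _, g, rfl⟩ := hB
  refine ⟨τ ⊕ τ', ι × ι', inferInstance, inferInstance,
    fun i ↦ rename (Sum.map id Sum.inl) (f i.1) * rename (Sum.map id Sum.inr) (g i.2), ?_⟩
  ext a
  simp only [Set.mem_union, Set.mem_ofPred_eq, map_mul, eval_rename, mul_eq_zero, Sum.elim_comp_map,
    Function.comp_id]
  constructor
  · rintro (⟨b, hb⟩ | ⟨b, hb⟩)
    · exact ⟨Sum.elim b 0, fun i ↦ Or.inl (by simpa [Sum.elim_comp_inl] using hb i.1)⟩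
    · exact ⟨Sum.elim 0 b, fun i ↦ Or.inr (by simpa [Sum.elim_comp_inr] using hb i.2)⟩
  · rintro ⟨b, hb⟩
    by_contra! h
    obtain ⟨i, hi⟩ := h.1 (b ∘ Sum.inl)
    obtain ⟨j, hj⟩ := h.2 (b ∘ Sum.inr)
    exact (hb (i, j)).elim hi hj

lemma inter (hA : IsDiophantineIn A) (hB : IsDiophantineIn B) : IsDiophantineIn (A ∩ B) := by
  obtain ⟨τ, ι, _, _, f, rfl⟩ := hA
  obtain ⟨τ', ι', _, _, g, rfl⟩ := hB
  refine ⟨τ ⊕ τ', ι ⊕ ι', inferInstance, inferInstance,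
    Sum.elim (fun i ↦ rename (Sum.map id Sum.inl) (f i))
      (fun i ↦ rename (Sum.map id Sum.inr) (g i)), ?_⟩
  ext a
  simp only [Set.mem_inter_iff, Set.mem_ofPred_eq, Sum.forall, Sum.elim_inl, Sum.elim_inr,
    eval_rename, Sum.elim_comp_map, Function.comp_id]
  constructor
  · rintro ⟨⟨b, hb⟩, c, hc⟩
    exact ⟨Sum.elim b c, by simpa [Sum.elim_comp_inl, Sum.elim_comp_inr] using ⟨hb, hc⟩⟩
  · rintro ⟨b, hb, hc⟩
    exact ⟨⟨_, hb⟩, _, hc⟩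

lemma biUnion {ι : Type*} {s : Set ι} (hs : s.Finite) {A : ι → Set (σ → k)}
    (hA : ∀ i ∈ s, IsDiophantineIn (A i)) : IsDiophantineIn (⋃ i ∈ s, A i) := by
  induction s, hs using Set.Finite.induction_on with
  | empty => simpa using zeroLocus fun _ : Unit ↦ (1 : MvPolynomial σ k)
  | insert _ _ ih =>
    rw [Set.biUnion_insert]
    exact (hA _ (Set.mem_insert _ _)).union (ih fun i hi ↦ hA i (Set.mem_insert_of_mem _ hi))

lemma preimage {ρ : Type*} (hA : IsDiophantineIn A) (φ : σ → MvPolynomial ρ k) :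
    IsDiophantineIn {a : ρ → k | (fun i ↦ eval a (φ i)) ∈ A} := by
  obtain ⟨τ, ι, _, _, f, rfl⟩ := hA
  let g : σ ⊕ τ → MvPolynomial (ρ ⊕ τ) k :=
    Sum.elim (fun s ↦ rename Sum.inl (φ s)) fun t ↦ X (Sum.inr t)
  refine ⟨τ, ι, inferInstance, inferInstance, fun i ↦ bind₁ g (f i), ?_⟩
  ext a
  refine exists_congr fun b ↦ forall_congr' fun i ↦ ?_
  have hg : Sum.elim (fun i ↦ eval a (φ i)) b = fun s ↦ eval (Sum.elim a b) (g s) := by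
    ext (s | s) <;> simp [g, eval_rename, Sum.elim_comp_inl]
  have h : eval (Sum.elim a b) (bind₁ g (f i)) = eval (fun s ↦ eval (Sum.elim a b) (g s)) (f i) :=
    eval₂Hom_bind₁ _ _ _ _
  rw [hg, h]

lemma projection {τ : Type} [Finite τ] {A : Set (σ ⊕ τ → k)} (hA : IsDiophantineIn A) :
    IsDiophantineIn {a : σ → k | ∃ b : τ → k, Sum.elim a b ∈ A} := by
  obtain ⟨τ', ι, _, _, f, rfl⟩ := hA
  refine ⟨τ ⊕ τ', ι, inferInstance, inferInstance,
    fun i ↦ rename (Equiv.sumAssoc σ τ τ') (f i), ?_⟩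
  have key (a : σ → k) (b : τ → k) (c : τ' → k) :
      Sum.elim a (Sum.elim b c) ∘ Equiv.sumAssoc σ τ τ' = Sum.elim (Sum.elim a b) c := by
    ext ((i | i) | i) <;> rfl
  ext a
  simp only [Set.mem_ofPred_eq, eval_rename]
  constructor
  · rintro ⟨b, c, h⟩
    exact ⟨Sum.elim b c, by simpa only [key] using h⟩
  · rintro ⟨b, h⟩
    refine ⟨b ∘ Sum.inl, b ∘ Sum.inr, ?_⟩
    rwa [← key, Sum.elim_comp_inl_inr]

/-- The set of `a` such that `g₁ = … = g_r = 0` has a solution in the variables `τ`. -/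
lemma exists_zeroLocus {τ ι : Type} [Finite τ] [Finite ι] (f : ι → MvPolynomial (σ ⊕ τ) k) :
    IsDiophantineIn {a : σ → k | ∃ b : τ → k, ∀ i, eval (Sum.elim a b) (f i) = 0} :=
  ⟨τ, ι, inferInstance, inferInstance, f, rfl⟩

lemma ne_zero (i : σ) : IsDiophantineIn {a : σ → k | a i ≠ 0} := by
  convert exists_zeroLocus (τ := Unit) (ι := Unit)
    (fun _ ↦ X (Sum.inl i) * X (Sum.inr ()) - 1 : Unit → MvPolynomial (σ ⊕ Unit) k) using 1
  ext a
  simp only [Set.mem_ofPred_eq, map_sub, map_mul, map_one, eval_X, Sum.elim_inl, Sum.elim_inr,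
    forall_const, sub_eq_zero]
  exact ⟨fun h ↦ ⟨fun _ ↦ (a i)⁻¹, mul_inv_cancel₀ h⟩, fun ⟨b, h⟩ ↦ left_ne_zero_of_mul_eq_one h⟩

lemma isSquare_mul (c : k) (i : σ) : IsDiophantineIn {a : σ → k | IsSquare (c * a i)} := by
  convert exists_zeroLocus (τ := Unit) (ι := Unit)
    (fun _ ↦ C c * X (Sum.inl i) - X (Sum.inr ()) * X (Sum.inr ()) :
      Unit → MvPolynomial (σ ⊕ Unit) k) using 1
  ext a
  simp only [Set.mem_ofPred_eq, map_sub, map_mul, eval_C, eval_X, Sum.elim_inl, Sum.elim_inr,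
    forall_const, sub_eq_zero]
  exact ⟨fun ⟨r, h⟩ ↦ ⟨fun _ ↦ r, h⟩, fun ⟨b, h⟩ ↦ ⟨b (), h⟩⟩

/-- The set of `t` such that `⟨1, -b t⟩` represents an element of the coset of `d` modulo
the subgroup `biquadraticNormSubgroup a b`. -/
lemma exists_norm_eq_mul_mem (a b d : k) (i : σ) :
    IsDiophantineIn {t : σ → k | ∃ x y : k, ∃ u ∈ biquadraticNormSubgroup a b,
      x ^ 2 - b * t i * y ^ 2 = d * u} := by
  let z (j : Fin 9) : MvPolynomial (σ ⊕ Fin 9) k := X (Sum.inr j)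
  let v := (z 2 ^ 2 - C a * z 3 ^ 2) * (z 4 ^ 2 - C b * z 5 ^ 2) *
    (z 6 ^ 2 - C (a * b) * z 7 ^ 2)
  convert exists_zeroLocus ![z 0 ^ 2 - C b * X (Sum.inl i) * z 1 ^ 2 - C d * v, v * z 8 - 1] using 1
  ext t
  simp only [Set.mem_ofPred_eq, Fin.forall_fin_two, Matrix.cons_val_zero, Matrix.cons_val_one,
    map_sub, map_mul, map_pow, map_one, eval_C, eval_X, Sum.elim_inl, Sum.elim_inr, z, v,
    sub_eq_zero]
  constructor
  · rintro ⟨x, y, u, hu, h⟩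
    obtain ⟨w, hw, u₃, hu₃, rfl⟩ := Subgroup.mem_sup.1 hu
    obtain ⟨u₁, hu₁, u₂, hu₂, rfl⟩ := Subgroup.mem_sup.1 hw
    obtain ⟨x₁, y₁, h₁⟩ := mem_normFormSubgroup.1 hu₁
    obtain ⟨x₂, y₂, h₂⟩ := mem_normFormSubgroup.1 hu₂
    obtain ⟨x₃, y₃, h₃⟩ := mem_normFormSubgroup.1 hu₃
    refine ⟨![x, y, x₁, y₁, x₂, y₂, x₃, y₃, ((u₁ * u₂ * u₃)⁻¹ : kˣ)], ?_, ?_⟩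
    · simpa [h₁, h₂, h₃] using h
    · simpa [h₁, h₂, h₃] using (u₁ * u₂ * u₃).mul_inv
  · rintro ⟨c, h, hc⟩
    have h0 := left_ne_zero_of_mul_eq_one hc
    have h₃ := right_ne_zero_of_mul h0
    have h₂ := right_ne_zero_of_mul (left_ne_zero_of_mul h0)
    have h₁ := left_ne_zero_of_mul (left_ne_zero_of_mul h0)
    refine ⟨c 0, c 1, Units.mk0 _ h₁ * Units.mk0 _ h₂ * Units.mk0 _ h₃,
      Subgroup.mul_mem_sup (Subgroup.mul_mem_sup ?_ ?_) ?_, h⟩ <;>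
    exact mem_normFormSubgroup.2 ⟨_, _, rfl⟩

end IsDiophantineIn

lemma NumberField.isDiophantineIn_not_isSquare (k : Type*) [Field k] [NumberField k] :
    IsDiophantineIn {t : Fin 1 → k | t 0 ≠ 0 ∧ ¬ IsSquare (t 0)} := by
  obtain ⟨p, q, hpq, hp, hq, hmul⟩ := exists_linkedPrimes k
  set H := biquadraticNormSubgroup ((p : ℤ) : k) ((q : ℤ) : k) with hH
  have : H.FiniteIndex := biquadraticNormSubgroup_finiteIndex hp hq hmul
  have : Finite (kˣ ⧸ H) := Subgroup.finite_quotient_of_finiteIndex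
  have hD : (Set.range (Quotient.out : kˣ ⧸ H → kˣ) \ H).Finite := (Set.finite_range _).sdiff
  convert (IsDiophantineIn.ne_zero 0).inter
    ((IsDiophantineIn.biUnion (Set.toFinite {(p : k), (q : k), (p * q : k)})
      fun c _ ↦ IsDiophantineIn.isSquare_mul c (0 : Fin 1)).union
    (IsDiophantineIn.biUnion hD fun d _ ↦
      IsDiophantineIn.exists_norm_eq_mul_mem ((p : ℤ) : k) ((q : ℤ) : k) (d : k) 0)) using 1
  ext t
  push_cast at hp hq hmul
  simp only [Set.mem_ofPred_eq, Set.mem_inter_iff, Set.mem_union, Set.mem_iUnion, exists_prop,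
    Set.mem_insert_iff, Set.mem_singleton_iff, exists_eq_or_imp, exists_eq_left]
  refine and_congr_right fun ht ↦ ⟨fun h ↦ ?_, ?_⟩
  · by_contra! hcon
    obtain ⟨⟨h2, h3, h4⟩, hc⟩ := hcon
    obtain ⟨x, y, u, hu, huH⟩ := exists_sq_sub_notMem hpq (by simpa using hp) (by simpa using hq)
      (by simpa using hmul) h h2 h3 h4
    have hmem : ((u : kˣ ⧸ H).out)⁻¹ * u ∈ H := by
      rw [← QuotientGroup.eq, QuotientGroup.out_eq']
    refine hc (u : kˣ ⧸ H).out ⟨⟨_, rfl⟩, fun h' ↦ huH ?_⟩ x y _ hmem ?_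
    · simpa only [mul_inv_cancel_left] using H.mul_mem h' hmem
    · rw [← Units.val_mul, mul_inv_cancel_left, hu]
      simp
  · rintro h ⟨s, hs⟩
    have hs0 : s ≠ 0 := by rintro rfl; exact ht (by simpa using hs)
    have key {c : k} (hc : IsSquare (c * t 0)) : IsSquare c := by
      have := hc.div (⟨s, hs⟩ : IsSquare (t 0))
      rwa [mul_div_cancel_right₀ _ ht] at this
    obtain (h | h | h) | ⟨d, ⟨-, hd⟩, x, y, u, hu, h⟩ := h
    · exact hp (key h)
    · exact hq (key h)
    · exact hmul (key h)
    · refine hd ((H.mul_mem_cancel_right hu).1 ?_)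
      refine hH ▸ Subgroup.mem_sup_left (Subgroup.mem_sup_right (mem_normFormSubgroup.2
        ⟨x, s * y, ?_⟩))
      rw [Units.val_mul, ← h, hs]
      ring

/-- A nonzero square `s²` is a `2^(n+1)`-th power if and only if `s` or `-s` is a `2^n`-th
power. -/
lemma exists_pow_two_pow_succ_eq_sq {k : Type*} [Field k] (n : ℕ) (s : k) :
    (∃ r : k, r ≠ 0 ∧ r ^ 2 ^ (n + 1) = s ^ 2) ↔
      (∃ r : k, r ≠ 0 ∧ r ^ 2 ^ n = s) ∨ ∃ r : k, r ≠ 0 ∧ r ^ 2 ^ n = -s := by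
  simp only [pow_succ (2 : ℕ), pow_mul, sq_eq_sq_iff_eq_or_eq_neg, and_or_left, exists_or]

lemma NumberField.isDiophantineIn_not_two_pow_powers (k : Type*) [Field k] [NumberField k]
    (n : ℕ) :
    IsDiophantineIn {t : Fin 1 → k | t 0 ≠ 0 ∧ ¬ ∃ s : k, s ≠ 0 ∧ s ^ 2 ^ n = t 0} := by
  induction n with
  | zero =>
    convert IsDiophantineIn.zeroLocus fun _ : Unit ↦ (1 : MvPolynomial (Fin 1) k) using 1
    ext t
    simp
  | succ n ih =>
    let s : MvPolynomial (Fin 1 ⊕ Unit) k := MvPolynomial.X (Sum.inr ())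
    convert (isDiophantineIn_not_isSquare k).union
      (((ih.preimage fun _ ↦ s).inter (ih.preimage fun _ ↦ -s)).inter
        (IsDiophantineIn.zeroLocus fun _ : Unit ↦
          MvPolynomial.X (Sum.inl 0) - s ^ 2)).projection using 1
    ext t
    simp only [Set.mem_ofPred_eq, Set.mem_union, Set.mem_inter_iff, map_neg, map_sub, map_pow,
      MvPolynomial.eval_X, Sum.elim_inl, Sum.elim_inr, forall_const, sub_eq_zero, s, neg_ne_zero]
    constructor
    · rintro ⟨ht, h⟩
      by_cases hs : IsSquare (t 0)
      · obtain ⟨s, hs⟩ := hs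
        rw [← sq] at hs
        rw [hs, exists_pow_two_pow_succ_eq_sq, not_or] at h
        have hs0 : s ≠ 0 := by rintro rfl; exact ht (by simpa using hs)
        exact Or.inr ⟨fun _ ↦ s, ⟨⟨hs0, h.1⟩, hs0, h.2⟩, hs⟩
      · exact Or.inl ⟨ht, hs⟩
    · rintro (⟨ht, hs⟩ | ⟨b, ⟨⟨hs0, h1⟩, -, h2⟩, hs⟩)
      · refine ⟨ht, fun ⟨r, _, hr⟩ ↦ hs ⟨r ^ 2 ^ n, ?_⟩⟩
        rw [← hr, pow_succ 2, pow_mul, sq]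
      · rw [hs, exists_pow_two_pow_succ_eq_sq, not_or]
        exact ⟨pow_ne_zero 2 hs0, h1, h2⟩

/-- For any number field `k` and any `n ∈ ℤ_{≥0}`, the set `k^× − k^{×2^n}` of nonzero
elements that are not `2^n`-th powers is diophantine over `k`. -/
theorem non_two_pow_powers_isDiophantine (k : Type*) [Field k] [NumberField k] (n : ℕ) :
    IsDiophantineSet k {t : k | t ≠ 0 ∧ ¬ ∃ s : k, s ≠ 0 ∧ s ^ (2 ^ n) = t} :=
  (NumberField.isDiophantineIn_not_two_pow_powers k n).isDiophantine
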